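/- arXiv:1511.01937 — 2 statements merged into one kernel-verified Lean document; each statement's English description precedes it below -/
import Mathlib

section
/- Let f : D → {0,1} be a partial function with D ⊆ {0,1}^n, and let φ be a certifying function for f. Then the cheat sheet version f_CS(φ) (with c = ⌈10·log₂ D(f)⌉ copies) satisfies deg(f_CS(φ)) = Õ(deg(φ)) and adeg(f_CS(φ)) = Õ(adeg(φ)). In particular, these bounds do not depend on the degree or approximate degree of f itself. -/
open scoped BigOperators ENNReal

namespace QC

/-! ### Inputs and partial functions -/

/-- An input assigns to each index `i` a symbol from the alphabet `Fin (α i)`. -/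
abbrev Input (ι : Type) (α : ι → ℕ) := ∀ i : ι, Fin (α i)

/-- A (possibly partial) Boolean-valued query function; `none` means the input
is outside the promise/domain. -/
abbrev PartialFn (ι : Type) (α : ι → ℕ) := Input ι α → Option Bool

/-- A total function has every input in its domain. -/
def TotalFn {ι : Type} {α : ι → ℕ} (f : PartialFn ι α) : Prop := ∀ x, f x ≠ none

/-- Classical truth value of a proposition, as a `Bool`. -/
noncomputable def ofProp (P : Prop) : Bool := @decide P (Classical.propDecidable P)

/-! ### Decision trees and classical query complexity -/

/-- Decision trees over index set `ι` with alphabets `α` and leaf labels `L`. -/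
inductive DTree (ι : Type) (α : ι → ℕ) (L : Type) : Type
  | leaf : L → DTree ι α L
  | node : (i : ι) → (Fin (α i) → DTree ι α L) → DTree ι α L

namespace DTree

variable {ι : Type} {α : ι → ℕ} {L : Type}

/-- Evaluate a decision tree on an input. -/
def eval : DTree ι α L → Input ι α → L
  | leaf b, _ => b
  | node i child, x => eval (child (x i)) x

/-- The number of queries the tree makes on a given input. -/
def cost : DTree ι α L → Input ι α → ℕ
  | leaf _, _ => 0
  | node i child, x => cost (child (x i)) x + 1

/-- The depth (worst-case number of queries) of a decision tree. -/
def depth : DTree ι α L → ℕ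
  | leaf _ => 0
  | node _ child => (Finset.univ.sup fun a => depth (child a)) + 1

end DTree

variable {ι : Type} {α : ι → ℕ}

/-- Deterministic query complexity `D(f)`. -/
noncomputable def Dq (f : PartialFn ι α) : ℕ :=
  sInf {d | ∃ T : DTree ι α (Option Bool), T.depth ≤ d ∧
    ∀ x b, f x = some b → T.eval x = some b}

/-- Bounded-error randomized query complexity `R(f)` (worst-case queries,
success probability at least 2/3 on every domain input). -/
noncomputable def Rq (f : PartialFn ι α) : ℕ :=
  sInf {d | ∃ μ : PMF (DTree ι α (Option Bool)),
    (∀ T ∈ μ.support, T.depth ≤ d) ∧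
    ∀ x b, f x = some b → 2/3 ≤ μ.toOuterMeasure {T | T.eval x = some b}}

/-- Zero-error randomized query complexity `R₀(f)` (worst-case queries): the
algorithm never errs, and outputs `none` ("don't know") with probability at most 1/2. -/
noncomputable def R0q (f : PartialFn ι α) : ℕ :=
  sInf {d | ∃ μ : PMF (DTree ι α (Option Bool)),
    (∀ T ∈ μ.support, T.depth ≤ d) ∧
    (∀ T ∈ μ.support, ∀ x b, f x = some b → T.eval x = some b ∨ T.eval x = none) ∧
    ∀ x b, f x = some b → μ.toOuterMeasure {T | T.eval x = none} ≤ 1/2}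

/-- Zero-error randomized query complexity, measured by the worst-case *expected*
number of queries over domain inputs (value in `ℝ≥0∞`). -/
noncomputable def R0expq (f : PartialFn ι α) : ℝ≥0∞ :=
  sInf {c | ∃ μ : PMF (DTree ι α (Option Bool)),
    (∀ T ∈ μ.support, ∀ x b, f x = some b → T.eval x = some b ∨ T.eval x = none) ∧
    (∀ x b, f x = some b → μ.toOuterMeasure {T | T.eval x = none} ≤ 1/2) ∧
    (∀ x b, f x = some b → ∑' T, μ T * (T.cost x : ℝ≥0∞) ≤ c)}

/-- One-sided-error randomized query complexity `R₁(f)`: accept every 1-input with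
probability at least 2/3, and never accept a 0-input. -/
noncomputable def R1q (f : PartialFn ι α) : ℕ :=
  sInf {d | ∃ μ : PMF (DTree ι α (Option Bool)),
    (∀ T ∈ μ.support, T.depth ≤ d) ∧
    (∀ x, f x = some true → 2/3 ≤ μ.toOuterMeasure {T | T.eval x = some true}) ∧
    (∀ x, f x = some false → ∀ T ∈ μ.support, T.eval x ≠ some true)}

/-! ### Quantum query complexity -/

/-- The index set of the state space of a quantum query algorithm:
a query register `Σ i, Fin (α i)` together with a workspace register `Fin W`. -/
abbrev QIdx (ι : Type) (α : ι → ℕ) (W : ℕ) := (Σ i : ι, Fin (α i)) × Fin W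

variable [Fintype ι] [DecidableEq ι]

/-- The standard query oracle for input `x`: the permutation matrix sending the basis
vector `|i,a⟩|w⟩` to `|i, a + x i⟩|w⟩` (addition modulo `α i`). -/
noncomputable def oracleMatrix (W : ℕ) (x : Input ι α) :
    Matrix (QIdx ι α W) (QIdx ι α W) ℂ :=
  Matrix.of fun j j' =>
    if j.2 = j'.2 ∧ j.1 = ⟨j'.1.1, j'.1.2 + x j'.1.1⟩ then 1 else 0

/-- The product `U_T · O · U_{T-1} · O ⋯ O · U_0` of unitaries interleaved with oracle
calls, defining a `T`-query quantum algorithm. -/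
noncomputable def qProd {τ : Type} [Fintype τ] (U : ℕ → Matrix τ τ ℂ) (Ox : Matrix τ τ ℂ) :
    ℕ → Matrix τ τ ℂ
  | 0 => U 0
  | t + 1 => U (t + 1) * Ox * qProd U Ox t

/-- A quantum query algorithm: a number `T` of queries, a workspace size `W`,
unitaries `U 0, …, U T`, a unit initial state, and a measurement assigning to each
basis state an output in `Option Bool` (`none` = "don't know"). -/
structure QAlg (ι : Type) [Fintype ι] [DecidableEq ι] (α : ι → ℕ) where
  T : ℕ
  W : ℕ
  U : ℕ → Matrix (QIdx ι α W) (QIdx ι α W) ℂ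
  unitary : ∀ t, U t ∈ Matrix.unitaryGroup (QIdx ι α W) ℂ
  init : QIdx ι α W → ℂ
  init_norm : ∑ j, ‖init j‖ ^ 2 = 1
  out : QIdx ι α W → Option Bool

/-- The final state of a quantum algorithm on input `x`. -/
noncomputable def QAlg.finalState (A : QAlg ι α) (x : Input ι α) : QIdx ι α A.W → ℂ :=
  (qProd A.U (oracleMatrix A.W x) A.T).mulVec A.init

/-- The probability that the algorithm outputs `v` on input `x`. -/
noncomputable def QAlg.outProb (A : QAlg ι α) (x : Input ι α) (v : Option Bool) : ℝ :=
  ∑ j, if A.out j = v then ‖A.finalState x j‖ ^ 2 else 0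

/-- Bounded-error quantum query complexity `Q(f)`. -/
noncomputable def Qq (f : PartialFn ι α) : ℕ :=
  sInf {d | ∃ A : QAlg ι α, A.T ≤ d ∧
    ∀ x b, f x = some b → (2 : ℝ)/3 ≤ A.outProb x (some b)}

/-- Exact quantum query complexity `Q_E(f)`. -/
noncomputable def QEq (f : PartialFn ι α) : ℕ :=
  sInf {d | ∃ A : QAlg ι α, A.T ≤ d ∧
    ∀ x b, f x = some b → A.outProb x (some b) = 1}

/-- One-sided-error quantum query complexity `Q₁(f)`. -/
noncomputable def Q1q (f : PartialFn ι α) : ℕ :=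
  sInf {d | ∃ A : QAlg ι α, A.T ≤ d ∧
    (∀ x, f x = some true → (2 : ℝ)/3 ≤ A.outProb x (some true)) ∧
    (∀ x, f x = some false → A.outProb x (some true) = 0)}

/-- Zero-error quantum query complexity `Q₀(f)`: never wrong, outputs `none`
with probability at most 1/2. -/
noncomputable def Q0q (f : PartialFn ι α) : ℕ :=
  sInf {d | ∃ A : QAlg ι α, A.T ≤ d ∧
    ∀ x b, f x = some b → A.outProb x (some !b) = 0 ∧ A.outProb x none ≤ 1/2}

/-! ### Certificate complexity -/

/-- A partial assignment `ρ` is consistent with an input `x`. -/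
def Consistent (ρ : ∀ i : ι, Option (Fin (α i))) (x : Input ι α) : Prop :=
  ∀ i v, ρ i = some v → x i = v

/-- The number of fixed positions of a partial assignment. -/
noncomputable def certSize (ρ : ∀ i : ι, Option (Fin (α i))) : ℕ :=
  Nat.card {i // (ρ i).isSome}

/-- The certificate complexity of `f` at input `x`: the least size of a partial
assignment consistent with `x` forcing the value `f x` on all domain inputs. -/
noncomputable def CxAt (f : PartialFn ι α) (x : Input ι α) : ℕ :=
  sInf {s | ∃ ρ, Consistent ρ x ∧ (∀ y, Consistent ρ y → f y = none ∨ f y = f x) ∧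
    certSize ρ ≤ s}

/-- Certificate complexity `C(f)`. -/
noncomputable def Cq (f : PartialFn ι α) : ℕ :=
  sSup {s | ∃ x, f x ≠ none ∧ s = CxAt f x}

/-- One-certificate complexity `C¹(f)`. -/
noncomputable def C1q (f : PartialFn ι α) : ℕ :=
  sSup {s | ∃ x, f x = some true ∧ s = CxAt f x}

/-! ### Polynomial degree -/

/-- Exact polynomial degree `deg(f)`: least degree of a real polynomial agreeing
with `f` (as a 0/1 function of the numerical values of the input symbols) on its domain. -/
noncomputable def degq (f : PartialFn ι α) : ℕ :=
  sInf {d | ∃ p : MvPolynomial ι ℝ, p.totalDegree ≤ d ∧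
    ∀ x b, f x = some b →
      MvPolynomial.eval (fun i => ((x i : ℕ) : ℝ)) p = if b then 1 else 0}

/-- Approximate polynomial degree `adeg(f)`: least degree of a real polynomial
approximating `f` pointwise to error 1/3 on its domain. -/
noncomputable def adegq (f : PartialFn ι α) : ℕ :=
  sInf {d | ∃ p : MvPolynomial ι ℝ, p.totalDegree ≤ d ∧
    ∀ x b, f x = some b →
      |MvPolynomial.eval (fun i => ((x i : ℕ) : ℝ)) p - if b then 1 else 0| ≤ 1/3}

end QC
/-! ### Certifying functions and cheat sheets -/

namespace QC

variable {ι : Type} {α : ι → ℕ}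

/-- `φ` is a certifying function for the partial function `f`: it accepts `(x, y)`
only when `x` is in the domain of `f` and the first bit of `y` equals `f x`; every
domain input has some accepted certificate `y`; and the all-zeros `y` is never accepted. -/
def IsCertifying {k : ℕ} (hk : 0 < k) (f : PartialFn ι α)
    (φ : Input ι α → (Fin k → Fin 2) → Bool) : Prop :=
  (∀ x y, f x = none → φ x y = false) ∧
  (∀ x y b, f x = some b → y ⟨0, hk⟩ ≠ (if b then 1 else 0) → φ x y = false) ∧
  (∀ x b, f x = some b → ∃ y, φ x y = true) ∧
  (∀ x, φ x (fun _ => 0) = false)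

/-- The index set of the input to a certifying function, viewed as a query function:
the original input together with `k` certificate bits. -/
abbrev CertIdx (ι : Type) (k : ℕ) := ι ⊕ Fin k

/-- Alphabets for `CertIdx`. -/
def certAlphabet (α : ι → ℕ) (k : ℕ) : CertIdx ι k → ℕ := Sum.elim α fun _ => 2

/-- A certifying function viewed as a total query function on input ⊕ certificate bits. -/
def certFn {k : ℕ} (φ : Input ι α → (Fin k → Fin 2) → Bool) :
    PartialFn (CertIdx ι k) (certAlphabet α k) :=
  fun z => some (φ (fun i => z (Sum.inl i)) (fun q => z (Sum.inr q)))

/-- The index set of the input to the cheat sheet version of a function: `c` copies of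
the original input, followed by `2^c` cells each holding `c` certificate strings of `k` bits. -/
abbrev CSIdx (ι : Type) (c k : ℕ) := (Fin c × ι) ⊕ (Fin (2 ^ c) × Fin c × Fin k)

/-- Alphabets for `CSIdx`. -/
def csAlphabet (α : ι → ℕ) (c k : ℕ) : CSIdx ι c k → ℕ :=
  Sum.elim (fun p => α p.2) fun _ => 2

/-- The `i`-th copy of the original input inside a cheat sheet input. -/
def csX {c k : ℕ} (z : Input (CSIdx ι c k) (csAlphabet α c k)) (i : Fin c) : Input ι α :=
  fun p => z (Sum.inl (i, p))

/-- The `i`-th certificate string in the `ℓ`-th cheat sheet cell. -/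
def csY {c k : ℕ} (z : Input (CSIdx ι c k) (csAlphabet α c k)) (ℓ : Fin (2 ^ c))
    (i : Fin c) : Fin k → Fin 2 :=
  fun q => z (Sum.inr (ℓ, i, q))

/-- The number in `[2^c]` whose binary representation is the bit string `b`. -/
def binToFin (c : ℕ) (b : Fin c → Bool) : Fin (2 ^ c) :=
  ⟨(∑ i, if b i then 2 ^ (i : ℕ) else 0) % 2 ^ c, Nat.mod_lt _ (by positivity)⟩

/-- The defining condition of the cheat sheet function: all `c` copies lie in the
domain of `f`, and the cell addressed by their `f`-values holds certificates
accepted by `φ` for each copy. -/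
def CSCond {c k : ℕ} (f : PartialFn ι α) (φ : Input ι α → (Fin k → Fin 2) → Bool)
    (z : Input (CSIdx ι c k) (csAlphabet α c k)) : Prop :=
  ∃ bvec : Fin c → Bool, (∀ i, f (csX z i) = some (bvec i)) ∧
    ∀ i, φ (csX z i) (csY z (binToFin c bvec) i) = true

/-- The cheat sheet version of `f` with respect to the certifying function `φ`,
with `c` copies of `f`. It is a total function. -/
noncomputable def cheatSheet (c : ℕ) {k : ℕ} (f : PartialFn ι α)
    (φ : Input ι α → (Fin k → Fin 2) → Bool) :
    PartialFn (CSIdx ι c k) (csAlphabet α c k) :=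
  fun z => some (ofProp (CSCond f φ z))

/-! ### OR / AND compositions -/

/-- The `OR` function on `m` bits (alphabet `Fin 2`). -/
def orFn (m : ℕ) (z : Fin m → Fin 2) : Fin 2 := if ∃ j, z j = 1 then 1 else 0

/-- The `AND` function on `m` bits (alphabet `Fin 2`). -/
def andFn (m : ℕ) (z : Fin m → Fin 2) : Fin 2 := if ∀ j, z j = 1 then 1 else 0

/-- The composition `f ∘ OR_m`. -/
def composeOr {n : ℕ} (f : PartialFn (Fin n) fun _ => 2) (m : ℕ) :
    PartialFn (Fin n × Fin m) (fun _ => 2) :=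
  fun z => f fun i => orFn m fun j => z (i, j)

/-- The composition `f ∘ AND_m ∘ OR_m`. -/
def composeAndOr {n : ℕ} (f : PartialFn (Fin n) fun _ => 2) (m : ℕ) :
    PartialFn (Fin n × Fin m × Fin m) (fun _ => 2) :=
  fun z => f fun i => andFn m fun j => orFn m fun l => z (i, j, l)

/-! ### k-SUM, Block k-sum, BKK and its recursive composition -/

/-- The `k`-SUM function on `n` numbers from `[q]`: is there a set of `k` of the
input numbers summing to `0` modulo `q`? -/
noncomputable def kSUMfn (n q k : ℕ) : PartialFn (Fin n) (fun _ => q) :=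
  fun x => some (ofProp (∃ S : Finset (Fin n), S.card = k ∧
    (∑ i ∈ S, (x i : ℕ)) % q = 0))

/-- Number of ones in a block of bits. -/
def onesCount {B : ℕ} (z : Fin B → Fin 2) : ℕ := (Finset.univ.filter fun j => z j = 1).card

/-- The number encoded in binary by a block of bits. -/
def blockVal {B : ℕ} (z : Fin B → Fin 2) : ℕ := ∑ j, if z j = 1 then 2 ^ (j : ℕ) else 0

/-- A block is balanced if it has an equal number of 0s and 1s. -/
def isBalanced {B : ℕ} (z : Fin B → Fin 2) : Prop := 2 * onesCount z = B

/-- Block `k`-sum on `nb` blocks of `B` bits each: value 1 iff there are `k` balanced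
blocks whose encoded numbers sum to 0 (mod `2^B`) and every other block has at least
as many 1s as 0s. -/
noncomputable def blockKSumBool (nb B k : ℕ) (z : Fin nb × Fin B → Fin 2) : Bool :=
  ofProp (∃ S : Finset (Fin nb), S.card = k ∧
    (∀ i ∈ S, isBalanced fun j => z (i, j)) ∧
    (∑ i ∈ S, blockVal fun j => z (i, j)) % 2 ^ B = 0 ∧
    ∀ i ∉ S, B ≤ 2 * onesCount fun j => z (i, j))

/-- The Boolean version of `k`-SUM on `m` numbers of `w` bits each (mod `2^w`). -/
noncomputable def kSumBool (m w k : ℕ) (z : Fin m × Fin w → Fin 2) : Bool :=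
  ofProp (∃ S : Finset (Fin m), S.card = k ∧
    (∑ i ∈ S, blockVal fun j => z (i, j)) % 2 ^ w = 0)

/-- Block size of the outer Block `k`-sum in `BKK` on (roughly) `n` outer bits. -/
def bkkB (n k : ℕ) : ℕ := 10 * k * Nat.log 2 n
/-- Number of blocks of the outer Block `k`-sum in `BKK`. -/
def bkkNB (n k : ℕ) : ℕ := n / bkkB n k
/-- Bits per number of the inner Boolean `k`-SUM in `BKK`. -/
def bkkW (n k : ℕ) : ℕ := k * Nat.log 2 n
/-- Number of numbers of the inner Boolean `k`-SUM in `BKK`. -/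
def bkkM (n k : ℕ) : ℕ := n / bkkW n k

/-- The index set of the inputs of `BKK_{n²,k}` (one inner `k`-SUM input bit for
each outer Block `k`-sum input bit; roughly `n²` bits in total). -/
abbrev BKKIdx (n k : ℕ) := (Fin (bkkNB n k) × Fin (bkkB n k)) × (Fin (bkkM n k) × Fin (bkkW n k))

/-- `BKK_{n²,k}`: Block `k`-sum composed with the Boolean version of `k`-SUM. -/
noncomputable def bkkBool (n k : ℕ) (z : BKKIdx n k → Fin 2) : Bool :=
  blockKSumBool (bkkNB n k) (bkkB n k) k fun ob =>
    if kSumBool (bkkM n k) (bkkW n k) k (fun p => z (ob, p)) then 1 else 0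

/-- `BKK_{n²,k}` as a total query function. -/
noncomputable def BKKfn (n k : ℕ) : PartialFn (BKKIdx n k) (fun _ => 2) :=
  fun z => some (bkkBool n k z)

/-- The `d`-fold self-composition of a total Boolean function `g`: a depth-`d` tree
each of whose internal nodes is a copy of `g`; input bits are indexed by root-to-leaf
paths `Fin d → I`. -/
noncomputable def iterFn {I : Type} (g : (I → Fin 2) → Bool) :
    (d : ℕ) → ((Fin d → I) → Fin 2) → Bool
  | 0, z => decide (z (fun i => i.elim0) = 1)
  | d + 1, z => g fun a => if iterFn g d (fun v => z (Fin.cons a v)) then 1 else 0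

/-- The recursion depth used for `RecBKK`: `d = (4/25)·log n / log log n`. -/
def recD (n : ℕ) : ℕ := 4 * Nat.log 2 n / (25 * Nat.log 2 (Nat.log 2 n))

/-- The index set of the inputs of `RecBKK`. -/
abbrev RecIdx (n : ℕ) := Fin (recD n) → BKKIdx n (Nat.log 2 n)

/-- `RecBKK`: the `recD n`-fold self-composition of `BKK` with `k = log n`. -/
noncomputable def RecBKKfn (n : ℕ) : PartialFn (RecIdx n) (fun _ => 2) :=
  fun z => some (iterFn (bkkBool n (Nat.log 2 n)) (recD n) z)

/-- The nominal input size `N = n^{2d}` of `RecBKK`. -/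
def recN (n : ℕ) : ℕ := n ^ (2 * recD n)

end QC

namespace QC

/-! ### Growth of univariate polynomials between integer points -/

theorem two_mul_sq_mul_prod_abs_sq_sub_sq (a t : ℕ) :
    2 * ((a + 1 : ℕ) : ℝ) ^ 2 *
      ∏ i ∈ (Finset.Icc 1 (a + 1 + t)).erase (a + 1), |((a + 1 : ℕ) : ℝ) ^ 2 - (i : ℝ) ^ 2| =
      (t.factorial : ℝ) * ((2 * (a + 1) + t).factorial : ℝ) := by
  induction t with
  | zero =>
    have hset : (Finset.Icc 1 (a + 1 + 0)).erase (a + 1) = (Finset.range a).image (· + 1) := by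
      ext i
      simp only [Finset.mem_erase, Finset.mem_Icc, Finset.mem_image, Finset.mem_range]
      constructor
      · intro h
        exact ⟨i - 1, by omega, by omega⟩
      · rintro ⟨x, hx, rfl⟩
        omega
    have hprod : ∏ i ∈ (Finset.Icc 1 (a + 1 + 0)).erase (a + 1),
        |((a + 1 : ℕ) : ℝ) ^ 2 - (i : ℝ) ^ 2| =
        ((a.factorial * (a + 2).ascFactorial a : ℕ) : ℝ) := by
      rw [hset, Finset.prod_image (by intro x _ y _ h; simpa using h),
        ← Nat.descFactorial_self, Nat.descFactorial_eq_prod_range, Nat.ascFactorial_eq_prod_range,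
        ← Finset.prod_mul_distrib, Nat.cast_prod]
      refine Finset.prod_congr rfl fun i hi => ?_
      have hi : i < a := Finset.mem_range.mp hi
      obtain ⟨r, rfl⟩ := Nat.exists_eq_add_of_lt hi
      have h : i + r + 1 - i = r + 1 := by omega
      rw [h]
      push_cast
      rw [abs_of_nonneg (by
        nlinarith [(Nat.cast_nonneg i : (0 : ℝ) ≤ i), (Nat.cast_nonneg r : (0 : ℝ) ≤ r)])]
      ring
    rw [hprod]
    have h1 := Nat.factorial_mul_ascFactorial (a + 1) a
    have h2 : (2 * (a + 1) + 0).factorial = (2 * a + 2) * (a + 1 + a).factorial := by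
      rw [show 2 * (a + 1) + 0 = (a + 1 + a) + 1 by ring, Nat.factorial_succ]
      congr 1
      ring
    rw [h2, ← h1, Nat.factorial_succ a]
    push_cast
    simp
    ring
  | succ t ih =>
    have hset : (Finset.Icc 1 (a + 1 + (t + 1))).erase (a + 1) =
        insert (a + 1 + (t + 1)) ((Finset.Icc 1 (a + 1 + t)).erase (a + 1)) := by
      ext i
      simp only [Finset.mem_erase, Finset.mem_Icc, Finset.mem_insert]
      omega
    rw [hset, Finset.prod_insert (by simp), mul_left_comm, ih,
      show 2 * (a + 1) + (t + 1) = (2 * (a + 1) + t) + 1 by ring, Nat.factorial_succ t,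
      Nat.factorial_succ (2 * (a + 1) + t)]
    push_cast
    rw [abs_sub_comm, abs_of_nonneg (by
      nlinarith [(Nat.cast_nonneg a : (0 : ℝ) ≤ a), (Nat.cast_nonneg t : (0 : ℝ) ≤ t)])]
    ring

theorem prod_sq_div_abs_sq_sub_sq_le_two {m j : ℕ} (hj : 1 ≤ j) (hjm : j ≤ m) :
    ∏ i ∈ (Finset.Icc 1 m).erase j, ((i : ℝ) ^ 2 / |(j : ℝ) ^ 2 - (i : ℝ) ^ 2|) ≤ 2 := by
  obtain ⟨a, rfl⟩ := Nat.exists_eq_add_of_le' hj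
  obtain ⟨t, rfl⟩ := Nat.exists_eq_add_of_le hjm
  have hden := two_mul_sq_mul_prod_abs_sq_sub_sq a t
  have hnum : ((a + 1 : ℕ) : ℝ) ^ 2 * ∏ i ∈ (Finset.Icc 1 (a + 1 + t)).erase (a + 1), (i : ℝ) ^ 2 =
      ((a + 1 + t).factorial : ℝ) ^ 2 := by
    have hfact : ∀ r : ℕ, ∏ i ∈ Finset.Icc 1 r, i = r.factorial := fun r => by
      induction r with
      | zero => rfl
      | succ r ih => rw [Finset.prod_Icc_succ_top (by omega), ih, Nat.factorial_succ, mul_comm]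
    rw [Finset.mul_prod_erase _ (fun i : ℕ => (i : ℝ) ^ 2) (by simp), Finset.prod_pow,
      ← Nat.cast_prod, hfact]
  have hfac : ((a + 1 + t).factorial : ℝ) ^ 2 ≤
      (t.factorial : ℝ) * ((2 * (a + 1) + t).factorial : ℝ) := by
    have h1 := Nat.choose_le_centralBinom t (a + 1 + t)
    have h2 := Nat.choose_mul_factorial_mul_factorial (n := 2 * (a + 1 + t)) (k := t) (by omega)
    have h3 := Nat.choose_mul_factorial_mul_factorial
      (n := 2 * (a + 1 + t)) (k := a + 1 + t) (by omega)
    rw [show 2 * (a + 1 + t) - t = 2 * (a + 1) + t by omega, ← h3,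
      show 2 * (a + 1 + t) - (a + 1 + t) = a + 1 + t by omega, ← Nat.centralBinom_eq_two_mul_choose,
      mul_assoc, mul_assoc] at h2
    have hpos := Nat.centralBinom_pos (a + 1 + t)
    have : (a + 1 + t).factorial * (a + 1 + t).factorial ≤
        t.factorial * (2 * (a + 1) + t).factorial := by
      refine Nat.le_of_mul_le_mul_left ?_ hpos
      rw [← h2]
      exact Nat.mul_le_mul_right _ h1
    rw [pow_two]
    exact_mod_cast this
  rw [Finset.prod_div_distrib]
  have hpos : (0 : ℝ) < ∏ i ∈ (Finset.Icc 1 (a + 1 + t)).erase (a + 1),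
      |((a + 1 : ℕ) : ℝ) ^ 2 - (i : ℝ) ^ 2| := by
    have h : (0 : ℝ) < (t.factorial : ℝ) * ((2 * (a + 1) + t).factorial : ℝ) := by positivity
    rw [← hden] at h
    exact pos_of_mul_pos_right h (by positivity)
  rw [div_le_iff₀ hpos]
  have hj2 : (0 : ℝ) < ((a + 1 : ℕ) : ℝ) ^ 2 := by positivity
  refine le_of_mul_le_mul_left ?_ hj2
  calc _ = _ := hnum
    _ ≤ _ := hfac
    _ = _ := by rw [← hden]; ring

theorem sum_inv_sq_le_two (m : ℕ) : ∑ j ∈ Finset.Icc 1 m, ((j : ℝ) ^ 2)⁻¹ ≤ 2 := by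
  suffices h : ∑ j ∈ Finset.Icc 1 (m + 1), ((j : ℝ) ^ 2)⁻¹ ≤ 2 - ((m : ℝ) + 1)⁻¹ by
    rw [Finset.sum_Icc_succ_top (by omega)] at h
    have h1 : (0 : ℝ) ≤ ((m : ℝ) + 1)⁻¹ := by positivity
    have h2 : (0 : ℝ) ≤ (((m + 1 : ℕ) : ℝ) ^ 2)⁻¹ := by positivity
    linarith
  induction m with
  | zero => norm_num
  | succ m ih =>
    rw [Finset.sum_Icc_succ_top (by omega)]
    have h : (((m + 1 + 1 : ℕ) : ℝ) ^ 2)⁻¹ ≤ ((m : ℝ) + 1)⁻¹ - ((m + 1 : ℕ) + 1 : ℝ)⁻¹ := by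
      push_cast
      rw [inv_sub_inv (by positivity) (by positivity), inv_eq_one_div,
        div_le_div_iff₀ (by positivity) (by positivity)]
      nlinarith [(Nat.cast_nonneg m : (0 : ℝ) ≤ m)]
    linarith

theorem abs_eval_one_basis_le {m j : ℕ} (hj : 1 ≤ j) (hjm : j ≤ m) :
    |(Lagrange.basis (Finset.range (m + 1)) (fun i : ℕ => 20 * (i : ℝ) ^ 2) j).eval 1| ≤
      1 / 10 * ((j : ℝ) ^ 2)⁻¹ := by
  have hset : (Finset.range (m + 1)).erase j = insert 0 ((Finset.Icc 1 m).erase j) := by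
    ext i
    simp only [Finset.mem_erase, Finset.mem_Icc, Finset.mem_insert, Finset.mem_range]
    omega
  have hle : ∏ i ∈ (Finset.Icc 1 m).erase j,
      |(20 * (j : ℝ) ^ 2 - 20 * (i : ℝ) ^ 2)⁻¹ * (1 - 20 * (i : ℝ) ^ 2)| ≤ 2 := by
    refine (Finset.prod_le_prod (fun _ _ => abs_nonneg _) fun i hi => ?_).trans
      (prod_sq_div_abs_sq_sub_sq_le_two hj hjm)
    have hi1 : (1 : ℝ) ≤ i := by
      have := (Finset.mem_Icc.mp (Finset.mem_of_mem_erase hi)).1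
      exact_mod_cast this
    rw [← mul_sub, abs_mul, abs_inv, abs_mul, abs_of_pos (by norm_num : (0 : ℝ) < 20),
      abs_sub_comm 1, abs_of_nonneg (by nlinarith : (0 : ℝ) ≤ 20 * (i : ℝ) ^ 2 - 1), mul_inv,
      div_eq_mul_inv, mul_comm, ← mul_assoc]
    refine mul_le_mul_of_nonneg_right ?_ (by positivity)
    linarith
  rw [Lagrange.basis, Polynomial.eval_prod, Finset.abs_prod, hset, Finset.prod_insert (by simp)]
  simp only [Lagrange.basisDivisor, Polynomial.eval_mul, Polynomial.eval_C, Polynomial.eval_sub,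
    Polynomial.eval_X]
  have h0 : |(20 * (j : ℝ) ^ 2 - 20 * ((0 : ℕ) : ℝ) ^ 2)⁻¹ * (1 - 20 * ((0 : ℕ) : ℝ) ^ 2)| =
      1 / 20 * ((j : ℝ) ^ 2)⁻¹ := by
    rw [abs_of_nonneg (by simp)]
    simp
    ring
  rw [h0]
  have : (0 : ℝ) ≤ ((j : ℝ) ^ 2)⁻¹ := by positivity
  nlinarith

theorem abs_eval_one_basis_zero_le (m : ℕ) :
    |(Lagrange.basis (Finset.range (m + 1)) (fun i : ℕ => 20 * (i : ℝ) ^ 2) 0).eval 1| ≤ 1 := by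
  rw [Lagrange.basis, Polynomial.eval_prod, Finset.abs_prod]
  refine Finset.prod_le_one (fun _ _ => abs_nonneg _) fun i hi => ?_
  have hi1 : (1 : ℝ) ≤ i := by
    have := Nat.one_le_iff_ne_zero.mpr (Finset.ne_of_mem_erase hi)
    exact_mod_cast this
  simp only [Lagrange.basisDivisor, Polynomial.eval_mul, Polynomial.eval_C, Polynomial.eval_sub,
    Polynomial.eval_X]
  rw [abs_mul, abs_inv, ← div_eq_inv_mul, abs_sub_comm 1, abs_sub_comm (20 * ((0 : ℕ) : ℝ) ^ 2)]
  have h1 : (1 : ℝ) ≤ (i : ℝ) ^ 2 := by nlinarith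
  have h2 : 20 * (i : ℝ) ^ 2 - 20 * ((0 : ℕ) : ℝ) ^ 2 = 20 * (i : ℝ) ^ 2 := by simp
  rw [h2, abs_of_nonneg (by linarith), abs_of_nonneg (by linarith), div_le_one (by linarith)]
  linarith

/-- A polynomial of degree `d` that is bounded by `4/3` on the integers of `[0, 20 d²]` and is at
most `1/3` in absolute value at `0` stays below `2/3` at `1`. -/
theorem eval_one_lt_of_abs_eval_le {q : Polynomial ℝ} {d : ℕ} (hq : q.natDegree ≤ d)
    (h0 : |q.eval 0| ≤ 1 / 3) (hb : ∀ i : ℕ, i ≤ 20 * d ^ 2 → |q.eval (i : ℝ)| ≤ 4 / 3) :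
    q.eval 1 < 2 / 3 := by
  set v : ℕ → ℝ := fun i => 20 * (i : ℝ) ^ 2 with hv
  have hinj : Set.InjOn v (Finset.range (d + 1)) := by
    intro x _ y _ hxy
    simp only [hv, mul_eq_mul_left_iff] at hxy
    have h : (x : ℝ) ^ 2 = (y : ℝ) ^ 2 := by simpa using hxy
    exact_mod_cast (pow_left_inj₀ (Nat.cast_nonneg x) (Nat.cast_nonneg y) two_ne_zero).mp h
  have hdeg : q.degree < (Finset.range (d + 1)).card := by
    rw [Finset.card_range]
    exact lt_of_le_of_lt (Polynomial.degree_le_of_natDegree_le hq) (by exact_mod_cast Nat.lt_succ_self d)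
  have heq := congrArg (Polynomial.eval 1) (Lagrange.eq_interpolate hinj hdeg)
  rw [Lagrange.interpolate_apply, Polynomial.eval_finsetSum] at heq
  simp only [Polynomial.eval_mul, Polynomial.eval_C] at heq
  have hset : Finset.range (d + 1) = insert 0 (Finset.Icc 1 d) := by
    ext i
    simp only [Finset.mem_Icc, Finset.mem_insert, Finset.mem_range]
    omega
  have hsum : ∑ j ∈ Finset.Icc 1 d, q.eval (v j) *
      (Lagrange.basis (Finset.range (d + 1)) v j).eval 1 ≤ 4 / 15 := by
    calc _ ≤ ∑ j ∈ Finset.Icc 1 d, 4 / 3 * (1 / 10 * ((j : ℝ) ^ 2)⁻¹) := by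
          refine Finset.sum_le_sum fun j hj => ?_
          obtain ⟨hj1, hjd⟩ := Finset.mem_Icc.mp hj
          refine (le_abs_self _).trans ?_
          rw [abs_mul]
          refine mul_le_mul ?_ (abs_eval_one_basis_le hj1 hjd) (abs_nonneg _) (by norm_num)
          have := hb (20 * j ^ 2) (by gcongr)
          simpa [hv] using this
      _ = 2 / 15 * ∑ j ∈ Finset.Icc 1 d, ((j : ℝ) ^ 2)⁻¹ := by
          rw [Finset.mul_sum]
          exact Finset.sum_congr rfl fun _ _ => by ring
      _ ≤ 2 / 15 * 2 := by gcongr; exact sum_inv_sq_le_two d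
      _ = 4 / 15 := by norm_num
  have hzero : q.eval (v 0) * (Lagrange.basis (Finset.range (d + 1)) v 0).eval 1 ≤ 1 / 3 := by
    refine (le_abs_self _).trans ?_
    rw [abs_mul]
    have hv0 : v 0 = 0 := by simp [hv]
    rw [hv0]
    have := mul_le_mul h0 (abs_eval_one_basis_zero_le d) (abs_nonneg _) (by norm_num)
    simpa using this
  rw [heq]
  conv_lhs => rw [hset, Finset.sum_insert (by simp), ← hset]
  linarith

/-! ### Low-degree set functions and symmetrization -/

section LowDegree

variable {β : Type} [DecidableEq β]

/-- The set functions that are linear combinations of the monomials `S ↦ [T ⊆ S]`, `|T| ≤ d`. -/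
def lowDegree (β : Type) [DecidableEq β] (d : ℕ) : Submodule ℝ (Finset β → ℝ) :=
  Submodule.span ℝ {g | ∃ T : Finset β, T.card ≤ d ∧ g = fun S => if T ⊆ S then 1 else 0}

theorem lowDegree_mono {d e : ℕ} (h : d ≤ e) : lowDegree β d ≤ lowDegree β e :=
  Submodule.span_mono fun _ ⟨T, hT, hg⟩ => ⟨T, hT.trans h, hg⟩

theorem mul_mem_lowDegree {d e : ℕ} {g h : Finset β → ℝ} (hg : g ∈ lowDegree β d)
    (hh : h ∈ lowDegree β e) : g * h ∈ lowDegree β (d + e) := by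
  have hmul : lowDegree β d * lowDegree β e ≤ lowDegree β (d + e) := by
    rw [lowDegree, lowDegree, Submodule.span_mul_span]
    refine Submodule.span_mono ?_
    rintro _ ⟨_, ⟨T, hT, rfl⟩, _, ⟨U, hU, rfl⟩, rfl⟩
    refine ⟨T ∪ U, (Finset.card_union_le T U).trans (Nat.add_le_add hT hU), ?_⟩
    funext S
    by_cases h1 : T ⊆ S <;> by_cases h2 : U ⊆ S <;> simp [Finset.union_subset_iff, h1, h2]
  exact hmul (Submodule.mul_mem_mul hg hh)

theorem const_mem_lowDegree (c : ℝ) (d : ℕ) : (fun _ => c) ∈ lowDegree β d := by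
  have h : (fun _ => (1 : ℝ)) ∈ lowDegree β d :=
    Submodule.subset_span ⟨∅, by simp, by simp⟩
  simpa [Pi.smul_def] using Submodule.smul_mem _ c h

theorem pow_mem_lowDegree {g : Finset β → ℝ} (hg : g ∈ lowDegree β 1) (r : ℕ) :
    g ^ r ∈ lowDegree β r := by
  induction r with
  | zero => exact const_mem_lowDegree 1 0
  | succ r ih =>
    rw [pow_succ]
    exact mul_mem_lowDegree ih hg

theorem prod_pow_mem_lowDegree {I : Type} (s : Finset I) (m : I → ℕ) {x : I → Finset β → ℝ}
    (hx : ∀ i, x i ∈ lowDegree β 1) : ∏ i ∈ s, x i ^ m i ∈ lowDegree β (∑ i ∈ s, m i) := by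
  classical
  induction s using Finset.induction_on with
  | empty => exact const_mem_lowDegree 1 0
  | insert i s hi ih =>
    rw [Finset.prod_insert hi, Finset.sum_insert hi]
    exact mul_mem_lowDegree (pow_mem_lowDegree (hx i) _) ih

theorem eval_mem_lowDegree {I : Type} (p : MvPolynomial I ℝ) {x : I → Finset β → ℝ}
    (hx : ∀ i, x i ∈ lowDegree β 1) :
    (fun S => MvPolynomial.eval (fun i => x i S) p) ∈ lowDegree β p.totalDegree := by
  have h : (fun S => MvPolynomial.eval (fun i => x i S) p) =
      ∑ m ∈ p.support, p.coeff m • ∏ i ∈ m.support, x i ^ m i := by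
    funext S
    simp [MvPolynomial.eval_eq, Finset.sum_apply, Finset.prod_apply]
  rw [h]
  refine Submodule.sum_mem _ fun m hm => Submodule.smul_mem _ _ ?_
  exact lowDegree_mono (MvPolynomial.le_totalDegree hm) (prod_pow_mem_lowDegree _ _ hx)

variable [Fintype β]

theorem card_filter_subset_powersetCard (T : Finset β) (t : ℕ) :
    ((Finset.powersetCard t (Finset.univ : Finset β)).filter (T ⊆ ·)).card *
        (Fintype.card β).choose T.card =
      (Fintype.card β).choose t * t.choose T.card := by
  by_cases ht : T.card ≤ t
  · by_cases htb : t ≤ Fintype.card β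
    · have hcard : ((Finset.powersetCard t (Finset.univ : Finset β)).filter (T ⊆ ·)).card =
          (Fintype.card β - T.card).choose (t - T.card) := by
        rw [← Finset.card_compl, ← Finset.card_powersetCard]
        refine Finset.card_bij' (fun S _ => S \ T) (fun S _ => S ∪ T) ?_ ?_ ?_ ?_
        · intro S hS
          simp only [Finset.mem_filter, Finset.mem_powersetCard_univ] at hS
          rw [Finset.mem_powersetCard]
          refine ⟨fun i hi => by simp at hi ⊢; exact hi.2, ?_⟩
          rw [Finset.card_sdiff_of_subset hS.2, hS.1]
        · intro S hS
          rw [Finset.mem_powersetCard] at hS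
          simp only [Finset.mem_filter, Finset.mem_powersetCard_univ]
          refine ⟨?_, Finset.subset_union_right⟩
          rw [Finset.card_union_of_disjoint, hS.2]
          · omega
          · exact Finset.disjoint_left.mpr fun i hi => Finset.mem_compl.mp (hS.1 hi)
        · intro S hS
          exact Finset.sdiff_union_of_subset (Finset.mem_filter.mp hS).2
        · intro S hS
          rw [Finset.mem_powersetCard] at hS
          refine Finset.union_sdiff_cancel_right ?_
          exact Finset.disjoint_left.mpr fun i hi => Finset.mem_compl.mp (hS.1 hi)
      rw [hcard, Nat.choose_mul ht, mul_comm]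
    · rw [Nat.choose_eq_zero_of_lt (n := Fintype.card β) (k := t) (by omega)]
      rw [Finset.powersetCard_eq_empty.mpr (by rw [Finset.card_univ]; omega)]
      simp
  · rw [Nat.choose_eq_zero_of_lt (n := t) (by omega), mul_zero, Finset.filter_false_of_mem]
    · simp
    · intro S hS hTS
      have := Finset.card_le_card hTS
      rw [(Finset.mem_powersetCard.mp hS).2] at this
      omega

/-- Averaging a low-degree set function over the sets of each size gives a low-degree univariate
polynomial in the size. -/
theorem exists_polynomial_eval_eq_average {d : ℕ} {g : Finset β → ℝ} (hg : g ∈ lowDegree β d) :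
    ∃ q : Polynomial ℝ, q.natDegree ≤ d ∧ ∀ t : ℕ,
      ∑ S ∈ Finset.powersetCard t (Finset.univ : Finset β), g S =
        (Fintype.card β).choose t * q.eval (t : ℝ) := by
  induction hg using Submodule.span_induction with
  | mem g hg =>
    obtain ⟨T, hT, rfl⟩ := hg
    refine ⟨Polynomial.C ((T.card.factorial * (Fintype.card β).choose T.card : ℝ)⁻¹) *
      descPochhammer ℝ T.card, ?_, fun t => ?_⟩
    · refine (Polynomial.natDegree_C_mul_le _ _).trans ?_
      rwa [descPochhammer_natDegree]
    · have h := card_filter_subset_powersetCard T t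
      have hpos : (0 : ℝ) < (Fintype.card β).choose T.card := by
        exact_mod_cast Nat.choose_pos (Finset.card_le_univ T)
      have hfac : (0 : ℝ) < T.card.factorial := by positivity
      rw [← Finset.sum_filter, Finset.sum_const, nsmul_one, Polynomial.eval_mul, Polynomial.eval_C,
        descPochhammer_eval_eq_descFactorial, Nat.descFactorial_eq_factorial_mul_choose]
      have h' : (((Finset.powersetCard t (Finset.univ : Finset β)).filter (T ⊆ ·)).card : ℝ) *
          (Fintype.card β).choose T.card = (Fintype.card β).choose t * t.choose T.card := by
        exact_mod_cast h
      push_cast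
      field_simp
      linarith
  | zero => exact ⟨0, by simp, by simp⟩
  | add g h _ _ ihg ihh =>
    obtain ⟨q, hq, hq'⟩ := ihg
    obtain ⟨r, hr, hr'⟩ := ihh
    refine ⟨q + r, Polynomial.natDegree_add_le_of_degree_le hq hr, fun t => ?_⟩
    simp only [Pi.add_apply, Finset.sum_add_distrib, hq', hr', Polynomial.eval_add]
    ring
  | smul c g _ ih =>
    obtain ⟨q, hq, hq'⟩ := ih
    refine ⟨Polynomial.C c * q, (Polynomial.natDegree_C_mul_le _ _).trans hq, fun t => ?_⟩
    simp only [Pi.smul_apply, smul_eq_mul, ← Finset.mul_sum, hq', Polynomial.eval_mul,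
      Polynomial.eval_C]
    ring

end LowDegree

/-! ### Block sensitivity and certificates -/

/-- The assignment `z` with the bits in `B` negated. -/
def flipBits {I : Type} [DecidableEq I] (z : I → Bool) (B : Finset I) : I → Bool :=
  fun i => if i ∈ B then !z i else z i

theorem flipBits_biUnion_mem_lowDegree {I : Type} [DecidableEq I] (z : I → Bool)
    {𝓑 : Finset (Finset I)} (hdisj : (𝓑 : Set (Finset I)).PairwiseDisjoint id) (i : I) :
    (fun S : Finset 𝓑 => if flipBits z (S.biUnion Subtype.val) i then (1 : ℝ) else 0) ∈
      lowDegree 𝓑 1 := by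
  by_cases hi : ∃ B ∈ 𝓑, i ∈ B
  · obtain ⟨B, hB, hiB⟩ := hi
    have hmem : ∀ S : Finset 𝓑, i ∈ S.biUnion Subtype.val ↔ {⟨B, hB⟩} ⊆ S := fun S => by
      rw [Finset.singleton_subset_iff, Finset.mem_biUnion]
      constructor
      · rintro ⟨⟨B', hB'⟩, hS, hi'⟩
        have : B' = B := hdisj.elim_finset hB' hB i hi' hiB
        subst this
        exact hS
      · exact fun hS => ⟨_, hS, hiB⟩
    have heq : (fun S : Finset 𝓑 => if flipBits z (S.biUnion Subtype.val) i then (1 : ℝ) else 0) =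
        (fun _ => if z i then (1 : ℝ) else 0) +
          (if z i then (-1 : ℝ) else 1) • fun S => if {⟨B, hB⟩} ⊆ S then (1 : ℝ) else 0 := by
      funext S
      simp only [flipBits, hmem, Pi.add_apply, Pi.smul_apply]
      by_cases h : {⟨B, hB⟩} ⊆ S <;> cases z i <;> simp [h]
    rw [heq]
    exact Submodule.add_mem _ (const_mem_lowDegree _ _)
      (Submodule.smul_mem _ _ (Submodule.subset_span ⟨_, by simp, rfl⟩))
  · have heq : (fun S : Finset 𝓑 => if flipBits z (S.biUnion Subtype.val) i then (1 : ℝ) else 0) =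
        fun _ => if z i then (1 : ℝ) else 0 := by
      funext S
      have : i ∉ S.biUnion Subtype.val := by
        rw [Finset.mem_biUnion]
        rintro ⟨B, _, hiB⟩
        exact hi ⟨B.1, B.2, hiB⟩
      simp [flipBits, this]
    rw [heq]
    exact const_mem_lowDegree _ _

/-- The polynomial `p` approximates the Boolean function `F` pointwise to error `1/3`. -/
def Approximates {I : Type} (p : MvPolynomial I ℝ) (F : (I → Bool) → Bool) : Prop :=
  ∀ z : I → Bool, |MvPolynomial.eval (fun i => if z i then (1 : ℝ) else 0) p -
    if F z then 1 else 0| ≤ 1 / 3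

theorem card_sensitive_blocks_le_of_eq_false {I : Type} [DecidableEq I] {F : (I → Bool) → Bool}
    {p : MvPolynomial I ℝ} {d : ℕ} (hp : p.totalDegree ≤ d) (hF : Approximates p F)
    {z : I → Bool} (hz : F z = false) {𝓑 : Finset (Finset I)}
    (hdisj : (𝓑 : Set (Finset I)).PairwiseDisjoint id)
    (hsens : ∀ B ∈ 𝓑, F (flipBits z B) = true) : 𝓑.card ≤ 20 * d ^ 2 := by
  by_contra! hcard
  set g : Finset 𝓑 → ℝ := fun S => MvPolynomial.eval
    (fun i => if flipBits z (S.biUnion Subtype.val) i then (1 : ℝ) else 0) p with hg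
  have hgmem : g ∈ lowDegree 𝓑 d := lowDegree_mono hp
    (eval_mem_lowDegree p fun i => flipBits_biUnion_mem_lowDegree z hdisj i)
  obtain ⟨q, hqd, hq⟩ := exists_polynomial_eval_eq_average hgmem
  have hgle : ∀ S, |g S| ≤ 4 / 3 := fun S => by
    have h := abs_le.mp (hF (flipBits z (S.biUnion Subtype.val)))
    rw [abs_le]
    simp only [hg]
    split_ifs at h <;> constructor <;> linarith [h.1, h.2]
  rw [Fintype.card_coe] at hq
  have hq0 : |q.eval 0| ≤ 1 / 3 := by
    have h := hq 0
    have h2 := hF z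
    simp only [Finset.powersetCard_zero, Finset.sum_singleton, Nat.choose_zero_right, Nat.cast_one,
      one_mul, Nat.cast_zero] at h
    rw [← h]
    simpa [hg, flipBits, hz] using h2
  have hq1 : 2 / 3 ≤ q.eval 1 := by
    have h := hq 1
    have hpos : (0 : ℝ) < 𝓑.card := by exact_mod_cast (Nat.zero_le _).trans_lt hcard
    rw [Finset.powersetCard_one, Finset.sum_map, Nat.choose_one_right, Nat.cast_one] at h
    have hle : (𝓑.card : ℝ) * (2 / 3) ≤ 𝓑.card * q.eval 1 := by
      rw [← h, ← Fintype.card_coe 𝓑, ← Finset.card_univ, ← nsmul_eq_mul, ← Finset.sum_const]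
      refine Finset.sum_le_sum fun B _ => ?_
      have h2 := hF (flipBits z B.1)
      rw [hsens B.1 B.2, abs_le] at h2
      simp only [hg, Function.Embedding.coeFn_mk, Finset.singleton_biUnion, if_true] at h2 ⊢
      linarith [h2.1]
    exact le_of_mul_le_mul_left hle hpos
  refine absurd (eval_one_lt_of_abs_eval_le hqd hq0 fun t ht => ?_) (not_lt.mpr hq1)
  have hpos : (0 : ℝ) < 𝓑.card.choose t := by
    exact_mod_cast Nat.choose_pos (ht.trans hcard.le)
  refine le_of_mul_le_mul_left ?_ hpos
  calc (𝓑.card.choose t : ℝ) * |q.eval (t : ℝ)| = |𝓑.card.choose t * q.eval (t : ℝ)| := by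
        rw [abs_mul, abs_of_pos hpos]
    _ ≤ ∑ S ∈ Finset.powersetCard t (Finset.univ : Finset 𝓑), |g S| := by
        rw [← hq t]
        exact Finset.abs_sum_le_sum_abs _ _
    _ ≤ ∑ S ∈ Finset.powersetCard t (Finset.univ : Finset 𝓑), (4 / 3 : ℝ) :=
        Finset.sum_le_sum fun S _ => hgle S
    _ = 𝓑.card.choose t * (4 / 3) := by
        rw [Finset.sum_const, Finset.card_powersetCard, Finset.card_univ, Fintype.card_coe,
          nsmul_eq_mul]

/-- Block sensitivity is at most quadratic in the approximate degree. -/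
theorem card_sensitive_blocks_le {I : Type} [DecidableEq I] {F : (I → Bool) → Bool}
    {p : MvPolynomial I ℝ} {d : ℕ} (hp : p.totalDegree ≤ d) (hF : Approximates p F)
    {z : I → Bool} {𝓑 : Finset (Finset I)} (hdisj : (𝓑 : Set (Finset I)).PairwiseDisjoint id)
    (hsens : ∀ B ∈ 𝓑, F (flipBits z B) ≠ F z) : 𝓑.card ≤ 20 * d ^ 2 := by
  cases hz : F z
  · exact card_sensitive_blocks_le_of_eq_false hp hF hz hdisj fun B hB => by
      simpa [hz] using hsens B hB
  · refine card_sensitive_blocks_le_of_eq_false (F := fun w => !F w) (p := 1 - p) (z := z) ?_ ?_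
      (by simp [hz]) hdisj fun B hB => by simpa [hz] using hsens B hB
    · refine (MvPolynomial.totalDegree_sub _ _).trans ?_
      simpa using hp
    · intro w
      have h := hF w
      rw [map_sub, map_one, abs_sub_comm]
      cases hw : F w <;> simpa [hw] using h

theorem exists_minimal_sensitive_block {I : Type} [DecidableEq I] {F : (I → Bool) → Bool}
    {z : I → Bool} {B : Finset I} (hB : F (flipBits z B) ≠ F z) :
    ∃ A ⊆ B, F (flipBits z A) ≠ F z ∧ ∀ A' ⊂ A, F (flipBits z A') = F z := by
  induction B using Finset.strongInduction with
  | H B ih =>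
    by_cases h : ∃ A ⊂ B, F (flipBits z A) ≠ F z
    · obtain ⟨A, hAB, hA⟩ := h
      obtain ⟨A', hA', h1, h2⟩ := ih A hAB hA
      exact ⟨A', hA'.trans hAB.1, h1, h2⟩
    · push Not at h
      exact ⟨B, subset_rfl, hB, h⟩

theorem card_minimal_sensitive_block_le {I : Type} [DecidableEq I] {F : (I → Bool) → Bool}
    {N : ℕ} (hN : ∀ (z : I → Bool) (𝓑 : Finset (Finset I)),
      (𝓑 : Set (Finset I)).PairwiseDisjoint id → (∀ B ∈ 𝓑, F (flipBits z B) ≠ F z) → 𝓑.card ≤ N)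
    {z : I → Bool} {A : Finset I} (hA : F (flipBits z A) ≠ F z)
    (hmin : ∀ A' ⊂ A, F (flipBits z A') = F z) : A.card ≤ N := by
  have h := hN (flipBits z A) (A.image fun i => {i}) ?_ ?_
  · rwa [Finset.card_image_of_injective _ Finset.singleton_injective] at h
  · intro B hB B' hB' hne
    simp only [Finset.coe_image, Set.mem_image] at hB hB'
    obtain ⟨i, _, rfl⟩ := hB
    obtain ⟨j, _, rfl⟩ := hB'
    simpa [Function.onFun] using hne
  · intro B hB
    obtain ⟨i, hi, rfl⟩ := Finset.mem_image.mp hB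
    have : flipBits (flipBits z A) {i} = flipBits z (A.erase i) := by
      funext j
      by_cases hj : j = i
      · subst hj
        simp [flipBits, hi]
      · simp [flipBits, hj]
    rw [this, hmin _ (Finset.erase_ssubset hi)]
    exact hA.symm

/-- Certificate complexity is at most the square of block sensitivity. -/
theorem exists_certificate {I : Type} [Fintype I] [DecidableEq I] {F : (I → Bool) → Bool}
    {N : ℕ} (hN : ∀ (z : I → Bool) (𝓑 : Finset (Finset I)),
      (𝓑 : Set (Finset I)).PairwiseDisjoint id → (∀ B ∈ 𝓑, F (flipBits z B) ≠ F z) → 𝓑.card ≤ N)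
    (z : I → Bool) :
    ∃ A : Finset I, A.card ≤ N * N ∧ ∀ w : I → Bool, (∀ i ∈ A, w i = z i) → F w = F z := by
  classical
  set good : Finset (Finset (Finset I)) := Finset.univ.filter fun 𝓑 =>
    (𝓑 : Set (Finset I)).PairwiseDisjoint id ∧
      ∀ B ∈ 𝓑, F (flipBits z B) ≠ F z ∧ ∀ A' ⊂ B, F (flipBits z A') = F z with hgood
  have hne : good.Nonempty := ⟨∅, by simp [hgood]⟩
  obtain ⟨𝓑, h𝓑, hmax⟩ := good.exists_max_image Finset.card hne
  obtain ⟨hdisj, hsens⟩ := (Finset.mem_filter.mp h𝓑).2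
  refine ⟨𝓑.biUnion id, ?_, fun w hw => ?_⟩
  · refine Finset.card_biUnion_le_card_mul _ _ N (fun B hB => ?_) |>.trans
      (Nat.mul_le_mul_right _ (hN z 𝓑 hdisj fun B hB => (hsens B hB).1))
    exact card_minimal_sensitive_block_le hN (hsens B hB).1 (hsens B hB).2
  · by_contra hFw
    have hflip : flipBits z (Finset.univ.filter fun i => w i ≠ z i) = w := by
      funext i
      by_cases h : w i = z i
      · simp [flipBits, h]
      · simp only [flipBits, Finset.mem_filter, Finset.mem_univ, true_and, ne_eq, h,
          not_false_eq_true, if_true]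
        exact (Bool.eq_not_of_ne h).symm
    rw [← hflip] at hFw
    obtain ⟨A, hAsub, hA, hmin⟩ := exists_minimal_sensitive_block hFw
    have hdisjA : ∀ B ∈ 𝓑, Disjoint A B := fun B hB => Finset.disjoint_left.mpr fun i hiA hiB =>
      (Finset.mem_filter.mp (hAsub hiA)).2 (hw i (Finset.mem_biUnion.mpr ⟨B, hB, hiB⟩))
    have hAne : A ≠ ∅ := by
      rintro rfl
      exact hA (congrArg F (by funext i; simp [flipBits]))
    have hA𝓑 : A ∉ 𝓑 := fun h => hAne (Finset.disjoint_self_iff_empty A |>.mp (hdisjA A h))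
    have hins : insert A 𝓑 ∈ good := by
      refine Finset.mem_filter.mpr ⟨Finset.mem_univ _, ?_, ?_⟩
      · rw [Finset.coe_insert]
        exact hdisj.insert fun B hB _ => hdisjA B hB
      · intro B hB
        rcases Finset.mem_insert.mp hB with rfl | hB
        · exact ⟨hA, hmin⟩
        · exact hsens B hB
    have := hmax _ hins
    rw [Finset.card_insert_of_notMem hA𝓑] at this
    omega

/-! ### Decision trees from certificates -/

section Tree

variable {n : ℕ}

/-- Some decision tree of depth at most `R` computes `f` on the inputs agreeing with `x` on `Q`. -/
def ComputableFrom (f : PartialFn (Fin n) fun _ => 2) (Q : Finset (Fin n))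
    (x : Input (Fin n) fun _ => 2) (R : ℕ) : Prop :=
  ∃ T : DTree (Fin n) (fun _ => 2) (Option Bool), T.depth ≤ R ∧
    ∀ y b, (∀ i ∈ Q, y i = x i) → f y = some b → T.eval y = some b

theorem computableFrom_of_query {f : PartialFn (Fin n) fun _ => 2} {Q : Finset (Fin n)}
    {x : Input (Fin n) fun _ => 2} {R : ℕ} (i : Fin n)
    (h : ∀ y, (∀ j ∈ Q, y j = x j) → ComputableFrom f (insert i Q) y R) :
    ComputableFrom f Q x (R + 1) := by
  have hch : ∀ a : Fin 2, ∃ T : DTree (Fin n) (fun _ => 2) (Option Bool), T.depth ≤ R ∧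
      ∀ y b, y i = a → (∀ j ∈ Q, y j = x j) → f y = some b → T.eval y = some b := fun a => by
    by_cases hy : ∃ y : Input (Fin n) fun _ => 2, y i = a ∧ ∀ j ∈ Q, y j = x j
    · obtain ⟨y, rfl, hyQ⟩ := hy
      obtain ⟨T, hT, hT'⟩ := h y hyQ
      refine ⟨T, hT, fun w b hwi hwQ => hT' w b fun j hj => ?_⟩
      rcases Finset.mem_insert.mp hj with rfl | hj
      · exact hwi
      · rw [hwQ j hj, hyQ j hj]
    · exact ⟨.leaf none, Nat.zero_le _, fun y b hyi hyQ => absurd ⟨y, hyi, hyQ⟩ hy⟩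
  choose T hT hT' using hch
  refine ⟨.node i T, ?_, fun y b hyQ hy => hT' (y i) y b rfl hyQ hy⟩
  exact Nat.succ_le_succ (Finset.sup_le fun a _ => hT a)

theorem computableFrom_of_query_finset {f : PartialFn (Fin n) fun _ => 2} {R : ℕ}
    (A : Finset (Fin n)) {Q : Finset (Fin n)} {x : Input (Fin n) fun _ => 2}
    (h : ∀ y, (∀ j ∈ Q, y j = x j) → ComputableFrom f (A ∪ Q) y R) :
    ComputableFrom f Q x (R + A.card) := by
  induction A using Finset.induction_on generalizing Q x with
  | empty => simpa using h x fun _ _ => rfl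
  | insert i A hi ih =>
    rw [Finset.card_insert_of_notMem hi, ← add_assoc]
    refine computableFrom_of_query i fun y hy => ih fun w hw => ?_
    rw [Finset.union_insert, ← Finset.insert_union]
    refine h w fun j hj => ?_
    rw [hw j (Finset.mem_insert_of_mem hj), hy j hj]

theorem computableFrom_of_certificates {f : PartialFn (Fin n) fun _ => 2} {K : ℕ}
    (A : Input (Fin n) (fun _ => 2) → Finset (Fin n))
    (hK : ∀ x b, f x = some b → (A x).card ≤ K)
    (hA : ∀ x b, f x = some b → ∀ y, (∀ i ∈ A x, y i = x i) → f y = some b)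
    (r : ℕ) {Q : Finset (Fin n)} {x : Input (Fin n) fun _ => 2}
    (hr : ∀ y, (∀ i ∈ Q, y i = x i) → f y = some false → (A y \ Q).card ≤ r) :
    ComputableFrom f Q x (r * K) := by
  -- A consistent 1-input and a consistent 0-input have certificates meeting outside `Q`.
  have hmeet : ∀ (Q : Finset (Fin n)) (y w), (∀ i ∈ Q, y i = w i) → f w = some true → f y = some false →
      ∃ i ∈ A y, i ∈ A w ∧ i ∉ Q := fun Q y w hQ hw hy => by
    by_contra! hcon
    have h1 := hA w true hw (fun i => if i ∈ A y then y i else w i) fun i hi => by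
      by_cases hiy : i ∈ A y
      · simp only [hiy, if_true]
        exact hQ i (hcon i hiy hi)
      · simp [hiy]
    have h2 := hA y false hy (fun i => if i ∈ A y then y i else w i) fun i hi => by simp [hi]
    rw [h1] at h2
    simp at h2
  induction r generalizing Q x with
  | zero =>
    by_cases hw : ∃ w, (∀ i ∈ Q, w i = x i) ∧ f w = some true
    · obtain ⟨w, hwQ, hw⟩ := hw
      refine ⟨.leaf (some true), Nat.zero_le _, fun y b hyQ hy => ?_⟩
      cases b
      · obtain ⟨i, hiy, -, hiQ⟩ := hmeet Q y w (fun i hi => by rw [hyQ i hi, hwQ i hi]) hw hy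
        have hcard := hr y hyQ hy
        rw [Nat.le_zero, Finset.card_eq_zero] at hcard
        exact absurd (Finset.mem_sdiff.mpr ⟨hiy, hiQ⟩) (by simp [hcard])
      · rfl
    · refine ⟨.leaf (some false), Nat.zero_le _, fun y b hyQ hy => ?_⟩
      cases b
      · rfl
      · exact absurd ⟨y, hyQ, hy⟩ hw
  | succ r ih =>
    by_cases hw : ∃ w, (∀ i ∈ Q, w i = x i) ∧ f w = some true
    · obtain ⟨w, hwQ, hw⟩ := hw
      have hcomp : ComputableFrom f Q x (r * K + (A w).card) := by
        refine computableFrom_of_query_finset _ fun y hy => ih fun v hv hfv => ?_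
        · have hvQ : ∀ i ∈ Q, v i = x i := fun i hi => by
            rw [hv i (Finset.mem_union_right _ hi), hy i hi]
          obtain ⟨i, hiv, hiw, hiQ⟩ :=
            hmeet Q v w (fun i hi => by rw [hvQ i hi, hwQ i hi]) hw hfv
          have hlt : (A v \ (A w ∪ Q)).card < (A v \ Q).card := by
            refine Finset.card_lt_card (Finset.ssubset_iff_of_subset
              (Finset.sdiff_subset_sdiff subset_rfl Finset.subset_union_right) |>.mpr
              ⟨i, Finset.mem_sdiff.mpr ⟨hiv, hiQ⟩, fun h => ?_⟩)
            exact (Finset.mem_sdiff.mp h).2 (Finset.mem_union_left _ hiw)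
          have := hr v hvQ hfv
          omega
      obtain ⟨T, hT, hT'⟩ := hcomp
      refine ⟨T, hT.trans ?_, hT'⟩
      rw [Nat.succ_mul]
      exact Nat.add_le_add_left (hK w true hw) _
    · refine ⟨.leaf (some false), Nat.zero_le _, fun y b hyQ hy => ?_⟩
      cases b
      · rfl
      · exact absurd ⟨y, hyQ, hy⟩ hw

theorem Dq_le_of_certificates {f : PartialFn (Fin n) fun _ => 2} {K : ℕ}
    (h : ∀ x b, f x = some b → ∃ A : Finset (Fin n), A.card ≤ K ∧
      ∀ y, (∀ i ∈ A, y i = x i) → f y = some b) : Dq f ≤ K * K := by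
  have h' : ∀ x, ∃ A : Finset (Fin n), ∀ b, f x = some b → A.card ≤ K ∧
      ∀ y, (∀ i ∈ A, y i = x i) → f y = some b := fun x => by
    cases hx : f x with
    | none => exact ⟨∅, by simp⟩
    | some b =>
      obtain ⟨A, hA⟩ := h x b hx
      refine ⟨A, fun b' hb' => ?_⟩
      obtain rfl : b = b' := by simpa using hb'
      exact hA
  choose A hA using h'
  obtain ⟨T, hT, hT'⟩ := computableFrom_of_certificates (Q := ∅) (x := fun _ => 0) A
    (fun x b hx => (hA x b hx).1) (fun x b hx => (hA x b hx).2) K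
    fun y _ hy => by simpa using (hA y false hy).1
  exact Nat.sInf_le ⟨T, hT, fun x b => hT' x b (by simp)⟩

end Tree

/-! ### Existence of optimal polynomials -/

theorem exists_polynomial_eval_eq {ι : Type} [Fintype ι] {α : ι → ℕ} (F : Input ι α → ℝ) :
    ∃ p : MvPolynomial ι ℝ, ∀ x : Input ι α,
      MvPolynomial.eval (fun i => ((x i : ℕ) : ℝ)) p = F x := by
  classical
  refine ⟨∑ w : Input ι α, MvPolynomial.C (F w) * ∏ i, ∏ a ∈ Finset.univ.erase (w i),
    (MvPolynomial.C ((((w i : ℕ) : ℝ) - ((a : ℕ) : ℝ))⁻¹) *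
      (MvPolynomial.X i - MvPolynomial.C ((a : ℕ) : ℝ))), fun x => ?_⟩
  simp only [map_sum, map_mul, map_prod, map_sub, MvPolynomial.eval_C, MvPolynomial.eval_X]
  rw [Finset.sum_eq_single x]
  · rw [Finset.prod_eq_one, mul_one]
    refine fun i _ => Finset.prod_eq_one fun a ha => inv_mul_cancel₀ (sub_ne_zero.mpr fun h => ?_)
    exact Finset.ne_of_mem_erase ha (Fin.ext (by exact_mod_cast h.symm))
  · intro w _ hw
    obtain ⟨i, hi⟩ := Function.ne_iff.mp hw
    rw [Finset.prod_eq_zero (Finset.mem_univ i), mul_zero]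
    exact Finset.prod_eq_zero (Finset.mem_erase.mpr ⟨hi.symm, Finset.mem_univ (x i)⟩) (by simp)
  · simp

theorem exists_polynomial_totalDegree_le_degq {ι : Type} [Fintype ι] [DecidableEq ι] {α : ι → ℕ}
    (f : PartialFn ι α) : ∃ p : MvPolynomial ι ℝ, p.totalDegree ≤ degq f ∧ ∀ x b, f x = some b →
      MvPolynomial.eval (fun i => ((x i : ℕ) : ℝ)) p = if b then 1 else 0 := by
  refine Nat.sInf_mem (s := {d | ∃ p : MvPolynomial ι ℝ, p.totalDegree ≤ d ∧
    ∀ x b, f x = some b → MvPolynomial.eval (fun i => ((x i : ℕ) : ℝ)) p = if b then 1 else 0}) ?_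
  obtain ⟨p, hp⟩ := exists_polynomial_eval_eq fun x => if f x = some true then (1 : ℝ) else 0
  refine ⟨_, p, le_rfl, fun x b hx => ?_⟩
  rw [hp, hx]
  cases b <;> simp

theorem exists_polynomial_totalDegree_le_adegq {ι : Type} [Fintype ι] [DecidableEq ι] {α : ι → ℕ}
    (f : PartialFn ι α) : ∃ p : MvPolynomial ι ℝ, p.totalDegree ≤ adegq f ∧ ∀ x b, f x = some b →
      |MvPolynomial.eval (fun i => ((x i : ℕ) : ℝ)) p - if b then 1 else 0| ≤ 1 / 3 := by
  refine Nat.sInf_mem (s := {d | ∃ p : MvPolynomial ι ℝ, p.totalDegree ≤ d ∧ ∀ x b, f x = some b →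
    |MvPolynomial.eval (fun i => ((x i : ℕ) : ℝ)) p - if b then 1 else 0| ≤ 1 / 3}) ?_
  obtain ⟨p, -, hp⟩ := exists_polynomial_totalDegree_le_degq f
  refine ⟨_, p, le_rfl, fun x b hx => ?_⟩
  rw [hp x b hx, sub_self, abs_zero]
  norm_num

/-! ### Query complexity of a certified function -/

section Certified

variable {n k : ℕ}

/-- The bit `b` as a symbol of the binary alphabet. -/
def bit (b : Bool) : Fin 2 := if b then 1 else 0

theorem bit_injective : Function.Injective bit := by decide

theorem bit_decide (a : Fin 2) : bit (decide (a = 1)) = a := by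
  revert a
  decide

theorem cast_bit (b : Bool) : (((bit b : Fin 2) : ℕ) : ℝ) = if b then 1 else 0 := by
  cases b <;> simp [bit]

/-- A certifying function as a Boolean function of Boolean variables. -/
def boolFn (φ : Input (Fin n) (fun _ => 2) → (Fin k → Fin 2) → Bool) :
    (CertIdx (Fin n) k → Bool) → Bool :=
  fun z => φ (fun i => bit (z (Sum.inl i))) fun q => bit (z (Sum.inr q))

theorem approximates_boolFn {φ : Input (Fin n) (fun _ => 2) → (Fin k → Fin 2) → Bool}
    {p : MvPolynomial (CertIdx (Fin n) k) ℝ}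
    (hp : ∀ z b, certFn φ z = some b →
      |MvPolynomial.eval (fun i => ((z i : ℕ) : ℝ)) p - if b then 1 else 0| ≤ 1 / 3) :
    Approximates p (boolFn φ) := by
  intro z
  let w : Input (CertIdx (Fin n) k) (certAlphabet (fun _ => 2) k) := fun i => match i with
    | Sum.inl j => bit (z (Sum.inl j))
    | Sum.inr q => bit (z (Sum.inr q))
  have hw : (fun i => ((w i : ℕ) : ℝ)) = fun i => if z i then (1 : ℝ) else 0 := by
    funext i
    rcases i with j | q
    · exact cast_bit _
    · exact cast_bit _
  have h := hp w _ rfl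
  rw [hw] at h
  exact h

theorem eq_some_of_isCertifying {hk : 0 < k} {f : PartialFn (Fin n) fun _ => 2}
    {φ : Input (Fin n) (fun _ => 2) → (Fin k → Fin 2) → Bool} (hφ : IsCertifying hk f φ)
    {x : Input (Fin n) fun _ => 2} {y : Fin k → Fin 2} (h : φ x y = true) :
    ∃ b, f x = some b ∧ y ⟨0, hk⟩ = bit b := by
  cases hx : f x with
  | none => simp [hφ.1 x y hx] at h
  | some b =>
    refine ⟨b, rfl, ?_⟩
    by_contra hne
    simp [hφ.2.1 x y b hx hne] at h

theorem Dq_le_of_isCertifying {hk : 0 < k} {f : PartialFn (Fin n) fun _ => 2}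
    {φ : Input (Fin n) (fun _ => 2) → (Fin k → Fin 2) → Bool} (hφ : IsCertifying hk f φ)
    {p : MvPolynomial (CertIdx (Fin n) k) ℝ} {d : ℕ} (hd : p.totalDegree ≤ d)
    (hp : ∀ z b, certFn φ z = some b →
      |MvPolynomial.eval (fun i => ((z i : ℕ) : ℝ)) p - if b then 1 else 0| ≤ 1 / 3) :
    Dq f ≤ (20 * d ^ 2) ^ 4 := by
  have hF := approximates_boolFn hp
  rw [show (20 * d ^ 2) ^ 4 = (20 * d ^ 2 * (20 * d ^ 2)) * (20 * d ^ 2 * (20 * d ^ 2)) by ring]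
  refine Dq_le_of_certificates fun x b hx => ?_
  obtain ⟨y, hy⟩ := hφ.2.2.1 x b hx
  set pt : Input (Fin n) (fun _ => 2) → CertIdx (Fin n) k → Bool := fun x =>
    Sum.elim (fun i => decide (x i = 1)) fun q => decide (y q = 1) with hpt
  have hbool : ∀ x, boolFn φ (pt x) = φ x y := fun x => by
    simp only [boolFn, hpt, Sum.elim_inl, Sum.elim_inr, bit_decide]
  obtain ⟨A, hAcard, hA⟩ := exists_certificate
    (fun z 𝓑 hdisj hsens => card_sensitive_blocks_le hd hF hdisj hsens) (pt x)
  refine ⟨Finset.univ.filter fun i => Sum.inl i ∈ A, ?_, fun w hw => ?_⟩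
  · refine le_trans ?_ hAcard
    rw [← Finset.card_image_of_injective _ (Sum.inl_injective (α := Fin n) (β := Fin k))]
    refine Finset.card_le_card fun i hi => ?_
    obtain ⟨j, hj, rfl⟩ := Finset.mem_image.mp hi
    exact (Finset.mem_filter.mp hj).2
  · have hwy : φ w y = true := by
      rw [← hbool, hA (pt w), hbool, hy]
      rintro (i | q) hi
      · simp only [hpt, Sum.elim_inl, hw i (Finset.mem_filter.mpr ⟨Finset.mem_univ _, hi⟩)]
      · rfl
    obtain ⟨b₁, hb₁, hy₁⟩ := eq_some_of_isCertifying hφ hwy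
    obtain ⟨b₂, hb₂, hy₂⟩ := eq_some_of_isCertifying hφ hy
    rw [hb₁, bit_injective (hy₁.symm.trans hy₂), ← hb₂, hx]

end Certified

/-! ### The cheat sheet polynomial -/

theorem abs_prod_sub_prod_le {γ : Type} (s : Finset γ) {a b : γ → ℝ} {ε : ℝ}
    (ha : ∀ i, 0 ≤ a i ∧ a i ≤ 1) (hb : ∀ i, 0 ≤ b i ∧ b i ≤ 1) (h : ∀ i, |a i - b i| ≤ ε) :
    |∏ i ∈ s, a i - ∏ i ∈ s, b i| ≤ s.card * ε := by
  classical
  induction s using Finset.induction_on with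
  | empty => simp
  | insert i s hi ih =>
    rw [Finset.prod_insert hi, Finset.prod_insert hi, Finset.card_insert_of_notMem hi]
    have hB0 : 0 ≤ ∏ j ∈ s, b j := Finset.prod_nonneg fun j _ => (hb j).1
    have hB1 : ∏ j ∈ s, b j ≤ 1 := Finset.prod_le_one (fun j _ => (hb j).1) fun j _ => (hb j).2
    calc |a i * ∏ j ∈ s, a j - b i * ∏ j ∈ s, b j|
        = |a i * (∏ j ∈ s, a j - ∏ j ∈ s, b j) + (a i - b i) * ∏ j ∈ s, b j| := by ring_nf
      _ ≤ |a i * (∏ j ∈ s, a j - ∏ j ∈ s, b j)| + |(a i - b i) * ∏ j ∈ s, b j| := abs_add_le _ _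
      _ = a i * |∏ j ∈ s, a j - ∏ j ∈ s, b j| + |a i - b i| * ∏ j ∈ s, b j := by
          rw [abs_mul, abs_mul, abs_of_nonneg (ha i).1, abs_of_nonneg hB0]
      _ ≤ 1 * (s.card * ε) + ε * 1 := by
          have hε : 0 ≤ ε := (abs_nonneg _).trans (h i)
          exact add_le_add (mul_le_mul (ha i).2 ih (abs_nonneg _) zero_le_one)
            (mul_le_mul (h i) hB1 hB0 hε)
      _ = ((s.card + 1 : ℕ) : ℝ) * ε := by push_cast; ring

section CheatSheet

variable {n k : ℕ}

/-- The polynomial `p` has values in `[0, 1]` and approximates `φ` to error `ε`. -/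
def ApproximatesWithin (p : MvPolynomial (CertIdx (Fin n) k) ℝ)
    (φ : Input (Fin n) (fun _ => 2) → (Fin k → Fin 2) → Bool) (ε : ℝ) : Prop :=
  ∀ z b, certFn φ z = some b →
    (0 ≤ MvPolynomial.eval (fun i => ((z i : ℕ) : ℝ)) p ∧
      MvPolynomial.eval (fun i => ((z i : ℕ) : ℝ)) p ≤ 1) ∧
    |MvPolynomial.eval (fun i => ((z i : ℕ) : ℝ)) p - if b then 1 else 0| ≤ ε

/-- The variables of the `i`-th input copy and of the `i`-th certificate in cell `ℓ`. -/
def csVar {c : ℕ} (ℓ : Fin (2 ^ c)) (i : Fin c) : CertIdx (Fin n) k → CSIdx (Fin n) c k :=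
  Sum.elim (fun j => Sum.inl (i, j)) fun q => Sum.inr (ℓ, i, q)

/-- The polynomial indicating that the variable `v` equals the bit `b`. -/
noncomputable def literal {σ : Type} (v : σ) (b : Bool) : MvPolynomial σ ℝ :=
  if b then MvPolynomial.X v else 1 - MvPolynomial.X v

/-- The cheat sheet polynomial: the sum over all cells of the products of the substituted
polynomials `p` with the indicators that the certified values address the cell. -/
noncomputable def csPoly (c : ℕ) (hk : 0 < k) (p : MvPolynomial (CertIdx (Fin n) k) ℝ) :
    MvPolynomial (CSIdx (Fin n) c k) ℝ :=
  ∑ ℓ : Fin c → Bool, ∏ i, (MvPolynomial.rename (csVar (binToFin c ℓ) i) p *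
    literal (Sum.inr (binToFin c ℓ, i, ⟨0, hk⟩)) (ℓ i))

theorem totalDegree_literal_le {σ : Type} (v : σ) (b : Bool) : (literal v b).totalDegree ≤ 1 := by
  cases b
  · refine (MvPolynomial.totalDegree_sub _ _).trans ?_
    simp
  · simp [literal]

theorem totalDegree_csPoly_le (c : ℕ) (hk : 0 < k) (p : MvPolynomial (CertIdx (Fin n) k) ℝ) :
    (csPoly c hk p).totalDegree ≤ c * (p.totalDegree + 1) := by
  refine MvPolynomial.totalDegree_finsetSum_le fun ℓ _ => ?_
  refine (MvPolynomial.totalDegree_finsetProd _ _).trans ?_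
  refine (Finset.sum_le_card_nsmul _ _ (p.totalDegree + 1) fun i _ => ?_).trans (by simp)
  exact (MvPolynomial.totalDegree_mul _ _).trans
    (Nat.add_le_add (MvPolynomial.totalDegree_rename_le _ _) (totalDegree_literal_le _ _))

/-- The cell-by-cell description of the cheat sheet condition. -/
theorem sum_prod_indicator_eq {c : ℕ} {hk : 0 < k} {f : PartialFn (Fin n) fun _ => 2}
    {φ : Input (Fin n) (fun _ => 2) → (Fin k → Fin 2) → Bool} (hφ : IsCertifying hk f φ)
    (z : Input (CSIdx (Fin n) c k) (csAlphabet (fun _ => 2) c k)) :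
    ∑ ℓ : Fin c → Bool, ∏ i, (if φ (csX z i) (csY z (binToFin c ℓ) i) = true ∧
      csY z (binToFin c ℓ) i ⟨0, hk⟩ = bit (ℓ i) then (1 : ℝ) else 0) =
      if ofProp (CSCond f φ z) then 1 else 0 := by
  by_cases h : CSCond f φ z
  · obtain ⟨b, hb, hacc⟩ := h
    have hcond : ofProp (CSCond f φ z) = true := by simpa [ofProp] using ⟨b, hb, hacc⟩
    rw [hcond, if_pos rfl, Finset.sum_eq_single b]
    · refine Finset.prod_eq_one fun i _ => if_pos ⟨hacc i, ?_⟩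
      obtain ⟨b', hb', hy⟩ := eq_some_of_isCertifying hφ (hacc i)
      rw [hy, Option.some_injective _ (hb'.symm.trans (hb i))]
    · intro ℓ _ hℓ
      obtain ⟨i, hi⟩ := Function.ne_iff.mp hℓ
      refine Finset.prod_eq_zero (Finset.mem_univ i) (if_neg fun ⟨hacc', hy'⟩ => hi ?_)
      obtain ⟨b', hb', hy⟩ := eq_some_of_isCertifying hφ hacc'
      rw [← Option.some_injective _ (hb'.symm.trans (hb i))]
      exact bit_injective (hy'.symm.trans hy)
    · simp
  · have hcond : ofProp (CSCond f φ z) = false := by simpa [ofProp] using h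
    rw [hcond, if_neg (by simp)]
    refine Finset.sum_eq_zero fun ℓ _ => ?_
    by_contra hne
    rw [← ne_eq, Finset.prod_ne_zero_iff] at hne
    have hall : ∀ i, φ (csX z i) (csY z (binToFin c ℓ) i) = true ∧
        csY z (binToFin c ℓ) i ⟨0, hk⟩ = bit (ℓ i) := fun i => by
      by_contra hi
      exact hne i (Finset.mem_univ i) (if_neg hi)
    refine h ⟨ℓ, fun i => ?_, fun i => (hall i).1⟩
    obtain ⟨b', hb', hy⟩ := eq_some_of_isCertifying hφ (hall i).1
    rw [hb', bit_injective (hy.symm.trans (hall i).2)]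

theorem abs_eval_csPoly_sub_le {c : ℕ} {hk : 0 < k} {f : PartialFn (Fin n) fun _ => 2}
    {φ : Input (Fin n) (fun _ => 2) → (Fin k → Fin 2) → Bool} (hφ : IsCertifying hk f φ)
    {p : MvPolynomial (CertIdx (Fin n) k) ℝ} {ε : ℝ} (hp : ApproximatesWithin p φ ε)
    (z : Input (CSIdx (Fin n) c k) (csAlphabet (fun _ => 2) c k)) :
    |MvPolynomial.eval (fun i => ((z i : ℕ) : ℝ)) (csPoly c hk p) -
      if ofProp (CSCond f φ z) then 1 else 0| ≤ 2 ^ c * (c * ε) := by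
  rw [← sum_prod_indicator_eq hφ z, csPoly, map_sum, ← Finset.sum_sub_distrib]
  refine (Finset.abs_sum_le_sum_abs _ _).trans ?_
  refine (Finset.sum_le_card_nsmul _ _ (c * ε) fun ℓ _ => ?_).trans (by simp)
  rw [map_prod]
  have hlit : ∀ i, MvPolynomial.eval (fun i => ((z i : ℕ) : ℝ))
      (literal (Sum.inr (binToFin c ℓ, i, ⟨0, hk⟩)) (ℓ i)) =
      if csY z (binToFin c ℓ) i ⟨0, hk⟩ = bit (ℓ i) then (1 : ℝ) else 0 := fun i => by
    have hz : ∀ (a : Fin 2) (b : Bool),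
        (if b then ((a : ℕ) : ℝ) else 1 - ((a : ℕ) : ℝ)) = if a = bit b then 1 else 0 := by
      intro a b
      fin_cases a <;> cases b <;> simp [bit]
    rw [← hz]
    cases ℓ i <;> simp [literal, csY]
  have hval : ∀ i,
      (0 ≤ MvPolynomial.eval (fun i => ((z i : ℕ) : ℝ))
          (MvPolynomial.rename (csVar (binToFin c ℓ) i) p) ∧
        MvPolynomial.eval (fun i => ((z i : ℕ) : ℝ))
          (MvPolynomial.rename (csVar (binToFin c ℓ) i) p) ≤ 1) ∧
      |MvPolynomial.eval (fun i => ((z i : ℕ) : ℝ))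
          (MvPolynomial.rename (csVar (binToFin c ℓ) i) p) -
        if φ (csX z i) (csY z (binToFin c ℓ) i) then 1 else 0| ≤ ε := fun i => by
    let w : Input (CertIdx (Fin n) k) (certAlphabet (fun _ => 2) k) := fun v => match v with
      | Sum.inl j => csX z i j
      | Sum.inr q => csY z (binToFin c ℓ) i q
    have hw : (fun v => ((z v : ℕ) : ℝ)) ∘ csVar (binToFin c ℓ) i = fun v => ((w v : ℕ) : ℝ) := by
      funext v
      rcases v with j | q <;> rfl
    rw [MvPolynomial.eval_rename, hw]
    exact hp w _ rfl
  have hcard := abs_prod_sub_prod_le (Finset.univ : Finset (Fin c)) (ε := ε)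
    (a := fun i => MvPolynomial.eval (fun i => ((z i : ℕ) : ℝ))
      (MvPolynomial.rename (csVar (binToFin c ℓ) i) p *
        literal (Sum.inr (binToFin c ℓ, i, ⟨0, hk⟩)) (ℓ i)))
    (b := fun i => if φ (csX z i) (csY z (binToFin c ℓ) i) = true ∧
      csY z (binToFin c ℓ) i ⟨0, hk⟩ = bit (ℓ i) then (1 : ℝ) else 0) ?_ ?_ ?_
  · simpa using hcard
  · intro i
    simp only [map_mul, hlit]
    split_ifs
    · simpa using (hval i).1
    · simp
  · intro i
    split_ifs <;> norm_num
  · intro i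
    simp only [map_mul, hlit]
    by_cases hy : csY z (binToFin c ℓ) i ⟨0, hk⟩ = bit (ℓ i)
    · simpa [hy] using (hval i).2
    · simpa [hy] using (abs_nonneg _).trans (hval i).2

/-! ### Error reduction -/

/-- One step of error reduction: `p ↦ 3 p² - 2 p³`. -/
noncomputable def amplify {σ : Type} (p : MvPolynomial σ ℝ) : MvPolynomial σ ℝ :=
  MvPolynomial.C 3 * p ^ 2 - MvPolynomial.C 2 * p ^ 3

theorem totalDegree_amplify_le {σ : Type} (p : MvPolynomial σ ℝ) :
    (amplify p).totalDegree ≤ 3 * p.totalDegree := by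
  have h2 : (MvPolynomial.C 3 * p ^ 2).totalDegree ≤ 2 * p.totalDegree :=
    (MvPolynomial.totalDegree_mul _ _).trans
      (by simpa using MvPolynomial.totalDegree_pow p 2)
  have h3 : (MvPolynomial.C 2 * p ^ 3).totalDegree ≤ 3 * p.totalDegree :=
    (MvPolynomial.totalDegree_mul _ _).trans
      (by simpa using MvPolynomial.totalDegree_pow p 3)
  exact (MvPolynomial.totalDegree_sub _ _).trans (max_le (h2.trans (by omega)) h3)

variable {φ : Input (Fin n) (fun _ => 2) → (Fin k → Fin 2) → Bool}

theorem ApproximatesWithin.amplify {p : MvPolynomial (CertIdx (Fin n) k) ℝ} {δ ε : ℝ}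
    (hp : ApproximatesWithin p φ δ) (hδ : δ ≤ 1) (hε : δ ^ 2 * (3 - 2 * δ) ≤ ε) :
    ApproximatesWithin (amplify p) φ ε := by
  intro z b hz
  obtain ⟨⟨h0, h1⟩, habs⟩ := hp z b hz
  have heval : MvPolynomial.eval (fun i => ((z i : ℕ) : ℝ)) (QC.amplify p) =
      3 * MvPolynomial.eval (fun i => ((z i : ℕ) : ℝ)) p ^ 2 -
        2 * MvPolynomial.eval (fun i => ((z i : ℕ) : ℝ)) p ^ 3 := by
    simp [QC.amplify]
  rw [heval]
  set t := MvPolynomial.eval (fun i => ((z i : ℕ) : ℝ)) p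
  have hmono : ∀ s : ℝ, 0 ≤ s → s ≤ δ → 3 * s ^ 2 - 2 * s ^ 3 ≤ ε := fun s hs hsδ => by
    refine le_trans ?_ hε
    have h : δ ^ 2 * (3 - 2 * δ) - (3 * s ^ 2 - 2 * s ^ 3) = (δ - s) *
        (2 * (δ * (1 - δ)) + 2 * (s * (1 - s)) + δ * (1 - s) + s * (1 - δ)) := by
      ring
    have h' : 0 ≤ (δ - s) *
        (2 * (δ * (1 - δ)) + 2 * (s * (1 - s)) + δ * (1 - s) + s * (1 - δ)) := by
      have : 0 ≤ δ := hs.trans hsδ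
      have : 0 ≤ 1 - δ := by linarith
      have : 0 ≤ 1 - s := by linarith
      have : 0 ≤ δ - s := by linarith
      positivity
    linarith
  have hlow : 0 ≤ 3 * t ^ 2 - 2 * t ^ 3 := by nlinarith [sq_nonneg t]
  have hupp : 0 ≤ 1 - (3 * t ^ 2 - 2 * t ^ 3) := by
    have : 1 - (3 * t ^ 2 - 2 * t ^ 3) = (1 - t) ^ 2 * (1 + 2 * t) := by ring
    rw [this]
    positivity
  refine ⟨⟨hlow, by linarith⟩, ?_⟩
  cases b
  · simp only [Bool.false_eq_true, if_false, sub_zero] at habs ⊢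
    rw [abs_of_nonneg h0] at habs
    rw [abs_of_nonneg hlow]
    exact hmono t h0 habs
  · simp only [if_true] at habs ⊢
    rw [abs_sub_comm, abs_of_nonneg (by linarith)] at habs
    rw [abs_sub_comm, abs_of_nonneg hupp]
    have := hmono (1 - t) (by linarith) habs
    linarith [this, show 3 * (1 - t) ^ 2 - 2 * (1 - t) ^ 3 = 1 - (3 * t ^ 2 - 2 * t ^ 3) by ring]

theorem exists_approximatesWithin {p : MvPolynomial (CertIdx (Fin n) k) ℝ} {d : ℕ}
    (hd : p.totalDegree ≤ d) (hp : ∀ z b, certFn φ z = some b →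
      |MvPolynomial.eval (fun i => ((z i : ℕ) : ℝ)) p - if b then 1 else 0| ≤ 1 / 3) (m : ℕ) :
    ∃ q : MvPolynomial (CertIdx (Fin n) k) ℝ, q.totalDegree ≤ 81 * 3 ^ m * d ∧
      ApproximatesWithin q φ (1 / 3 * (1 / 2) ^ 2 ^ m) := by
  induction m with
  | zero =>
    set q₀ : MvPolynomial (CertIdx (Fin n) k) ℝ :=
      MvPolynomial.C (3 / 5) * (p + MvPolynomial.C (1 / 3)) with hq₀
    have hdeg : q₀.totalDegree ≤ d := by
      refine (MvPolynomial.totalDegree_mul _ _).trans ?_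
      rw [MvPolynomial.totalDegree_C, zero_add]
      refine (MvPolynomial.totalDegree_add _ _).trans (max_le hd ?_)
      rw [MvPolynomial.totalDegree_C]
      exact Nat.zero_le d
    have h₀ : ApproximatesWithin q₀ φ (2 / 5) := by
      intro z b hz
      have h := abs_le.mp (hp z b hz)
      rw [hq₀, map_mul, map_add, MvPolynomial.eval_C, MvPolynomial.eval_C, abs_le]
      cases b <;> simp only [Bool.false_eq_true, if_false, if_true] at h ⊢ <;>
        refine ⟨⟨?_, ?_⟩, ?_, ?_⟩ <;> linarith [h.1, h.2]
    have h₁ := h₀.amplify (ε := 44 / 125) (by norm_num) (by norm_num)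
    have h₂ := h₁.amplify (ε := 57 / 200) (by norm_num) (by norm_num)
    have h₃ := h₂.amplify (ε := 1 / 5) (by norm_num) (by norm_num)
    have h₄ := h₃.amplify (ε := 1 / 3 * (1 / 2) ^ 2 ^ 0) (by norm_num) (by norm_num)
    refine ⟨_, ?_, h₄⟩
    have e₁ := totalDegree_amplify_le q₀
    have e₂ := totalDegree_amplify_le (QC.amplify q₀)
    have e₃ := totalDegree_amplify_le (QC.amplify (QC.amplify q₀))
    have e₄ := totalDegree_amplify_le (QC.amplify (QC.amplify (QC.amplify q₀)))
    omega
  | succ m ih =>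
    obtain ⟨q, hq, hq'⟩ := ih
    refine ⟨QC.amplify q, ?_, hq'.amplify ?_ ?_⟩
    · refine (totalDegree_amplify_le q).trans ((Nat.mul_le_mul_left 3 hq).trans (le_of_eq ?_))
      ring
    · have : ((1 : ℝ) / 2) ^ 2 ^ m ≤ 1 := pow_le_one₀ (by norm_num) (by norm_num)
      linarith
    · rw [pow_succ 2 m, pow_mul]
      have : (0 : ℝ) ≤ (1 / 2) ^ 2 ^ m := by positivity
      set u : ℝ := (1 / 2) ^ 2 ^ m
      nlinarith [pow_nonneg this 3]

/-! ### Degree bounds in terms of the number of copies -/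

theorem degq_cheatSheet_le (c : ℕ) {hk : 0 < k} {f : PartialFn (Fin n) fun _ => 2}
    (hφ : IsCertifying hk f φ) :
    degq (cheatSheet c f φ) ≤ c * (degq (certFn φ) + 1) := by
  obtain ⟨p, hpd, hp⟩ := exists_polynomial_totalDegree_le_degq (certFn φ)
  have hw : ApproximatesWithin p φ 0 := by
    intro z b hz
    rw [hp z b hz]
    cases b <;> norm_num
  refine Nat.sInf_le ⟨csPoly c hk p, (totalDegree_csPoly_le c hk p).trans (by gcongr), ?_⟩
  intro z b hz
  obtain rfl : ofProp (CSCond f φ z) = b := Option.some_injective _ hz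
  have h := abs_eval_csPoly_sub_le hφ hw z
  rw [mul_zero, mul_zero] at h
  exact sub_eq_zero.mp (abs_nonpos_iff.mp h)

theorem adegq_cheatSheet_le (c : ℕ) {hk : 0 < k} {f : PartialFn (Fin n) fun _ => 2}
    (hφ : IsCertifying hk f φ) :
    adegq (cheatSheet c f φ) ≤ c * (81 * (4 * c + 1) ^ 2 * adegq (certFn φ) + 1) := by
  obtain ⟨p, hpd, hp⟩ := exists_polynomial_totalDegree_le_adegq (certFn φ)
  obtain ⟨q, hqd, hq⟩ := exists_approximatesWithin hpd hp (Nat.clog 2 (2 * c))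
  have hm : 2 * c ≤ 2 ^ Nat.clog 2 (2 * c) := Nat.le_pow_clog (by norm_num) _
  have hm' : 2 ^ Nat.clog 2 (2 * c) ≤ 4 * c + 1 := by
    rcases Nat.eq_zero_or_pos c with rfl | hc
    · simp
    · have h := Nat.pow_pred_clog_lt_self (b := 2) (by norm_num) (x := 2 * c) (by omega)
      have hpos : 0 < Nat.clog 2 (2 * c) := Nat.clog_pos (by norm_num) (by omega)
      obtain ⟨r, hr⟩ := Nat.exists_eq_add_of_lt hpos
      rw [hr] at h ⊢
      simp only [zero_add, Nat.pred_eq_sub_one, Nat.add_sub_cancel, pow_succ] at h ⊢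
      omega
  set m := Nat.clog 2 (2 * c)
  refine Nat.sInf_le ⟨csPoly c hk q, (totalDegree_csPoly_le c hk q).trans ?_, ?_⟩
  · have h3 : 3 ^ m ≤ (4 * c + 1) ^ 2 := by
      calc 3 ^ m ≤ 4 ^ m := Nat.pow_le_pow_left (by norm_num) m
        _ = (2 ^ m) ^ 2 := by rw [← pow_mul, mul_comm, pow_mul]; norm_num
        _ ≤ (4 * c + 1) ^ 2 := Nat.pow_le_pow_left hm' 2
    gcongr
    exact hqd.trans (by gcongr)
  · intro z b hz
    obtain rfl : ofProp (CSCond f φ z) = b := Option.some_injective _ hz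
    refine (abs_eval_csPoly_sub_le hφ hq z).trans ?_
    have hc : (c : ℝ) ≤ 2 ^ c := by exact_mod_cast Nat.lt_two_pow_self.le
    have hpow : ((1 : ℝ) / 2) ^ 2 ^ m ≤ (1 / 2) ^ (2 * c) :=
      pow_le_pow_of_le_one (by norm_num) (by norm_num) hm
    calc (2 : ℝ) ^ c * (c * (1 / 3 * (1 / 2) ^ 2 ^ m))
        ≤ 2 ^ c * (2 ^ c * (1 / 3 * (1 / 2) ^ (2 * c))) := by gcongr
      _ = 1 / 3 * ((2 * (1 / 2)) ^ c) ^ 2 := by rw [two_mul, pow_add, mul_pow]; ring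
      _ = 1 / 3 := by norm_num

theorem clog_two_le_log (d : ℕ) :
    (Nat.clog 2 (d + 2) : ℝ) ≤ 4 * Real.log ((d : ℝ) + 2) := by
  have hlog2 : 1 / 2 ≤ Real.log 2 := by linarith [Real.log_two_gt_d9]
  have hL : Real.log 2 ≤ Real.log ((d : ℝ) + 2) :=
    Real.log_le_log (by norm_num) (by linarith [(Nat.cast_nonneg d : (0 : ℝ) ≤ d)])
  have hpos : 0 < Nat.clog 2 (d + 2) := Nat.clog_pos (by norm_num) (by omega)
  have h := Nat.pow_pred_clog_lt_self (b := 2) (by norm_num) (x := d + 2) (by omega)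
  generalize Nat.clog 2 (d + 2) = r at hpos h ⊢
  obtain ⟨r, rfl⟩ := Nat.exists_eq_succ_of_ne_zero hpos.ne'
  have h' : (2 : ℝ) ^ r ≤ (d : ℝ) + 2 := by exact_mod_cast h.le
  have hlog := Real.log_le_log (by positivity) h'
  rw [Real.log_pow] at hlog
  have hr : (0 : ℝ) ≤ r := Nat.cast_nonneg r
  push_cast
  nlinarith

theorem twenty_mul_sq_pow_four_le (d : ℕ) : (20 * d ^ 2) ^ 4 ≤ (d + 2) ^ 28 := by
  have h : 20 * d ^ 2 ≤ (d + 2) ^ 7 := by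
    calc 20 * d ^ 2 ≤ (d + 2) ^ 5 * (d + 2) ^ 2 := by
          refine Nat.mul_le_mul (le_trans (by norm_num) (Nat.pow_le_pow_left ?_ 5 : 2 ^ 5 ≤ _))
            (Nat.pow_le_pow_left ?_ 2) <;> omega
      _ = (d + 2) ^ 7 := by rw [← pow_add]
  calc (20 * d ^ 2) ^ 4 ≤ ((d + 2) ^ 7) ^ 4 := Nat.pow_le_pow_left h 4
    _ = (d + 2) ^ 28 := by rw [← pow_mul]

/-- The number of copies is logarithmic in the degree of a polynomial approximating `φ`. -/
theorem copies_le_log {hk : 0 < k} {f : PartialFn (Fin n) fun _ => 2} (hφ : IsCertifying hk f φ)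
    {p : MvPolynomial (CertIdx (Fin n) k) ℝ} {d : ℕ} (hd : p.totalDegree ≤ d)
    (hp : ∀ z b, certFn φ z = some b →
      |MvPolynomial.eval (fun i => ((z i : ℕ) : ℝ)) p - if b then 1 else 0| ≤ 1 / 3) :
    ((10 * Nat.clog 2 (Dq f) : ℕ) : ℝ) ≤ 1120 * Real.log ((d : ℝ) + 2) := by
  have hD := (Dq_le_of_isCertifying hφ hd hp).trans (twenty_mul_sq_pow_four_le d)
  generalize Dq f = D at hD ⊢
  have hclog : Nat.clog 2 D ≤ 28 * Nat.clog 2 (d + 2) := by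
    refine Nat.clog_le_of_le_pow (hD.trans ?_)
    rw [mul_comm, pow_mul]
    exact Nat.pow_le_pow_left (Nat.le_pow_clog (by norm_num) _) 28
  have hclog' : (Nat.clog 2 D : ℝ) ≤ 28 * (Nat.clog 2 (d + 2) : ℕ) := by
    have := (Nat.cast_le (α := ℝ)).2 hclog
    rwa [Nat.cast_mul] at this
  have hr := clog_two_le_log d
  rw [Nat.cast_mul]
  norm_num only [Nat.cast_ofNat]
  linarith

end CheatSheet

end QC

/-- Degree upper bounds for cheat sheet functions (with
`c = ⌈10·log₂ D(f)⌉` copies): `deg(f_CS) = Õ(deg(φ))` and `adeg(f_CS) = Õ(adeg(φ))`,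
independently of the degree of `f` itself. -/
theorem cheat_sheet_degree_upper_bounds :
    ∃ (C : ℝ) (e : ℕ), 0 < C ∧ ∀ (n k : ℕ) (hk : 0 < k)
      (f : QC.PartialFn (Fin n) fun _ => 2)
      (φ : QC.Input (Fin n) (fun _ => 2) → (Fin k → Fin 2) → Bool),
      QC.IsCertifying hk f φ →
      (QC.degq (QC.cheatSheet (10 * Nat.clog 2 (QC.Dq f)) f φ) : ℝ) ≤
          C * ((QC.degq (QC.certFn φ) : ℝ) + 2) *
            (Real.log ((QC.degq (QC.certFn φ) : ℝ) + 2)) ^ e ∧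
      (QC.adegq (QC.cheatSheet (10 * Nat.clog 2 (QC.Dq f)) f φ) : ℝ) ≤
          C * ((QC.adegq (QC.certFn φ) : ℝ) + 2) *
            (Real.log ((QC.adegq (QC.certFn φ) : ℝ) + 2)) ^ e := by
  refine ⟨1120 * (81 * 4482 ^ 2), 3, by norm_num, fun n k hk f φ hφ => ?_⟩
  have hlog : ∀ d : ℕ, 1 / 2 ≤ Real.log ((d : ℝ) + 2) := fun d => by
    have h : Real.log 2 ≤ Real.log ((d : ℝ) + 2) :=
      Real.log_le_log (by norm_num) (by linarith [(Nat.cast_nonneg d : (0 : ℝ) ≤ d)])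
    linarith [Real.log_two_gt_d9]
  constructor
  · obtain ⟨p, hpd, hp⟩ := QC.exists_polynomial_totalDegree_le_degq (QC.certFn φ)
    have hc := QC.copies_le_log hφ hpd fun z b hz => by
      rw [hp z b hz, sub_self, abs_zero]
      norm_num
    have hdeg := QC.degq_cheatSheet_le (10 * Nat.clog 2 (QC.Dq f)) hφ
    have hL := hlog (QC.degq (QC.certFn φ))
    set c := 10 * Nat.clog 2 (QC.Dq f)
    set d := QC.degq (QC.certFn φ)
    set L := Real.log ((d : ℝ) + 2)
    have hd : (0 : ℝ) ≤ d := Nat.cast_nonneg d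
    have hL2 : 1 ≤ 81 * 4482 ^ 2 * L ^ 2 := by nlinarith
    calc (QC.degq (QC.cheatSheet c f φ) : ℝ) ≤ c * (d + 1) := by exact_mod_cast hdeg
      _ ≤ (1120 * L) * (d + 2) := by gcongr; norm_num
      _ ≤ (1120 * L) * (d + 2) * (81 * 4482 ^ 2 * L ^ 2) :=
          le_mul_of_one_le_right (by positivity) hL2
      _ = 1120 * (81 * 4482 ^ 2) * (d + 2) * L ^ 3 := by ring
  · obtain ⟨p, hpd, hp⟩ := QC.exists_polynomial_totalDegree_le_adegq (QC.certFn φ)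
    have hc := QC.copies_le_log hφ hpd hp
    have hdeg := QC.adegq_cheatSheet_le (10 * Nat.clog 2 (QC.Dq f)) hφ
    have hL := hlog (QC.adegq (QC.certFn φ))
    set c := 10 * Nat.clog 2 (QC.Dq f)
    set d := QC.adegq (QC.certFn φ)
    set L := Real.log ((d : ℝ) + 2)
    have hd : (0 : ℝ) ≤ d := Nat.cast_nonneg d
    have hL2 : 1 ≤ 81 * (4482 * L) ^ 2 := by nlinarith
    calc (QC.adegq (QC.cheatSheet c f φ) : ℝ) ≤ c * (81 * (4 * c + 1) ^ 2 * d + 1) := by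
          exact_mod_cast hdeg
      _ ≤ (1120 * L) * (81 * (4482 * L) ^ 2 * d + 81 * (4482 * L) ^ 2 * 2) := by
          gcongr
          · linarith
          · linarith
      _ = 1120 * (81 * 4482 ^ 2) * (d + 2) * L ^ 3 := by ring
end

section
/- There exists a family of total Boolean functions f (one for each input size, with input size growing to infinity) such that R(f) = Ω̃(Q_E(f)^{3/2}), i.e., the bounded-error randomized query complexity of f is at least the 1.5-th power of its exact quantum query complexity, up to factors polylogarithmic in the input size. -/
open scoped BigOperators ENNReal

namespace QC

/-! ### Decision trees: weights of queried positions, and composition -/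

section Trees

variable {ι : Type} {α : ι → ℕ} {L M : Type}

/-- Total weight of the positions a tree queries on an input, counted with multiplicity. -/
def DTree.weight (w : ι → ℕ) : DTree ι α L → Input ι α → ℕ
  | .leaf _, _ => 0
  | .node i c, x => w i + DTree.weight w (c (x i)) x

theorem DTree.depth_child_lt (i : ι) (c : Fin (α i) → DTree ι α L) (a : Fin (α i)) :
    (c a).depth + 1 ≤ (DTree.node i c).depth := by
  simp only [DTree.depth]
  exact Nat.succ_le_succ (Finset.le_sup (f := fun a => (c a).depth) (Finset.mem_univ a))

theorem DTree.weight_le_depth {w : ι → ℕ} (hw : ∀ i, w i ≤ 1) (T : DTree ι α L)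
    (x : Input ι α) : T.weight w x ≤ T.depth := by
  induction T with
  | leaf l => simp [DTree.weight]
  | node i c ih =>
    have := DTree.depth_child_lt i c (x i)
    have := ih (x i)
    have := hw i
    simp only [DTree.weight]
    omega

theorem DTree.sum_weight {J : Type} (s : Finset J) (w : J → ι → ℕ) (T : DTree ι α L)
    (x : Input ι α) : ∑ j ∈ s, T.weight (w j) x = T.weight (fun i => ∑ j ∈ s, w j i) x := by
  induction T with
  | leaf l => simp [DTree.weight]
  | node i c ih => simp [DTree.weight, Finset.sum_add_distrib, ih]

theorem DTree.weight_add (w w' : ι → ℕ) (T : DTree ι α L)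
    (x : Input ι α) : T.weight (fun i => w i + w' i) x = T.weight w x + T.weight w' x := by
  induction T with
  | leaf l => rfl
  | node i c ih => simp only [DTree.weight, ih]; omega

theorem DTree.eval_congr_of_weight_eq_zero {w : ι → ℕ} {x x' : Input ι α}
    (h : ∀ i, x i ≠ x' i → w i ≠ 0) (T : DTree ι α L) (hT : T.weight w x = 0) :
    T.eval x = T.eval x' := by
  induction T with
  | leaf l => rfl
  | node i c ih =>
    simp only [DTree.weight, Nat.add_eq_zero_iff] at hT
    have hi : x i = x' i := by
      by_contra hne
      exact h i hne hT.1
    simp only [DTree.eval]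
    rw [ih _ hT.2, hi]

/-- If the inputs `b r` differ from a common input only at the respective positions `p r`, then a
tree can query `p r` on `b r` for many `r` only by querying the positions `p` often on average. -/
theorem DTree.card_hit_mul_card_le {R : Type} [DecidableEq R] [DecidableEq ι] {p : R → ι}
    (hp : Function.Injective p) {b : R → Input ι α} {b₀ : Input ι α}
    (hb : ∀ r i, i ≠ p r → b r i = b₀ i) {w : ι → ℕ} (hw : ∀ r, 1 ≤ w (p r))
    (T : DTree ι α L) (S : Finset R) :
    (S.filter fun r => T.weight (Pi.single (p r) 1) (b r) ≠ 0).card * S.card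
      ≤ 2 * ∑ r ∈ S, T.weight w (b r) := by
  induction T generalizing S with
  | leaf l => simp [DTree.weight]
  | node i c ih =>
    by_cases hi : ∃ r ∈ S, p r = i
    · obtain ⟨r₀, hr₀, rfl⟩ := hi
      have hne : ∀ r ∈ S.erase r₀, p r₀ ≠ p r := fun r hr h =>
        (Finset.mem_erase.1 hr).1 (hp h.symm)
      set t' := ((S.erase r₀).filter fun r =>
        (c (b₀ (p r₀))).weight (Pi.single (p r) 1) (b r) ≠ 0).card with ht'
      have h1 : (S.filter fun r =>
          (DTree.node (p r₀) c).weight (Pi.single (p r) 1) (b r) ≠ 0).card ≤ t' + 1 := by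
        rw [ht', ← Finset.card_insert_of_notMem (a := r₀) (by simp)]
        apply Finset.card_le_card
        intro r hr
        rw [Finset.mem_filter] at hr
        rw [Finset.mem_insert]
        by_cases hrr : r = r₀
        · exact Or.inl hrr
        · right
          have hmem : r ∈ S.erase r₀ := Finset.mem_erase.2 ⟨hrr, hr.1⟩
          refine Finset.mem_filter.2 ⟨hmem, ?_⟩
          have h := hr.2
          simp only [DTree.weight] at h
          rw [hb r _ (hne r hmem), Pi.single_eq_of_ne (hne r hmem), zero_add] at h
          exact h
      have h2 : S.card + ∑ r ∈ S.erase r₀, (c (b₀ (p r₀))).weight w (b r)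
          ≤ ∑ r ∈ S, (DTree.node (p r₀) c).weight w (b r) := by
        simp only [DTree.weight, Finset.sum_add_distrib]
        have : S.card ≤ ∑ _r ∈ S, w (p r₀) := by
          rw [Finset.sum_const, smul_eq_mul]
          exact Nat.le_mul_of_pos_right _ (hw r₀)
        refine Nat.add_le_add this ?_
        rw [← Finset.add_sum_erase S _ hr₀]
        refine le_trans (Finset.sum_le_sum fun r hr => ?_) (Nat.le_add_left _ _)
        rw [hb r _ (hne r hr)]
      have h3 := ih (b₀ (p r₀)) (S.erase r₀)
      rw [← ht'] at h3
      have h4 : t' ≤ (S.erase r₀).card := Finset.card_filter_le _ _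
      have h5 := Finset.card_erase_add_one hr₀
      have h6 := Nat.mul_le_mul_right S.card h1
      rw [← h5] at h6 h2 ⊢
      nlinarith
    · push Not at hi
      have h1 : ∀ r ∈ S, (DTree.node i c).weight (Pi.single (p r) 1) (b r)
          = (c (b₀ i)).weight (Pi.single (p r) 1) (b r) := by
        intro r hr
        simp only [DTree.weight]
        rw [hb r i (hi r hr).symm, Pi.single_eq_of_ne (hi r hr).symm, zero_add]
      have h2 : ∀ r ∈ S, (c (b₀ i)).weight w (b r) ≤ (DTree.node i c).weight w (b r) := by
        intro r hr
        simp only [DTree.weight]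
        rw [hb r i (hi r hr).symm]
        exact Nat.le_add_left _ _
      rw [Finset.filter_congr fun r hr => by rw [h1 r hr]]
      exact (ih (b₀ i) S).trans (Nat.mul_le_mul_left 2 (Finset.sum_le_sum h2))

/-- Sequential composition of decision trees. -/
def DTree.bind (f : L → DTree ι α M) : DTree ι α L → DTree ι α M
  | .leaf l => f l
  | .node i c => .node i fun a => DTree.bind f (c a)

theorem DTree.eval_bind (f : L → DTree ι α M) (T : DTree ι α L) (x : Input ι α) :
    (T.bind f).eval x = (f (T.eval x)).eval x := by
  induction T with
  | leaf l => rfl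
  | node i c ih => simp [DTree.bind, DTree.eval, ih]

theorem DTree.depth_bind_le {k : ℕ} (f : L → DTree ι α M) (hf : ∀ l, (f l).depth ≤ k)
    (T : DTree ι α L) : (T.bind f).depth ≤ T.depth + k := by
  induction T with
  | leaf l => simpa [DTree.bind, DTree.depth] using hf l
  | node i c ih =>
    simp only [DTree.bind, DTree.depth]
    rw [add_right_comm]
    refine Nat.succ_le_succ (Finset.sup_le fun a _ => (ih a).trans ?_)
    exact Nat.add_le_add_right
      (Finset.le_sup (f := fun a => (c a).depth) (Finset.mem_univ a)) k

/-- The function `g` of the input can be computed by a decision tree of depth at most `k`. -/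
def Computable (k : ℕ) (g : Input ι α → L) : Prop :=
  ∃ T : DTree ι α L, T.depth ≤ k ∧ ∀ x, T.eval x = g x

theorem Computable.const (l : L) : Computable 0 fun _ : Input ι α => l :=
  ⟨.leaf l, le_rfl, fun _ => rfl⟩

theorem Computable.mono {k k' : ℕ} {g : Input ι α → L} (h : Computable k g) (hk : k ≤ k') :
    Computable k' g :=
  let ⟨T, hT, he⟩ := h
  ⟨T, hT.trans hk, he⟩

theorem Computable.bind {k k' : ℕ} {g : Input ι α → L} (hg : Computable k g)
    {f : L → Input ι α → M} (hf : ∀ l, Computable k' (f l)) :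
    Computable (k + k') fun x => f (g x) x := by
  obtain ⟨T, hT, he⟩ := hg
  choose F hF hFe using hf
  exact ⟨T.bind F, (T.depth_bind_le F hF).trans (Nat.add_le_add_right hT _),
    fun x => by rw [DTree.eval_bind, hFe, he]⟩

theorem Computable.map {k : ℕ} {g : Input ι α → L} (hg : Computable k g) (f : L → M) :
    Computable k fun x => f (g x) :=
  hg.bind (f := fun l _ => f l) fun l => Computable.const (f l)

theorem Computable.query (i : ι) : Computable 1 fun x : Input ι α => x i :=
  ⟨.node i fun a => .leaf a, by simp [DTree.depth], fun _ => rfl⟩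

theorem Computable.finset_forall {J : Type} (s : Finset J) {k : ℕ} {P : J → Input ι α → Prop}
    (h : ∀ j ∈ s, Computable k fun x => ofProp (P j x)) :
    Computable (s.card * k) fun x => ofProp (∀ j ∈ s, P j x) := by
  classical
  induction s using Finset.induction_on with
  | empty => simpa using (Computable.const (ofProp True)).mono (Nat.zero_le _)
  | insert a s ha ih =>
    have h1 := ih fun j hj => h j (Finset.mem_insert_of_mem hj)
    have h2 := h1.bind (f := fun l x => l && ofProp (P a x)) fun l =>
      (h a (Finset.mem_insert_self a s)).map fun b => l && b
    rw [Finset.card_insert_of_notMem ha, Nat.succ_mul]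
    convert h2 using 2 with x
    by_cases hP : P a x <;> simp [ofProp, hP]

theorem Computable.and {k k' : ℕ} {P P' : Input ι α → Prop}
    (h : Computable k fun x => ofProp (P x)) (h' : Computable k' fun x => ofProp (P' x)) :
    Computable (k + k') fun x => ofProp (P x ∧ P' x) := by
  have h2 := h.bind (f := fun l x => l && ofProp (P' x)) fun l => h'.map fun b => l && b
  convert h2 using 2 with x
  by_cases hP : P x <;> simp [ofProp, hP]

theorem Computable.tuple {N : ℕ} (p : Fin N → ι) {A : Type} (d : ∀ i, Fin (α i) → A) :
    Computable N fun (x : Input ι α) (l : Fin N) => d _ (x (p l)) := by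
  induction N with
  | zero =>
    convert Computable.const (ι := ι) (α := α) (fun l : Fin 0 => l.elim0) using 3 with x l
  | succ N ih =>
    have h := ((Computable.query (α := α) (p 0)).map (d _)).bind
      (f := fun a (x : Input ι α) => (Fin.cons a fun l : Fin N => d _ (x (p l.succ)) :
        Fin (N + 1) → A))
      fun a => (ih fun l => p l.succ).map fun v : Fin N → A => (Fin.cons a v : Fin (N + 1) → A)
    rw [add_comm 1 N] at h
    convert h using 2 with x
    funext l
    refine Fin.cases ?_ (fun l => ?_) l <;> simp

end Trees

theorem Computable.total {n : ℕ} {L : Type} (g : Input (Fin n) (fun _ => 2) → L) :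
    Computable n g :=
  (Computable.tuple (ι := Fin n) (α := fun _ => 2) id fun _ a => a).map g

/-! ### A total search function -/

/-- Rows of the search matrices. -/
abbrev Row (L : ℕ) := Fin L → Fin 2

/-- Columns of the search matrices. -/
abbrev Col (L : ℕ) := Fin (4 ^ L)

/-- Positions of the input of the search function: the entries of two matrices of bits, followed by
one cell for each pair of columns; a cell holds a flag and a pointer (a row, in binary) for each
column of either matrix. -/
abbrev SearchIdx (L : ℕ) :=
  (Bool × Row L × Col L) ⊕ ((Col L × Col L) × Option (Bool × Col L × Fin L))

/-- The component of a pair selected by a bit. -/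
def pick {A : Type} (p : A × A) (a : Bool) : A := if a then p.2 else p.1

/-- The cell of the pair of columns `J` proves that the columns `J` are the unique all-ones columns
of their matrices: it points to a zero in each other column. -/
def Accepts {L : ℕ} (z : SearchIdx L → Fin 2) (J : Col L × Col L) : Prop :=
  (∀ a r, z (.inl (a, r, pick J a)) = 1) ∧ z (.inr (J, none)) = 1 ∧
    ∀ a k, k ≠ pick J a → z (.inl (a, fun l => z (.inr (J, some (a, k, l))), k)) = 0

/-- Is there a pair of all-ones columns whose cell proves their uniqueness? The positions of the
search problem are embedded into a larger index set. -/
noncomputable def searchFn {ι : Type} {L : ℕ} (e : SearchIdx L ↪ ι) :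
    PartialFn ι fun _ => 2 :=
  fun x => some (ofProp (∃ J, Accepts (fun s => x (e s)) J))

/-! ### The randomized lower bound -/

section Randomized

variable {ι : Type} {L : ℕ} (e : SearchIdx L ↪ ι)

/-- Extend an input of the search problem by zeros. -/
noncomputable def padInput (z : SearchIdx L → Fin 2) : Input ι fun _ => 2 :=
  Function.extend e z fun _ => 0

theorem padInput_apply (z : SearchIdx L → Fin 2) (s : SearchIdx L) : padInput e z (e s) = z s :=
  e.injective.extend_apply z _ s

theorem padInput_ne {z z' : SearchIdx L → Fin 2} {i : ι} (h : padInput e z i ≠ padInput e z' i) :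
    ∃ s, e s = i ∧ z s ≠ z' s := by
  by_cases hi : ∃ s, e s = i
  · obtain ⟨s, rfl⟩ := hi
    rw [padInput_apply, padInput_apply] at h
    exact ⟨s, rfl, h⟩
  · exact absurd (by simp only [padInput]; rw [Function.extend_apply' _ _ _ hi,
      Function.extend_apply' _ _ _ hi]) h

/-- Column `q.2` of matrix `q.1` has its only zero in row `y q`, and all cells are empty. -/
def hardNo (y : Bool × Col L → Row L) : SearchIdx L → Fin 2
  | .inl (a, r, k) => if r = y (a, k) then 0 else 1
  | .inr _ => 0

/-- The matrices of `hardNo y` with the zeros in columns `J` replaced by ones, and with the cell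
of `J` filled in correctly. -/
def hardYes (y : Bool × Col L → Row L) (J : Col L × Col L) : SearchIdx L → Fin 2
  | .inl (a, r, k) => if r = y (a, k) ∧ k ≠ pick J a then 0 else 1
  | .inr (J', none) => if J' = J then 1 else 0
  | .inr (J', some (a, k, l)) => if J' = J then y (a, k) l else 0

theorem searchFn_hardNo (y : Bool × Col L → Row L) :
    searchFn e (padInput e (hardNo y)) = some false := by
  simp only [searchFn, ofProp, Option.some.injEq, decide_eq_false_iff_not, padInput_apply]
  rintro ⟨J, hJ, -⟩
  simpa [hardNo] using hJ true (y (true, pick J true))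

theorem searchFn_hardYes (y : Bool × Col L → Row L) (J : Col L × Col L) :
    searchFn e (padInput e (hardYes y J)) = some true := by
  simp only [searchFn, ofProp, Option.some.injEq, decide_eq_true_eq, padInput_apply]
  refine ⟨J, ?_, ?_, ?_⟩
  · intro a r
    simp [hardYes]
  · simp [hardYes]
  · intro a k hk
    simp [hardYes, hk]

variable [DecidableEq ι]

/-- Weight concentrated on the zero of `hardNo y` in column `q.2` of matrix `q.1`. -/
def zeroWeight (y : Bool × Col L → Row L) (q : Bool × Col L) : ι → ℕ :=
  Pi.single (e (.inl (q.1, y q, q.2))) 1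

/-- Weight of the entries of column `q.2` of matrix `q.1`. -/
noncomputable def colWeight (q : Bool × Col L) (i : ι) : ℕ :=
  ∑ r, if e (.inl (q.1, r, q.2)) = i then 1 else 0

/-- Weight of the entries of cell `J`. -/
noncomputable def cellWeight (J : Col L × Col L) (i : ι) : ℕ :=
  ∑ o, if e (.inr (J, o)) = i then 1 else 0

theorem sum_ite_embedding_le {K : Type} [Fintype K] (f : K → ι) (hf : Function.Injective f)
    (i : ι) : ∑ k, (if f k = i then 1 else 0) ≤ 1 := by
  rw [Finset.sum_boole, Nat.cast_id, Finset.card_le_one]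
  intro a ha b hb
  rw [Finset.mem_filter] at ha hb
  exact hf (ha.2.trans hb.2.symm)

theorem sum_colWeight_le (i : ι) : ∑ q, colWeight e q i ≤ 1 := by
  simp only [colWeight]
  rw [← Fintype.sum_prod_type' (f := fun (q : Bool × Col L) (r : Row L) =>
    if e (.inl (q.1, r, q.2)) = i then 1 else 0)]
  refine sum_ite_embedding_le (fun p : (Bool × Col L) × Row L => e (.inl (p.1.1, p.2, p.1.2))) ?_ i
  rintro ⟨⟨a, k⟩, r⟩ ⟨⟨a', k'⟩, r'⟩ h
  have := e.injective h
  simp_all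

theorem sum_cellWeight_le (i : ι) : ∑ J, cellWeight e J i ≤ 1 := by
  simp only [cellWeight]
  rw [← Fintype.sum_prod_type' (f := fun (J : Col L × Col L) o =>
    if e (.inr (J, o)) = i then 1 else 0)]
  refine sum_ite_embedding_le (fun p : (Col L × Col L) × _ => e (.inr p)) ?_ i
  intro p p' h
  exact Sum.inr_injective (e.injective h)

/-- Weight of the positions where `hardNo y` and `hardYes y J` may differ. -/
noncomputable def diffWeight (y : Bool × Col L → Row L) (J : Col L × Col L) (i : ι) : ℕ :=
  zeroWeight e y (false, J.1) i + zeroWeight e y (true, J.2) i + cellWeight e J i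

theorem diffWeight_ne_zero (y : Bool × Col L → Row L) (J : Col L × Col L) (i : ι)
    (h : padInput e (hardNo y) i ≠ padInput e (hardYes y J) i) : diffWeight e y J i ≠ 0 := by
  obtain ⟨s, rfl, hs⟩ := padInput_ne e h
  match s, hs with
  | .inl (a, r, k), hs =>
    have hr : r = y (a, k) ∧ k = pick J a := by
      by_contra hc
      apply hs
      by_cases h1 : r = y (a, k)
      · have h2 : k ≠ pick J a := fun h2 => hc ⟨h1, h2⟩
        simp [hardNo, hardYes, h1, h2]
      · simp [hardNo, hardYes, h1]
    obtain ⟨rfl, rfl⟩ := hr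
    cases a <;> simp [diffWeight, zeroWeight, pick]
  | .inr (J', o), hs =>
    have hJ : J' = J := by
      by_contra hc
      apply hs
      cases o <;> simp [hardNo, hardYes, hc]
    subst hJ
    have : 1 ≤ cellWeight e J' (e (.inr (J', o))) := by
      refine le_trans ?_ (Finset.single_le_sum (f := fun o' =>
        if e (.inr (J', o')) = e (.inr (J', o)) then 1 else 0) (fun _ _ => Nat.zero_le _)
        (Finset.mem_univ o))
      simp
    simp only [diffWeight]
    omega

/-- Averaged over `y`, the zero of a column is queried at most `2 / 2 ^ L` times as often as the
column. -/
theorem sum_hit_le {M : Type} (T : DTree ι (fun _ => 2) M) (q : Bool × Col L) :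
    2 ^ L * ∑ y : Bool × Col L → Row L,
        (if T.weight (zeroWeight e y q) (padInput e (hardNo y)) ≠ 0 then 1 else 0)
      ≤ 2 * ∑ y, T.weight (colWeight e q) (padInput e (hardNo y)) := by
  classical
  let E := Equiv.funSplitAt q (Row L)
  rw [← E.symm.sum_comp, ← E.symm.sum_comp (fun y =>
    T.weight (colWeight e q) (padInput e (hardNo y))), Fintype.sum_prod_type_right,
    Fintype.sum_prod_type_right, Finset.mul_sum, Finset.mul_sum]
  refine Finset.sum_le_sum fun y' _ => ?_
  have hq : ∀ r, E.symm (r, y') q = r := by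
    intro r
    simp [E, Equiv.funSplitAt, Equiv.piSplitAt]
  have hne : ∀ r q', q' ≠ q → E.symm (r, y') q' = E.symm (0, y') q' := by
    intro r q' h
    simp [E, Equiv.funSplitAt, Equiv.piSplitAt, h]
  let z₀ : SearchIdx L → Fin 2 := fun s => match s with
    | .inl (a, r, k) => if (a, k) = q then 1 else hardNo (E.symm (0, y')) (.inl (a, r, k))
    | .inr _ => 0
  have hp : Function.Injective fun r : Row L => e (.inl (q.1, r, q.2)) := by
    intro r r' h
    have := e.injective h
    simp_all
  have key := DTree.card_hit_mul_card_le hp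
    (b := fun r => padInput e (hardNo (E.symm (r, y')))) (b₀ := padInput e z₀)
    (w := colWeight e q) ?_ ?_ T Finset.univ
  · rw [Finset.sum_boole, Nat.cast_id, mul_comm]
    simpa [zeroWeight, hq] using key
  · intro r i hi
    by_contra hc
    obtain ⟨s, rfl, hs⟩ := padInput_ne e hc
    match s, hs, hi with
    | .inl (a, r', k), hs, hi =>
      by_cases hak : (a, k) = q
      · subst hak
        have : r' ≠ r := fun h => hi (by rw [h])
        simp [hardNo, z₀, hq, this] at hs
      · simp [hardNo, z₀, hak, hne r _ hak] at hs
    | .inr c, hs, _ => simp [hardNo, z₀] at hs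
  · intro r
    refine le_trans ?_ (Finset.single_le_sum (f := fun r' =>
      if e (.inl (q.1, r', q.2)) = e (.inl (q.1, r, q.2)) then 1 else 0)
      (fun _ _ => Nat.zero_le _) (Finset.mem_univ r))
    simp

/-- A decision tree queries a position where `hardNo y` and `hardYes y J` differ for few pairs
`(y, J)`. -/
theorem card_hit_le {M : Type} {d : ℕ} (T : DTree ι (fun _ => 2) M) (hT : T.depth ≤ d) :
    2 ^ L * ∑ y : Bool × Col L → Row L, ∑ J,
        (if T.weight (diffWeight e y J) (padInput e (hardNo y)) ≠ 0 then 1 else 0)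
      ≤ (2 * 4 ^ L + 2 ^ L) * d * Fintype.card (Bool × Col L → Row L) := by
  set hit : (Bool × Col L → Row L) → Bool × Col L → ℕ := fun y q =>
    if T.weight (zeroWeight e y q) (padInput e (hardNo y)) ≠ 0 then 1 else 0 with hhit
  have h1 : ∀ y J, (if T.weight (diffWeight e y J) (padInput e (hardNo y)) ≠ 0 then 1 else 0)
      ≤ hit y (false, J.1) + hit y (true, J.2) +
        T.weight (cellWeight e J) (padInput e (hardNo y)) := by
    intro y J
    have : T.weight (diffWeight e y J) (padInput e (hardNo y)) =
        T.weight (zeroWeight e y (false, J.1)) (padInput e (hardNo y)) +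
        T.weight (zeroWeight e y (true, J.2)) (padInput e (hardNo y)) +
        T.weight (cellWeight e J) (padInput e (hardNo y)) := by
      rw [← DTree.weight_add, ← DTree.weight_add]
      rfl
    rw [this]
    simp only [hhit]
    split_ifs <;> omega
  have h2 : ∀ y, ∑ J, T.weight (cellWeight e J) (padInput e (hardNo y)) ≤ d := by
    intro y
    rw [DTree.sum_weight]
    exact (DTree.weight_le_depth (sum_cellWeight_le e) T _).trans hT
  have h3 : ∀ y, ∑ J : Col L × Col L, (hit y (false, J.1) + hit y (true, J.2))
      = 4 ^ L * ∑ q, hit y q := by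
    intro y
    rw [Finset.sum_add_distrib, Fintype.sum_prod_type, Fintype.sum_prod_type,
      Fintype.sum_prod_type, Fintype.sum_bool]
    simp only [Finset.sum_const, Finset.card_univ, Fintype.card_fin, smul_eq_mul]
    rw [← Finset.mul_sum]
    ring
  have h4 : 2 ^ L * ∑ y, ∑ q, hit y q ≤ 2 * (Fintype.card (Bool × Col L → Row L) * d) := by
    rw [Finset.sum_comm, Finset.mul_sum]
    refine (Finset.sum_le_sum fun q _ => sum_hit_le e T q).trans ?_
    rw [← Finset.mul_sum, Finset.sum_comm]
    refine Nat.mul_le_mul_left 2 ((Finset.sum_le_card_nsmul _ _ d fun y _ => ?_).trans_eq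
      (by simp))
    rw [DTree.sum_weight]
    exact (DTree.weight_le_depth (sum_colWeight_le e) T _).trans hT
  have h5 : ∑ y : Bool × Col L → Row L, ∑ J,
        (if T.weight (diffWeight e y J) (padInput e (hardNo y)) ≠ 0 then 1 else 0)
      ≤ 4 ^ L * ∑ y, ∑ q, hit y q + Fintype.card (Bool × Col L → Row L) * d := by
    refine (Finset.sum_le_sum fun y _ => (Finset.sum_le_sum fun J _ => h1 y J).trans
      ((Finset.sum_add_distrib).trans_le (Nat.add_le_add (h3 y).le (h2 y)))).trans_eq ?_
    rw [Finset.sum_add_distrib, ← Finset.mul_sum]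
    simp
  refine (Nat.mul_le_mul_left _ h5).trans ?_
  calc _ = 4 ^ L * (2 ^ L * ∑ y, ∑ q, hit y q)
        + 2 ^ L * (Fintype.card (Bool × Col L → Row L) * d) := by ring
    _ ≤ 4 ^ L * (2 * (Fintype.card (Bool × Col L → Row L) * d))
        + 2 ^ L * (Fintype.card (Bool × Col L → Row L) * d) := by gcongr
    _ = _ := by ring

end Randomized

/-- If a random `T` satisfies two conditions with probability at least `2 / 3` each, for every
`p`, then on average over `p` both hold simultaneously with probability at least `1 / 3`. -/
theorem card_le_of_prob_inter {X P : Type} [Fintype P] (μ : PMF X) (A B : P → Set X)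
    (hA : ∀ p, 2 / 3 ≤ μ.toOuterMeasure (A p)) (hB : ∀ p, 2 / 3 ≤ μ.toOuterMeasure (B p))
    (hit : X → P → ℕ) (hhit : ∀ T p, T ∈ A p → T ∈ B p → 1 ≤ hit T p) {c b : ℕ}
    (hb : ∀ T ∈ μ.support, c * ∑ p, hit T p ≤ b) :
    c * Fintype.card P ≤ 3 * b := by
  classical
  have h23 : ∀ m : ℝ≥0∞, 2 / 3 ≤ m → 2 ≤ 3 * m := by
    intro m hm
    calc (2 : ℝ≥0∞) = 3 * (2 / 3) := by
          rw [ENNReal.mul_div_cancel (by norm_num) (by norm_num)]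
      _ ≤ 3 * m := by gcongr
  have h1 : ∀ p, (4 : ℝ≥0∞) ≤ 3 * ∑' T, μ T * (1 + hit T p) := by
    intro p
    calc (4 : ℝ≥0∞) = 2 + 2 := by norm_num
      _ ≤ 3 * μ.toOuterMeasure (A p) + 3 * μ.toOuterMeasure (B p) :=
        add_le_add (h23 _ (hA p)) (h23 _ (hB p))
      _ = 3 * ∑' T, ((A p).indicator μ T + (B p).indicator μ T) := by
        rw [PMF.toOuterMeasure_apply, PMF.toOuterMeasure_apply, ENNReal.tsum_add, mul_add]
      _ ≤ 3 * ∑' T, μ T * (1 + hit T p) := by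
        gcongr with T
        by_cases hTA : T ∈ A p <;> by_cases hTB : T ∈ B p <;>
          simp only [hTA, hTB, Set.indicator_of_mem, Set.indicator_of_notMem, not_false_eq_true,
            mul_add, mul_one, add_zero, zero_add, le_self_add, zero_le]
        have : (1 : ℝ≥0∞) ≤ hit T p := by exact_mod_cast hhit T p hTA hTB
        gcongr
        exact le_mul_of_one_le_right' this
  have h2 : (Fintype.card P : ℝ≥0∞) * 4
      ≤ 3 * ∑' T, μ T * (Fintype.card P + ∑ p, (hit T p : ℝ≥0∞)) := by
    calc (Fintype.card P : ℝ≥0∞) * 4 = ∑ _p : P, 4 := by simp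
      _ ≤ ∑ p, 3 * ∑' T, μ T * (1 + hit T p) := Finset.sum_le_sum fun p _ => h1 p
      _ = 3 * ∑' T, ∑ p, μ T * (1 + hit T p) := by
        rw [← Finset.mul_sum, Summable.tsum_finsetSum fun _ _ => ENNReal.summable]
      _ = _ := by
        simp [← Finset.mul_sum, Finset.sum_add_distrib]
  have h3 : (c : ℝ≥0∞) * (Fintype.card P * 4) ≤ 3 * (c * Fintype.card P + b) := by
    calc (c : ℝ≥0∞) * (Fintype.card P * 4)
        ≤ c * (3 * ∑' T, μ T * (Fintype.card P + ∑ p, (hit T p : ℝ≥0∞))) := by gcongr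
      _ = 3 * ∑' T, μ T * (c * Fintype.card P + c * ∑ p, (hit T p : ℝ≥0∞)) := by
        rw [mul_left_comm, ← ENNReal.tsum_mul_left]
        congr 2
        funext T
        ring
      _ ≤ 3 * ∑' T, μ T * (c * Fintype.card P + b) := by
        gcongr 3 * ?_
        refine ENNReal.tsum_le_tsum fun T => ?_
        by_cases hT : T ∈ μ.support
        · gcongr
          exact_mod_cast hb T hT
        · rw [(PMF.apply_eq_zero_iff _ _).2 hT, zero_mul, zero_mul]
      _ = _ := by rw [ENNReal.tsum_mul_right, PMF.tsum_coe, one_mul]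
  have h4 : c * (Fintype.card P * 4) ≤ 3 * (c * Fintype.card P + b) := by exact_mod_cast h3
  linarith

/-- The randomized query complexity of the search function. -/
theorem le_Rq_searchFn {n L : ℕ} (e : SearchIdx L ↪ Fin n) : 8 ^ L ≤ 9 * Rq (searchFn e) := by
  have hne : {d | ∃ μ : PMF (DTree (Fin n) (fun _ => 2) (Option Bool)),
      (∀ T ∈ μ.support, T.depth ≤ d) ∧
      ∀ x b, searchFn e x = some b → 2/3 ≤ μ.toOuterMeasure {T | T.eval x = some b}}.Nonempty := by
    obtain ⟨T, hT, hTe⟩ := Computable.total (searchFn e)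
    refine ⟨n, PMF.pure T, ?_, ?_⟩
    · intro T' hT'
      rw [PMF.support_pure, Set.mem_singleton_iff] at hT'
      rwa [hT']
    · intro x b hx
      rw [PMF.toOuterMeasure_pure_apply, if_pos (by rw [Set.mem_ofPred_eq, hTe, hx])]
      exact ENNReal.div_le_of_le_mul (by norm_num)
  obtain ⟨μ, hμ, hs⟩ := Nat.sInf_mem hne
  change ∀ T ∈ μ.support, T.depth ≤ Rq (searchFn e) at hμ
  set d := Rq (searchFn e)
  have key := card_le_of_prob_inter (P := (Bool × Col L → Row L) × (Col L × Col L)) μ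
    (fun p => {T | T.eval (padInput e (hardNo p.1)) = some false})
    (fun p => {T | T.eval (padInput e (hardYes p.1 p.2)) = some true})
    (fun p => hs _ _ (searchFn_hardNo e p.1)) (fun p => hs _ _ (searchFn_hardYes e p.1 p.2))
    (fun T p => if T.weight (diffWeight e p.1 p.2) (padInput e (hardNo p.1)) ≠ 0 then 1 else 0)
    (fun T p hA hB => by
      rw [if_pos]
      intro h0
      have := DTree.eval_congr_of_weight_eq_zero (diffWeight_ne_zero e p.1 p.2) T h0
      rw [Set.mem_ofPred_eq] at hA hB
      rw [hA, hB] at this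
      simp at this)
    (c := 2 ^ L) (b := (2 * 4 ^ L + 2 ^ L) * d * Fintype.card (Bool × Col L → Row L))
    (fun T hT => by
      rw [Fintype.sum_prod_type]
      exact card_hit_le e T (hμ T hT))
  have hpos : 0 < Fintype.card (Bool × Col L → Row L) := Fintype.card_pos
  rw [Fintype.card_prod] at key
  have h1 : 2 ^ L * Fintype.card (Col L × Col L) ≤ 3 * ((2 * 4 ^ L + 2 ^ L) * d) := by
    refine Nat.le_of_mul_le_mul_right ?_ hpos
    calc _ = 2 ^ L * (Fintype.card (Bool × Col L → Row L) * Fintype.card (Col L × Col L)) := by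
          ring
      _ ≤ _ := key
      _ = _ := by ring
  rw [Fintype.card_prod, Fintype.card_fin] at h1
  have h2 : 2 ^ L ≤ 4 ^ L := Nat.pow_le_pow_left (by norm_num) L
  refine Nat.le_of_mul_le_mul_left ?_ (show 0 < 4 ^ L by positivity)
  calc 4 ^ L * 8 ^ L = 2 ^ L * (4 ^ L * 4 ^ L) := by norm_num [← mul_pow]
    _ ≤ 3 * ((2 * 4 ^ L + 2 ^ L) * d) := h1
    _ ≤ 3 * ((2 * 4 ^ L + 4 ^ L) * d) := by gcongr
    _ = _ := by ring

/-! ### States reachable by quantum query algorithms -/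

section Reach

variable {n : ℕ}

/-- The state space of an algorithm on `n` bits with workspace `R`. -/
abbrev QSpace (n : ℕ) (R : Type) := (Σ _ : Fin n, Fin 2) × R

/-- The action of the query oracle on basis states. -/
def queryMap {R : Type} (x : Input (Fin n) fun _ => 2) (s : QSpace n R) : QSpace n R :=
  (⟨s.1.1, s.1.2 + x s.1.1⟩, s.2)

theorem queryMap_involutive {R : Type} (x : Input (Fin n) fun _ => 2) :
    Function.Involutive (queryMap (R := R) x) := by
  rintro ⟨⟨i, c⟩, r⟩
  simp only [queryMap]
  have : ∀ a b : Fin 2, a + b + b = a := by decide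
  rw [this]

/-- `ψ x` is the state of some quantum algorithm with workspace `R` after `T` queries to `x`. -/
inductive Reach (R : Type) [Fintype R] [DecidableEq R] :
    ℕ → (Input (Fin n) (fun _ => 2) → QSpace n R → ℂ) → Prop
  | init (v : QSpace n R → ℂ) (hv : ∑ s, ‖v s‖ ^ 2 = 1) : Reach R 0 fun _ => v
  | unitary {T : ℕ} {ψ : Input (Fin n) (fun _ => 2) → QSpace n R → ℂ}
      {U : Matrix (QSpace n R) (QSpace n R) ℂ} (h : Reach R T ψ)
      (hU : U ∈ Matrix.unitaryGroup (QSpace n R) ℂ) : Reach R T fun x => U.mulVec (ψ x)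
  | query {T : ℕ} {ψ : Input (Fin n) (fun _ => 2) → QSpace n R → ℂ} (h : Reach R T ψ) :
      Reach R (T + 1) fun x s => ψ x (queryMap x s)

theorem sum_norm_sq_mulVec {S : Type} [Fintype S] [DecidableEq S] {U : Matrix S S ℂ}
    (hU : U ∈ Matrix.unitaryGroup S ℂ) (v : S → ℂ) :
    ∑ s, ‖U.mulVec v s‖ ^ 2 = ∑ s, ‖v s‖ ^ 2 := by
  have key : ∀ v : S → ℂ, ((∑ s, ‖v s‖ ^ 2 : ℝ) : ℂ) = dotProduct (star v) v := by
    intro v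
    rw [dotProduct]
    push_cast
    refine Finset.sum_congr rfl fun s _ => ?_
    rw [Pi.star_apply, RCLike.star_def, Complex.conj_mul']
  have h : dotProduct (star (U.mulVec v)) (U.mulVec v) = dotProduct (star v) v := by
    rw [Matrix.star_mulVec, Matrix.dotProduct_mulVec, Matrix.vecMul_vecMul,
      ← Matrix.star_eq_conjTranspose, Matrix.mem_unitaryGroup_iff'.1 hU, Matrix.vecMul_one]
  have := (key _).trans (h.trans (key v).symm)
  exact_mod_cast this

theorem oracleMatrix_mulVec {W : ℕ} (x : Input (Fin n) fun _ => 2)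
    (v : QIdx (Fin n) (fun _ => 2) W → ℂ) :
    (oracleMatrix W x).mulVec v = fun s => v (queryMap x s) := by
  funext s
  rw [Matrix.mulVec, dotProduct, Finset.sum_eq_single (queryMap x s)]
  · have h : s = queryMap x (queryMap x s) := (queryMap_involutive x s).symm
    have h1 := congrArg Prod.fst h
    have h2 := congrArg Prod.snd h
    simp only [oracleMatrix, Matrix.of_apply]
    rw [if_pos ⟨h2, h1⟩, one_mul]
  · intro s' _ hs
    simp only [oracleMatrix, Matrix.of_apply]
    rw [if_neg, zero_mul]
    rintro ⟨h1, h2⟩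
    apply hs
    have h : s = queryMap x s' := Prod.ext h2 h1
    rw [h, queryMap_involutive x s']
  · simp

theorem qProd_congr {τ : Type} [Fintype τ] {U U' : ℕ → Matrix τ τ ℂ} (O : Matrix τ τ ℂ) {T : ℕ}
    (h : ∀ t ≤ T, U t = U' t) : qProd U O T = qProd U' O T := by
  induction T with
  | zero => exact h 0 le_rfl
  | succ T ih =>
    simp only [qProd]
    rw [h _ le_rfl, ih fun t ht => h t (Nat.le_succ_of_le ht)]

/-- Reachable states are the final states of quantum query algorithms. -/
theorem Reach.exists_qProd {R : Type} [Fintype R] [DecidableEq R] {T W : ℕ}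
    {ψ : Input (Fin n) (fun _ => 2) → QSpace n R → ℂ} (h : Reach R T ψ) (e : Fin W ≃ R) :
    ∃ (U : ℕ → Matrix (QIdx (Fin n) (fun _ => 2) W) (QIdx (Fin n) (fun _ => 2) W) ℂ)
      (v : QIdx (Fin n) (fun _ => 2) W → ℂ),
      (∀ t, U t ∈ Matrix.unitaryGroup _ ℂ) ∧ ∑ s, ‖v s‖ ^ 2 = 1 ∧
      ∀ x, (qProd U (oracleMatrix W x) T).mulVec v = fun s => ψ x (s.1, e s.2) := by
  let E : QIdx (Fin n) (fun _ => 2) W ≃ QSpace n R := (Equiv.refl _).prodCongr e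
  change ∃ (U : ℕ → Matrix (QIdx (Fin n) (fun _ => 2) W) (QIdx (Fin n) (fun _ => 2) W) ℂ)
      (v : QIdx (Fin n) (fun _ => 2) W → ℂ),
      (∀ t, U t ∈ Matrix.unitaryGroup _ ℂ) ∧ ∑ s, ‖v s‖ ^ 2 = 1 ∧
      ∀ x, (qProd U (oracleMatrix W x) T).mulVec v = fun s => ψ x (E s)
  induction h with
  | init v hv =>
    refine ⟨fun _ => 1, fun s => v (E s), fun _ => one_mem _, ?_, fun x => ?_⟩
    · rw [E.sum_comp fun s => ‖v s‖ ^ 2, hv]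
    · simp [qProd]
  | @unitary T ψ V h hV ih =>
    obtain ⟨U, v, hU, hv, hψ⟩ := ih
    have hV' : V.submatrix E E ∈ Matrix.unitaryGroup _ ℂ := by
      rw [Matrix.mem_unitaryGroup_iff, Matrix.star_eq_conjTranspose, Matrix.conjTranspose_submatrix,
        Matrix.submatrix_mul_equiv, ← Matrix.star_eq_conjTranspose,
        Matrix.mem_unitaryGroup_iff.1 hV, Matrix.submatrix_one_equiv]
    refine ⟨Function.update U T (V.submatrix E E * U T), v, fun t => ?_, hv, fun x => ?_⟩
    · by_cases ht : t = T
      · subst ht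
        rw [Function.update_self]
        exact mul_mem hV' (hU t)
      · rw [Function.update_of_ne ht]
        exact hU t
    · have : qProd (Function.update U T (V.submatrix E E * U T)) (oracleMatrix W x) T
          = V.submatrix E E * qProd U (oracleMatrix W x) T := by
        cases T with
        | zero => simp [qProd]
        | succ T =>
          simp only [qProd]
          rw [qProd_congr (U' := U) _ fun t ht => Function.update_of_ne (by omega) _ _,
            Function.update_self]
          simp only [Matrix.mul_assoc]
      rw [this, ← Matrix.mulVec_mulVec, hψ]
      funext s
      simp only [Matrix.mulVec, dotProduct, Matrix.submatrix_apply]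
      exact E.sum_comp fun s' => V (E s) s' * ψ x s'
  | @query T ψ h ih =>
    obtain ⟨U, v, hU, hv, hψ⟩ := ih
    refine ⟨Function.update U (T + 1) 1, v, fun t => ?_, hv, fun x => ?_⟩
    · by_cases ht : t = T + 1
      · subst ht
        rw [Function.update_self]
        exact one_mem _
      · rw [Function.update_of_ne ht]
        exact hU t
    · simp only [qProd]
      rw [qProd_congr (U' := U) _ fun t ht => Function.update_of_ne (by omega) _ _,
        Function.update_self, Matrix.one_mul, ← Matrix.mulVec_mulVec, hψ, oracleMatrix_mulVec]
      rfl

variable {R : Type} [Fintype R] [DecidableEq R]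

theorem Reach.sum_norm_sq {T : ℕ} {ψ : Input (Fin n) (fun _ => 2) → QSpace n R → ℂ}
    (h : Reach R T ψ) (x : Input (Fin n) fun _ => 2) : ∑ s, ‖ψ x s‖ ^ 2 = 1 := by
  induction h with
  | init v hv => exact hv
  | unitary h hU ih => rw [sum_norm_sq_mulVec hU, ih]
  | @query T ψ h ih =>
    rw [← ih]
    exact Equiv.sum_comp (queryMap_involutive x).toPerm fun s => ‖ψ x s‖ ^ 2

/-- A measurement that gives the right output on every basis state in the support of a reachable
state yields an exact algorithm. -/
theorem Reach.exists_exact {T : ℕ} {ψ : Input (Fin n) (fun _ => 2) → QSpace n R → ℂ}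
    (h : Reach R T ψ) (f : PartialFn (Fin n) fun _ => 2) (out : QSpace n R → Option Bool)
    (hout : ∀ x s, ψ x s ≠ 0 → out s = f x) :
    ∃ A : QAlg (Fin n) fun _ => 2, A.T = T ∧ ∀ x b, f x = some b → A.outProb x (some b) = 1 := by
  let e : Fin (Fintype.card R) ≃ R := (Fintype.equivFin R).symm
  obtain ⟨U, v, hU, hv, hψ⟩ := h.exists_qProd e
  refine ⟨⟨T, Fintype.card R, U, hU, v, hv, fun s => out (s.1, e s.2)⟩, rfl, ?_⟩
  intro x b hb
  simp only [QAlg.outProb, QAlg.finalState]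
  rw [← h.sum_norm_sq x, ← ((Equiv.refl (Σ _ : Fin n, Fin 2)).prodCongr e).sum_comp]
  refine Finset.sum_congr rfl fun s _ => ?_
  rw [hψ]
  change _ = ‖ψ x (s.1, e s.2)‖ ^ 2
  by_cases hs : ψ x (s.1, e s.2) = 0
  · simp [hs]
  · rw [if_pos ((hout x _ hs).trans hb)]

/-- The superposition with amplitudes `a` of the basis states `f`. -/
def pushState {τ S : Type} [Fintype τ] [DecidableEq S] (a : τ → ℂ) (f : τ → S) (s : S) : ℂ :=
  ∑ w, if f w = s then a w else 0

variable {τ : Type} [Fintype τ] {a : Input (Fin n) (fun _ => 2) → τ → ℂ}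
  {f : Input (Fin n) (fun _ => 2) → τ → QSpace n R}

theorem Reach.perm {T : ℕ} (h : Reach R T fun x => pushState (a x) (f x))
    (σ : Equiv.Perm (QSpace n R)) : Reach R T fun x => pushState (a x) fun w => σ (f x w) := by
  have hσ : Equiv.Perm.permMatrix ℂ σ⁻¹ ∈ Matrix.unitaryGroup (QSpace n R) ℂ := by
    rw [Matrix.mem_unitaryGroup_iff, Matrix.star_eq_conjTranspose, Matrix.conjTranspose_permMatrix,
      ← Matrix.permMatrix_mul]
    simp
  convert h.unitary hσ using 2 with x
  funext s
  rw [Matrix.permMatrix_mulVec]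
  simp [pushState, Equiv.eq_symm_apply]

theorem Reach.oracle {T : ℕ} (h : Reach R T fun x => pushState (a x) (f x)) :
    Reach R (T + 1) fun x => pushState (a x) fun w => queryMap x (f x w) := by
  convert h.query using 2 with x
  funext s
  simp only [pushState]
  refine Finset.sum_congr rfl fun w _ => ?_
  congr 1
  exact propext ⟨fun h => by rw [← h, queryMap_involutive], fun h => by rw [h, queryMap_involutive]⟩

theorem Reach.phase {T : ℕ} (h : Reach R T fun x => pushState (a x) (f x))
    (g : QSpace n R → Prop) [DecidablePred g] :
    Reach R T fun x => pushState (fun w => (if g (f x w) then -1 else 1) * a x w) (f x) := by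
  have hD : Matrix.diagonal (fun s => if g s then (-1 : ℂ) else 1)
      ∈ Matrix.unitaryGroup (QSpace n R) ℂ := by
    rw [Matrix.mem_unitaryGroup_iff, Matrix.star_eq_conjTranspose, Matrix.diagonal_conjTranspose,
      Matrix.diagonal_mul_diagonal, ← Matrix.diagonal_one]
    congr 1
    funext s
    by_cases hs : g s <;> simp [hs]
  convert h.unitary hD using 2 with x
  funext s
  rw [Matrix.mulVec_diagonal]
  simp only [pushState]
  rw [Finset.mul_sum]
  refine Finset.sum_congr rfl fun w _ => ?_
  by_cases hw : f x w = s <;> simp [hw]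

end Reach

/-! ### Running decision trees in superposition -/

section Follow

variable {n : ℕ} {L : Type}

/-- The child of the root reached by the answer `c`; leaves stay put. -/
def DTree.step : DTree (Fin n) (fun _ => 2) L → Fin 2 → DTree (Fin n) (fun _ => 2) L
  | .leaf l, _ => .leaf l
  | .node _ child, c => child c

/-- The subtree reached after `t` answers, read off from `h`. -/
def DTree.follow (T : DTree (Fin n) (fun _ => 2) L) {K : ℕ} (h : Fin K → Fin 2) :
    ℕ → DTree (Fin n) (fun _ => 2) L
  | 0 => T
  | t + 1 => (T.follow h t).step (if ht : t < K then h ⟨t, ht⟩ else 0)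

theorem DTree.follow_congr (T : DTree (Fin n) (fun _ => 2) L) {K : ℕ} {h h' : Fin K → Fin 2} {t : ℕ}
    (hh : ∀ s : Fin K, (s : ℕ) < t → h s = h' s) : T.follow h t = T.follow h' t := by
  induction t with
  | zero => rfl
  | succ t ih =>
    simp only [DTree.follow]
    rw [ih fun s hs => hh s (by omega)]
    congr 1
    split_ifs with ht
    · exact hh _ (Nat.lt_succ_self t)
    · rfl

variable [NeZero n]

/-- The position queried at the root; leaves query position `0`. -/
def DTree.root : DTree (Fin n) (fun _ => 2) L → Fin n
  | .leaf _ => 0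
  | .node i _ => i

/-- The subtree reached after `t` queries to `x`. -/
def DTree.run (T : DTree (Fin n) (fun _ => 2) L) (x : Input (Fin n) fun _ => 2) :
    ℕ → DTree (Fin n) (fun _ => 2) L
  | 0 => T
  | t + 1 => (T.run x t).step (x (T.run x t).root)

/-- The first `t` answers given by `x`, padded by zeros. -/
def DTree.hist (T : DTree (Fin n) (fun _ => 2) L) (K : ℕ) (x : Input (Fin n) fun _ => 2) (t : ℕ)
    (s : Fin K) : Fin 2 :=
  if (s : ℕ) < t then x (T.run x s).root else 0

theorem DTree.follow_hist (T : DTree (Fin n) (fun _ => 2) L) {K t : ℕ} (ht : t ≤ K)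
    (x : Input (Fin n) fun _ => 2) : T.follow (T.hist K x t) t = T.run x t := by
  induction t with
  | zero => rfl
  | succ t ih =>
    simp only [DTree.follow, DTree.run]
    rw [T.follow_congr (h' := T.hist K x t) (fun s hs => by
      simp only [DTree.hist]; rw [if_pos hs, if_pos (by omega)]), ih (by omega)]
    simp [DTree.hist, show t < K by omega]

theorem DTree.hist_succ (T : DTree (Fin n) (fun _ => 2) L) {K t : ℕ} (ht : t < K)
    (x : Input (Fin n) fun _ => 2) :
    T.hist K x (t + 1) = Function.update (T.hist K x t) ⟨t, ht⟩ (x (T.run x t).root) := by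
  funext s
  by_cases hs : s = ⟨t, ht⟩
  · subst hs
    simp [DTree.hist]
  · have : (s : ℕ) ≠ t := fun h => hs (Fin.ext h)
    rw [Function.update_of_ne hs]
    simp only [DTree.hist]
    congr 1
    exact propext ⟨fun h => by omega, fun h => by omega⟩

theorem DTree.run_eq_leaf (T : DTree (Fin n) (fun _ => 2) L) {t : ℕ} (ht : T.depth ≤ t)
    (x : Input (Fin n) fun _ => 2) : T.run x t = .leaf (T.eval x) := by
  have heval : ∀ t, (T.run x t).eval x = T.eval x := by
    intro t
    induction t with
    | zero => rfl
    | succ t ih =>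
      rw [← ih, DTree.run]
      cases T.run x t <;> rfl
  have hdepth : ∀ t, (T.run x t).depth ≤ T.depth - t := by
    intro t
    induction t with
    | zero => exact le_rfl
    | succ t ih =>
      rw [DTree.run]
      cases h : T.run x t with
      | leaf l => exact Nat.zero_le _
      | node i c =>
        rw [h] at ih
        have := DTree.depth_child_lt (L := L) (α := fun _ : Fin n => 2) i c (x i)
        simp only [DTree.step, DTree.root]
        omega
  have h0 := hdepth t
  rw [← heval t]
  cases h : T.run x t with
  | leaf l => rfl
  | node i c =>
    rw [h] at h0
    simp only [DTree.depth] at h0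
    omega

end Follow

section Simulate

variable {n K : ℕ} [NeZero n] {τ : Type} [Fintype τ] [DecidableEq τ]

/-- The basis state with idle query register, content `w`, and answers `h`. -/
def basePoint (w : τ) (h : Fin K → Fin 2) : QSpace n (τ × (Fin K → Fin 2)) := (⟨0, 0⟩, (w, h))

variable {a : Input (Fin n) (fun _ => 2) → τ → ℂ}

/-- Add the answer to a query depending on the other answers to answer `t`. -/
theorem Reach.toggle {N : ℕ} {h : Input (Fin n) (fun _ => 2) → τ → Fin K → Fin 2}
    (hR : Reach (τ × (Fin K → Fin 2)) N fun x => pushState (a x) fun w => basePoint w (h x w))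
    (t : Fin K) (q : τ → (Fin K → Fin 2) → Fin n)
    (hq : ∀ w h c, q w (Function.update h t c) = q w h) :
    Reach (τ × (Fin K → Fin 2)) (N + 1) fun x => pushState (a x) fun w =>
      basePoint w (Function.update (h x w) t (h x w t + x (q w (h x w)))) := by
  let σ : Equiv.Perm (QSpace n (τ × (Fin K → Fin 2))) :=
    { toFun := fun s => (⟨s.1.1 + q s.2.1 s.2.2, s.1.2⟩, s.2)
      invFun := fun s => (⟨s.1.1 - q s.2.1 s.2.2, s.1.2⟩, s.2)
      left_inv := fun s => by simp
      right_inv := fun s => by simp }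
  have hswap : Function.Involutive fun s : QSpace n (τ × (Fin K → Fin 2)) =>
      ((⟨s.1.1, s.2.2 t⟩, (s.2.1, Function.update s.2.2 t s.1.2)) :
        QSpace n (τ × (Fin K → Fin 2))) := by
    rintro ⟨⟨i, c⟩, w, h⟩
    simp
  convert ((((hR.perm σ).perm hswap.toPerm).oracle).perm hswap.toPerm).perm σ.symm using 3 with x
  funext w
  have h0 : x (0 + q w (h x w)) = x (q w (h x w)) :=
    congrArg (fun i => (x i : Fin 2)) (zero_add _)
  simp [σ, basePoint, queryMap, Function.Involutive.toPerm, hq, h0]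

variable {L : Type}

theorem Reach.compute {N : ℕ}
    (hR : Reach (τ × (Fin K → Fin 2)) N fun x => pushState (a x) fun w => basePoint w 0)
    (T : τ → DTree (Fin n) (fun _ => 2) L) {t : ℕ} (ht : t ≤ K) :
    Reach (τ × (Fin K → Fin 2)) (N + t) fun x => pushState (a x) fun w =>
      basePoint w ((T w).hist K x t) := by
  induction t with
  | zero => exact hR
  | succ t ih =>
    rw [← Nat.add_assoc]
    convert (ih (by omega)).toggle ⟨t, ht⟩ (fun w h => ((T w).follow h t).root)
      (fun w h c => congrArg DTree.root ((T w).follow_congr fun s hs =>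
        Function.update_of_ne (fun e => by simp [e] at hs) _ _)) using 3 with x
    funext w
    rw [(T w).hist_succ ht, (T w).follow_hist (by omega)]
    simp [DTree.hist]

theorem Reach.uncompute {N : ℕ} (T : τ → DTree (Fin n) (fun _ => 2) L) {t : ℕ} (ht : t ≤ K)
    (hR : Reach (τ × (Fin K → Fin 2)) N fun x => pushState (a x) fun w =>
      basePoint w ((T w).hist K x t)) :
    Reach (τ × (Fin K → Fin 2)) (N + t) fun x => pushState (a x) fun w => basePoint w 0 := by
  induction t generalizing N with
  | zero => exact hR
  | succ t ih =>
    rw [show N + (t + 1) = N + 1 + t by omega]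
    refine ih (by omega) ?_
    convert hR.toggle ⟨t, ht⟩ (fun w h => ((T w).follow h t).root)
      (fun w h c => congrArg DTree.root ((T w).follow_congr fun s hs =>
        Function.update_of_ne (fun e => by simp [e] at hs) _ _)) using 4 with x w
    rw [(T w).hist_succ ht, (T w).follow_congr (h' := (T w).hist K x t) fun s hs =>
      Function.update_of_ne (fun e => by simp [e] at hs) _ _, (T w).follow_hist (by omega)]
    have h2 : ∀ c : Fin 2, c + c = 0 := by decide
    simp only [Function.update_self, Function.update_idem, h2]
    rw [Function.update_eq_self_iff.2]
    simp [DTree.hist]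

/-- A sign computed by decision trees of depth `t` costs `2 * t` queries. -/
theorem Reach.treePhase {N : ℕ}
    (hR : Reach (τ × (Fin K → Fin 2)) N fun x => pushState (a x) fun w => basePoint w 0)
    (T : τ → DTree (Fin n) (fun _ => 2) Bool) {t : ℕ} (ht : t ≤ K) (hT : ∀ w, (T w).depth ≤ t) :
    Reach (τ × (Fin K → Fin 2)) (N + 2 * t) fun x =>
      pushState (fun w => (if (T w).eval x then -1 else 1) * a x w) fun w => basePoint w 0 := by
  classical
  rw [show N + 2 * t = N + t + t by omega]
  refine Reach.uncompute T ht ?_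
  convert (hR.compute T ht).phase fun s => (T s.2.1).follow s.2.2 t = .leaf true using 4 with x w
  simp [basePoint, (T w).follow_hist ht, (T w).run_eq_leaf (hT w)]

theorem pushState_basePoint (v : τ → ℂ) (s : QSpace n (τ × (Fin K → Fin 2))) :
    pushState v (fun w => basePoint w 0) s = if s.1 = ⟨0, 0⟩ ∧ s.2.2 = 0 then v s.2.1 else 0 := by
  rw [pushState, Finset.sum_eq_single s.2.1]
  · congr 1
    simp only [basePoint, eq_iff_iff]
    constructor
    · intro h
      rw [← h]
      exact ⟨rfl, rfl⟩
    · rintro ⟨h1, h2⟩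
      rw [← h1, ← h2]
  · intro w _ hw
    refine if_neg fun h => hw ?_
    rw [← h]
    rfl
  · simp

theorem Reach.tensor {N : ℕ}
    (hR : Reach (τ × (Fin K → Fin 2)) N fun x => pushState (a x) fun w => basePoint w 0)
    {A : Matrix τ τ ℂ} (hA : A ∈ Matrix.unitaryGroup τ ℂ) :
    Reach (n := n) (τ × (Fin K → Fin 2)) N fun x =>
      pushState (A.mulVec (a x)) fun w => basePoint w 0 := by
  have hU : Matrix.kronecker (1 : Matrix (Σ _ : Fin n, Fin 2) _ ℂ)
      (Matrix.kronecker A (1 : Matrix (Fin K → Fin 2) _ ℂ))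
      ∈ Matrix.unitaryGroup (QSpace n (τ × (Fin K → Fin 2))) ℂ :=
    Matrix.kronecker_mem_unitary (one_mem _) (Matrix.kronecker_mem_unitary hA (one_mem _))
  convert hR.unitary hU using 2 with x
  funext s
  obtain ⟨c, w, h⟩ := s
  simp only [pushState_basePoint, Matrix.mulVec, dotProduct, Matrix.kronecker,
    Matrix.kroneckerMap_apply, Fintype.sum_prod_type, Matrix.one_apply]
  rw [Finset.sum_eq_single c]
  · by_cases hc : c = ⟨0, 0⟩ ∧ h = 0
    · rw [if_pos hc]
      refine Finset.sum_congr rfl fun w' _ => ?_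
      rw [Finset.sum_eq_single h]
      · simp [hc]
      · intro h' _ hh
        simp [hh.symm]
      · simp
    · rw [if_neg hc]
      refine (Finset.sum_eq_zero fun w' _ => Finset.sum_eq_zero fun h' _ => ?_).symm
      by_cases hh : h = h'
      · subst hh
        simp only [if_neg hc, mul_zero]
      · simp [hh]
  · intro c' _ hc
    simp [hc.symm]
  · simp

/-- Amplitude amplification: alternate between signs computed by decision trees and a fixed unitary,
then run decision trees to obtain the output. -/
theorem exists_exact_of_iterate {K₁ : ℕ} {A : Matrix τ τ ℂ} (hA : A ∈ Matrix.unitaryGroup τ ℂ)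
    {v : τ → ℂ} (hv : ∑ w, ‖v w‖ ^ 2 = 1) (P V : τ → DTree (Fin n) (fun _ => 2) Bool)
    (hP : ∀ w, (P w).depth ≤ K₁) (hV : ∀ w, (V w).depth ≤ K) (hK : K₁ ≤ K)
    (ψ : Input (Fin n) (fun _ => 2) → ℕ → τ → ℂ) (hψ0 : ∀ x, ψ x 0 = v)
    (hψ : ∀ x t, ψ x (t + 1) = A.mulVec fun w => (if (P w).eval x then -1 else 1) * ψ x t w)
    (f : PartialFn (Fin n) fun _ => 2) (k : ℕ)
    (hf : ∀ x w, ψ x k w ≠ 0 → some ((V w).eval x) = f x) :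
    ∃ B : QAlg (Fin n) fun _ => 2, B.T = k * (2 * K₁) + K ∧
      ∀ x b, f x = some b → B.outProb x (some b) = 1 := by
  have hR : ∀ t, Reach (n := n) (τ × (Fin K → Fin 2)) (t * (2 * K₁)) fun x =>
      pushState (ψ x t) fun w => basePoint w 0 := by
    intro t
    induction t with
    | zero =>
      simp only [hψ0, Nat.zero_mul]
      refine Reach.init _ ?_
      simp only [pushState_basePoint, Fintype.sum_prod_type]
      rw [Finset.sum_eq_single ⟨0, 0⟩]
      · rw [← hv]
        refine Finset.sum_congr rfl fun w _ => ?_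
        rw [Finset.sum_eq_single 0]
        · simp
        · intro h _ hh
          simp [hh]
        · simp
      · intro c _ hc
        simp [hc]
      · simp
    | succ t ih =>
      rw [Nat.succ_mul]
      simp only [hψ]
      exact (ih.treePhase P hK hP).tensor hA
  refine ((hR k).compute V le_rfl).exists_exact f (fun s =>
    match (V s.2.1).follow s.2.2 K with
    | .leaf b => some b
    | .node _ _ => none) ?_
  intro x s hs
  obtain ⟨w, -, hw⟩ := Finset.exists_ne_zero_of_sum_ne_zero hs
  have h1 : basePoint w ((V w).hist K x K) = s := by
    by_contra h
    exact hw (if_neg h)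
  rw [if_pos h1] at hw
  rw [← hf x w hw, ← h1]
  simp only [basePoint, (V w).follow_hist le_rfl, (V w).run_eq_leaf (hV w)]

end Simulate

/-! ### Exact Grover search -/

section Grover

variable {S : Type} [Fintype S] [DecidableEq S]

/-- The state after `t` rounds of Grover search with start state `s` and phases `g`. -/
def groverState (s g : S → ℝ) : ℕ → S → ℝ
  | 0 => s
  | t + 1 => fun w => 2 * (∑ u, s u * (g u * groverState s g t u)) * s w - g w * groverState s g t w

/-- The reflection about `s`. -/
noncomputable def reflection (s : S → ℝ) : Matrix S S ℂ :=
  (2 : ℂ) • Matrix.vecMulVec (fun w => (s w : ℂ)) (fun w => (s w : ℂ)) - 1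

theorem reflection_mem_unitaryGroup {s : S → ℝ} (hs : ∑ w, s w ^ 2 = 1) :
    reflection s ∈ Matrix.unitaryGroup S ℂ := by
  have hd : (fun w => (s w : ℂ)) ⬝ᵥ (fun w => (s w : ℂ)) = 1 := by
    rw [dotProduct, ← Complex.ofReal_one, ← hs]
    push_cast
    exact Finset.sum_congr rfl fun w _ => (sq _).symm
  have hstar : star (reflection s) = reflection s := by
    ext i j
    simp [reflection, Matrix.star_apply, Matrix.vecMulVec_apply, Matrix.one_apply, eq_comm,
      mul_comm, apply_ite (starRingEnd ℂ)]
  rw [Matrix.mem_unitaryGroup_iff, hstar, reflection, sub_mul, mul_sub, Matrix.smul_mul,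
    Matrix.mul_smul, Matrix.vecMulVec_mul_vecMulVec, hd]
  simp only [one_smul, mul_one, one_mul, smul_smul]
  module

theorem reflection_mulVec (s v : S → ℝ) (w : S) :
    (reflection s).mulVec (fun u => (v u : ℂ)) w
      = ((2 * (∑ u, s u * v u) * s w - v w : ℝ) : ℂ) := by
  rw [reflection, Matrix.sub_mulVec, Matrix.smul_mulVec, Matrix.vecMulVec_mulVec, Matrix.one_mulVec]
  simp [dotProduct, mul_comm, mul_left_comm]

/-- With a unique marked element of amplitude `sin θ`, each round rotates by the angle `2 * θ`. -/
theorem groverState_eq {s : S → ℝ} (hs : ∑ w, s w ^ 2 = 1) {θ : ℝ} (hθ : Real.cos θ ≠ 0) {J : S}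
    (hJ : s J = Real.sin θ) (t : ℕ) (w : S) :
    groverState s (fun w => if w = J then -1 else 1) t w =
      if w = J then Real.sin ((2 * t + 1) * θ)
      else Real.cos ((2 * t + 1) * θ) / Real.cos θ * s w := by
  induction t generalizing w with
  | zero =>
    by_cases hw : w = J
    · simp [groverState, hw, hJ]
    · simp [groverState, hw, hθ]
  | succ t ih =>
    set β : ℝ := (2 * t + 1) * θ with hβ
    have hnext : (2 * ((t + 1 : ℕ) : ℝ) + 1) * θ = β + 2 * θ := by
      rw [hβ]
      push_cast
      ring
    have hsum : ∑ u, s u * ((if u = J then -1 else 1) *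
        groverState s (fun w => if w = J then -1 else 1) t u) = Real.cos (β + θ) := by
      have hsplit : ∀ u, s u * ((if u = J then -1 else 1) *
          groverState s (fun w => if w = J then -1 else 1) t u)
          = Real.cos β / Real.cos θ * s u ^ 2 + if u = J then
            -(Real.sin θ * Real.sin β) - Real.cos β / Real.cos θ * Real.sin θ ^ 2 else 0 := by
        intro u
        rw [ih]
        by_cases hu : u = J
        · simp only [hu, hJ, if_true]
          ring
        · simp only [hu, if_false]
          ring
      rw [Finset.sum_congr rfl fun u _ => hsplit u, Finset.sum_add_distrib, ← Finset.mul_sum, hs,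
        Finset.sum_ite_eq' Finset.univ J, if_pos (Finset.mem_univ J), Real.cos_add,
        Real.sin_sq]
      field_simp
      ring
    simp only [groverState]
    rw [hsum, hnext, ih]
    have hcos : Real.cos θ ^ 2 + Real.sin θ ^ 2 = 1 := Real.cos_sq_add_sin_sq θ
    by_cases hw : w = J
    · simp only [hw, hJ, if_true]
      rw [Real.cos_add, Real.sin_add, Real.sin_two_mul, Real.cos_two_mul]
      linear_combination (-2 * Real.sin β) * hcos
    · simp only [hw, if_false]
      rw [Real.cos_add, Real.cos_add, Real.sin_two_mul, Real.cos_two_mul]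
      field_simp
      ring

/-- The start state of a search among `m` elements, each of amplitude `sin θ`. -/
noncomputable def startState (m : ℕ) (θ : ℝ) : Option (Fin m) → ℝ
  | some _ => Real.sin θ
  | none => √(1 - m * Real.sin θ ^ 2)

theorem sum_startState_sq {m : ℕ} {θ : ℝ} (h : m * Real.sin θ ^ 2 ≤ 1) :
    ∑ w, startState m θ w ^ 2 = 1 := by
  rw [Fintype.sum_option]
  simp only [startState]
  rw [Real.sq_sqrt (by linarith), Finset.sum_const, Finset.card_univ, Fintype.card_fin,
    nsmul_eq_mul]
  ring

end Grover

/-! ### The exact quantum upper bound -/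

section Quantum

variable {n L : ℕ} (e : SearchIdx L ↪ Fin n)

/-- Column `k` of matrix `a` has only ones. -/
def FullCol (x : Input (Fin n) fun _ => 2) (a : Bool) (k : Option (Col L)) : Prop :=
  ∃ k', k = some k' ∧ ∀ r, x (e (.inl (a, r, k'))) = 1

theorem computable_test (i : Fin n) (p : Fin 2 → Prop) :
    Computable 1 fun x : Input (Fin n) fun _ => 2 => ofProp (p (x i)) :=
  (Computable.query (α := fun _ => 2) i).map fun c => ofProp (p c)

theorem computable_fullCol (a : Bool) (k : Option (Col L)) :
    Computable (2 ^ L) fun x => ofProp (FullCol e x a k) := by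
  cases k with
  | none => simpa [FullCol] using (Computable.const (ofProp False)).mono (Nat.zero_le _)
  | some k =>
    have h := Computable.finset_forall (Finset.univ : Finset (Row L)) (k := 1)
      (P := fun r (x : Input (Fin n) fun _ => 2) => x (e (.inl (a, r, k))) = 1) fun r _ =>
        computable_test (e (.inl (a, r, k))) fun c => c = 1
    simpa [FullCol] using h

theorem computable_accepts (J : Col L × Col L) :
    Computable (2 * 2 ^ L + (1 + 2 * 4 ^ L * (L + 1))) fun x : Input (Fin n) fun _ => 2 =>
      ofProp (Accepts (fun s => x (e s)) J) := by
  have h1 := Computable.finset_forall (Finset.univ : Finset (Bool × Row L)) (k := 1)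
    (P := fun q (x : Input (Fin n) fun _ => 2) => x (e (.inl (q.1, q.2, pick J q.1))) = 1)
    fun q _ => computable_test (e (.inl (q.1, q.2, pick J q.1))) fun c => c = 1
  have h2 := computable_test (e (.inr (J, none))) fun c => c = 1
  have h3 := Computable.finset_forall (Finset.univ : Finset (Bool × Col L)) (k := L + 1)
    (P := fun q (x : Input (Fin n) fun _ => 2) => q.2 ≠ pick J q.1 →
      x (e (.inl (q.1, fun l => x (e (.inr (J, some (q.1, q.2, l)))), q.2))) = 0)
    fun q _ => (Computable.tuple (α := fun _ => 2) (fun l => e (.inr (J, some (q.1, q.2, l))))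
      fun _ c => c).bind (f := fun r x => ofProp (q.2 ≠ pick J q.1 →
        x (e (.inl (q.1, r, q.2))) = 0)) fun r =>
      computable_test (e (.inl (q.1, r, q.2))) fun c => q.2 ≠ pick J q.1 → c = 0
  have h := h1.and (h2.and h3)
  simpa [Accepts] using h

theorem Accepts.fullCol_iff {x : Input (Fin n) fun _ => 2} {J : Col L × Col L}
    (h : Accepts (fun s => x (e s)) J) (a : Bool) (k : Option (Col L)) :
    FullCol e x a k ↔ k = some (pick J a) := by
  constructor
  · rintro ⟨k, rfl, hk⟩
    by_contra hne
    have h0 := h.2.2 a k fun hkJ => hne (congrArg some hkJ)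
    simp only [hk] at h0
    exact one_ne_zero (α := Fin 2) h0
  · rintro rfl
    exact ⟨_, rfl, h.1 a⟩

/-- Two exact Grover searches for the all-ones columns, run in parallel, followed by a check of the
cell of the columns found. -/
theorem exists_exact_searchFn :
    ∃ B : QAlg (Fin n) fun _ => 2, B.T ≤ 9 * (4 ^ L * (L + 1)) ∧
      ∀ x b, searchFn e x = some b → B.outProb x (some b) = 1 := by
  classical
  have : NeZero n := ⟨by
    rintro rfl
    exact (e (.inl (true, fun _ => 0, ⟨0, by positivity⟩))).elim0⟩
  set θ : ℝ := Real.pi / (2 * (2 * 2 ^ L + 1)) with hθ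
  have hk : (1 : ℝ) ≤ 2 ^ L := one_le_pow₀ (by norm_num)
  have hθ0 : 0 < θ := by positivity
  have hθk : θ * 2 ^ L ≤ 1 := by
    rw [hθ, div_mul_eq_mul_div, div_le_one (by positivity)]
    nlinarith [Real.pi_le_four]
  have hθ1 : θ < Real.pi / 2 := by
    rw [hθ]
    exact div_lt_div_of_pos_left Real.pi_pos (by norm_num) (by linarith)
  have hcos : Real.cos θ ≠ 0 :=
    (Real.cos_pos_of_mem_Ioo ⟨by linarith [Real.pi_pos], hθ1⟩).ne'
  have hsin : ((4 ^ L : ℕ) : ℝ) * Real.sin θ ^ 2 ≤ 1 := by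
    have h1 : Real.sin θ ≤ θ := Real.sin_le hθ0.le
    have h2 : 0 ≤ Real.sin θ :=
      Real.sin_nonneg_of_nonneg_of_le_pi hθ0.le (by linarith [Real.pi_pos])
    have h3 : Real.sin θ * 2 ^ L ≤ 1 := le_trans (by gcongr) hθk
    have h4 : ((4 ^ L : ℕ) : ℝ) * Real.sin θ ^ 2 = (Real.sin θ * 2 ^ L) ^ 2 := by
      push_cast
      rw [show (4 : ℝ) = 2 ^ 2 by norm_num, ← pow_mul, mul_comm 2 L, pow_mul]
      ring
    rw [h4]
    exact pow_le_one₀ (by positivity) h3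
  set s := startState (4 ^ L) θ with hs
  have hs1 : ∑ w, s w ^ 2 = 1 := sum_startState_sq hsin
  have hA := Matrix.kronecker_mem_unitary (reflection_mem_unitaryGroup hs1)
    (reflection_mem_unitaryGroup hs1)
  let g (x : Input (Fin n) fun _ => 2) (a : Bool) (k : Option (Col L)) : ℝ :=
    if FullCol e x a k then -1 else 1
  have hP : ∀ w : Option (Col L) × Option (Col L), Computable (2 * 2 ^ L)
      fun x => xor (ofProp (FullCol e x false w.1)) (ofProp (FullCol e x true w.2)) := by
    intro w
    rw [two_mul]
    exact (computable_fullCol e false w.1).bind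
      (f := fun b x => xor b (ofProp (FullCol e x true w.2)))
      fun b => (computable_fullCol e true w.2).map fun b' => xor b b'
  have hV : ∀ w : Option (Col L) × Option (Col L),
      Computable (2 * 2 ^ L + (1 + 2 * 4 ^ L * (L + 1)))
        fun x : Input (Fin n) fun _ => 2 => ofProp (∃ J : Col L × Col L, w = (some J.1, some J.2) ∧
          Accepts (fun s => x (e s)) J) := by
    intro w
    by_cases hw : ∃ J : Col L × Col L, w = (some J.1, some J.2)
    · obtain ⟨J, rfl⟩ := hw
      convert computable_accepts e J using 3 with x
      refine ⟨?_, fun h => ⟨J, rfl, h⟩⟩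
      rintro ⟨J', hJ', h⟩
      have : J = J' := by
        simpa [Prod.ext_iff] using hJ'
      rwa [this]
    · convert (Computable.const (ofProp False)).mono (Nat.zero_le _) using 3 with x
      refine ⟨?_, False.elim⟩
      rintro ⟨J, hJ, -⟩
      exact hw ⟨J, hJ⟩
  choose P hPd hPe using hP
  choose V hVd hVe using hV
  obtain ⟨B, hBT, hB⟩ := exists_exact_of_iterate hA (v := fun w => ((s w.1 * s w.2 : ℝ) : ℂ))
    (by
      simp only [Fintype.sum_prod_type, Complex.norm_real, Real.norm_eq_abs, sq_abs, mul_pow]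
      simp only [← Finset.mul_sum, hs1, mul_one]) P V hPd hVd (Nat.le_add_right _ _)
    (fun x t w => ((groverState s (g x false) t w.1 * groverState s (g x true) t w.2 : ℝ) : ℂ))
    (fun x => rfl)
    (by
      intro x t
      funext w
      have hphase : ∀ u : Option (Col L) × Option (Col L),
          (if (P u).eval x then (-1 : ℂ) else 1) = ((g x false u.1 * g x true u.2 : ℝ) : ℂ) := by
        intro u
        rw [hPe]
        by_cases h0 : FullCol e x false u.1 <;> by_cases h1 : FullCol e x true u.2 <;>
          simp [g, ofProp, h0, h1]
      simp only [hphase, Matrix.mulVec, dotProduct, Matrix.kroneckerMap_apply,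
        Fintype.sum_prod_type]
      have h0 := reflection_mulVec s (fun u => g x false u * groverState s (g x false) t u) w.1
      have h1 := reflection_mulVec s (fun u => g x true u * groverState s (g x true) t u) w.2
      simp only [groverState]
      rw [Complex.ofReal_mul, ← h0, ← h1, Matrix.mulVec, Matrix.mulVec, dotProduct, dotProduct,
        Finset.sum_mul_sum]
      refine Finset.sum_congr rfl fun u _ => Finset.sum_congr rfl fun u' _ => ?_
      push_cast
      ring)
    (searchFn e) (2 ^ L) (by
      intro x w hw
      rw [hVe]
      simp only [searchFn, Option.some.injEq]
      by_cases hJ : ∃ J, Accepts (fun s => x (e s)) J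
      · obtain ⟨J, hJ⟩ := hJ
        have hg : ∀ a, g x a = fun k => if k = some (pick J a) then -1 else 1 := by
          intro a
          funext k
          simp only [g, hJ.fullCol_iff e]
        have hangle : (2 * ((2 ^ L : ℕ) : ℝ) + 1) * θ = Real.pi / 2 := by
          rw [hθ]
          push_cast
          field_simp
        have hsome : ∀ a k, groverState s (g x a) (2 ^ L) k ≠ 0 → k = some (pick J a) := by
          intro a k hk
          by_contra hne
          rw [hg, groverState_eq hs1 hcos (J := some (pick J a)) rfl, if_neg hne, hangle,
            Real.cos_pi_div_two] at hk
          simp at hk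
        have hne := Complex.ofReal_ne_zero.1 hw
        have h0 := hsome false w.1 (left_ne_zero_of_mul hne)
        have h1 := hsome true w.2 (right_ne_zero_of_mul hne)
        have hwJ : w = (some J.1, some J.2) := Prod.ext h0 h1
        exact congrArg ofProp (propext ⟨fun _ => ⟨J, hJ⟩, fun _ => ⟨J, hwJ, hJ⟩⟩)
      · exact congrArg ofProp
          (propext ⟨fun ⟨J, _, h⟩ => ⟨J, h⟩, fun h => absurd h hJ⟩))
  refine ⟨B, ?_, hB⟩
  have h24 : (2 : ℕ) ^ L * 2 ^ L = 4 ^ L := (mul_pow 2 2 L).symm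
  have h1 : 1 ≤ 2 ^ L := Nat.one_le_two_pow
  rw [hBT]
  nlinarith [Nat.zero_le (4 ^ L * L)]

end Quantum

/-! ### The polynomial method -/

section Polynomial

variable {I : Type} [DecidableEq I]

/-- Multilinear polynomials of degree at most `T` in the indicators of the elements of a set. -/
def degSpan (I : Type) [DecidableEq I] (T : ℕ) : Submodule ℂ (Finset I → ℂ) :=
  Submodule.span ℂ {g | ∃ A : Finset I, A.card ≤ T ∧ g = fun S => if A ⊆ S then 1 else 0}

theorem degSpan_mono {T T' : ℕ} (h : T ≤ T') : degSpan I T ≤ degSpan I T' :=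
  Submodule.span_mono fun _ ⟨A, hA, hg⟩ => ⟨A, hA.trans h, hg⟩

theorem const_mem_degSpan (c : ℂ) : (fun _ => c) ∈ degSpan I 0 := by
  have h : (fun _ : Finset I => c)
      = c • fun S : Finset I => if (∅ : Finset I) ⊆ S then (1 : ℂ) else 0 := by
    funext S
    simp
  rw [h]
  exact Submodule.smul_mem _ _ (Submodule.subset_span ⟨∅, by simp, rfl⟩)

theorem indicator_mul_mem_degSpan {T : ℕ} {g : Finset I → ℂ} (hg : g ∈ degSpan I T) (j : I) :
    (fun S => if j ∈ S then g S else 0) ∈ degSpan I (T + 1) := by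
  refine Submodule.span_induction
    (p := fun g _ => (fun S => if j ∈ S then g S else 0) ∈ degSpan I (T + 1)) ?_ ?_ ?_ ?_ hg
  · rintro _ ⟨A, hA, rfl⟩
    refine Submodule.subset_span ⟨insert j A, (Finset.card_insert_le _ _).trans (by omega), ?_⟩
    funext S
    by_cases hj : j ∈ S <;> simp [Finset.insert_subset_iff, hj]
  · convert Submodule.zero_mem (degSpan I (T + 1)) using 1
    funext S
    simp
  · intro g g' _ _ h h'
    convert Submodule.add_mem _ h h' using 1
    funext S
    by_cases hj : j ∈ S <;> simp [hj]
  · intro c g _ h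
    convert Submodule.smul_mem _ c h using 1
    funext S
    by_cases hj : j ∈ S <;> simp [hj]

theorem sum_neg_one_pow_mul_eq_zero [Fintype I] {T : ℕ} (hT : T < Fintype.card I) {g : Finset I → ℂ}
    (hg : g ∈ degSpan I T) : ∑ S, (-1) ^ S.card * g S = 0 := by
  refine Submodule.span_induction
    (p := fun g _ => ∑ S : Finset I, (-1 : ℂ) ^ S.card * g S = 0) ?_ ?_ ?_ ?_ hg
  · rintro _ ⟨A, hA, rfl⟩
    obtain ⟨j, hj⟩ : ∃ j, j ∉ A := by
      by_contra! h
      rw [Finset.eq_univ_iff_forall.2 h, Finset.card_univ] at hA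
      omega
    have herase : ∀ S : Finset I, j ∈ S → (A ⊆ S.erase j ↔ A ⊆ S) := fun S _ =>
      ⟨fun h => h.trans (Finset.erase_subset _ _), fun h => Finset.subset_erase.2 ⟨h, hj⟩⟩
    have hinsert : ∀ S : Finset I, j ∉ S → (A ⊆ insert j S ↔ A ⊆ S) := fun S _ =>
      Finset.subset_insert_iff_of_notMem hj
    refine Finset.sum_involution (fun S _ => if j ∈ S then S.erase j else insert j S) ?_ ?_
      (fun _ _ => Finset.mem_univ _) ?_
    · intro S _
      by_cases hS : j ∈ S
      · simp only [hS, if_true, herase S hS]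
        rw [← Finset.card_erase_add_one hS, pow_succ]
        ring
      · simp only [hS, if_false, hinsert S hS]
        rw [Finset.card_insert_of_notMem hS, pow_succ]
        ring
    · intro S _ _ h
      by_cases hS : j ∈ S
      · simp only [hS, if_true] at h
        exact (Finset.erase_eq_self.1 h) hS
      · simp only [hS, if_false] at h
        exact hS (Finset.insert_eq_self.1 h)
    · intro S _
      by_cases hS : j ∈ S <;> simp [hS]
  · simp
  · intro g g' _ _ h h'
    simp [mul_add, Finset.sum_add_distrib, h, h']
  · intro c g _ h
    simp only [Pi.smul_apply, smul_eq_mul, mul_left_comm _ c]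
    rw [← Finset.mul_sum, h, mul_zero]

variable {n : ℕ}

theorem QAlg.reach (B : QAlg (Fin n) fun _ => 2) :
    Reach (Fin B.W) B.T fun x => B.finalState x := by
  have h : ∀ t, Reach (Fin B.W) t fun x => (qProd B.U (oracleMatrix B.W x) t).mulVec B.init := by
    intro t
    induction t with
    | zero => exact (Reach.init B.init B.init_norm).unitary (B.unitary 0)
    | succ t ih =>
      have := ih.query.unitary (B.unitary (t + 1))
      convert this using 2 with x
      rw [qProd, ← Matrix.mulVec_mulVec, ← Matrix.mulVec_mulVec, oracleMatrix_mulVec]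
  exact h B.T

variable {R : Type} [Fintype R] [DecidableEq R]

/-- Amplitudes are polynomials of degree at most the number of queries. -/
theorem Reach.mem_degSpan {T : ℕ} {ψ : Input (Fin n) (fun _ => 2) → QSpace n R → ℂ}
    (h : Reach R T ψ) (X : Finset I → Input (Fin n) fun _ => 2)
    (hX : ∀ i, (∃ c, ∀ S, X S i = c) ∨ ∃ j, ∀ S, X S i = if j ∈ S then 1 else 0)
    (s : QSpace n R) : (fun S => ψ (X S) s) ∈ degSpan I T := by
  induction h generalizing s with
  | init v hv => exact const_mem_degSpan (v s)
  | @unitary T ψ U h hU ih =>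
    have : (fun S => U.mulVec (ψ (X S)) s) = ∑ s', U s s' • fun S => ψ (X S) s' := by
      funext S
      simp [Matrix.mulVec, dotProduct]
    rw [this]
    exact Submodule.sum_mem _ fun s' _ => Submodule.smul_mem _ _ (ih s')
  | @query T ψ h ih =>
    obtain ⟨⟨i, c⟩, r⟩ := s
    rcases hX i with ⟨d, hd⟩ | ⟨j, hj⟩
    · simp only [queryMap, hd]
      exact degSpan_mono (Nat.le_succ T) (ih _)
    · have hsplit : (fun S => ψ (X S) (queryMap (X S) (⟨i, c⟩, r)))
          = ((fun S => if j ∈ S then ψ (X S) (⟨i, c + 1⟩, r) else 0)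
            - fun S => if j ∈ S then ψ (X S) (⟨i, c⟩, r) else 0)
            + fun S => ψ (X S) (⟨i, c⟩, r) := by
        funext S
        by_cases hS : j ∈ S <;> simp [queryMap, hj, hS]
      rw [hsplit]
      exact add_mem (sub_mem (indicator_mul_mem_degSpan (ih _) j)
        (indicator_mul_mem_degSpan (ih _) j)) (degSpan_mono (Nat.le_succ T) (ih _))

/-- An exact algorithm for a function containing a conjunction makes at least as many queries as
the conjunction has variables. -/
theorem card_le_of_exact [Fintype I] (B : QAlg (Fin n) fun _ => 2)
    {f : PartialFn (Fin n) fun _ => 2}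
    (hB : ∀ x b, f x = some b → B.outProb x (some b) = 1)
    (X : Finset I → Input (Fin n) fun _ => 2)
    (hX : ∀ i, (∃ c, ∀ S, X S i = c) ∨ ∃ j, ∀ S, X S i = if j ∈ S then 1 else 0)
    (hf1 : f (X Finset.univ) = some true) (hf0 : ∀ S, S ≠ Finset.univ → f (X S) = some false) :
    Fintype.card I ≤ B.T := by
  by_contra! hT
  have h1 := hB _ _ hf1
  obtain ⟨s, -, hs⟩ : ∃ s ∈ Finset.univ, (if B.out s = some true then
      ‖B.finalState (X Finset.univ) s‖ ^ 2 else 0) ≠ 0 :=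
    Finset.exists_ne_zero_of_sum_ne_zero (by rw [QAlg.outProb] at h1; rw [h1]; exact one_ne_zero)
  have hout : B.out s = some true := by
    by_contra h
    exact hs (if_neg h)
  rw [if_pos hout] at hs
  have hzero : ∀ S, S ≠ Finset.univ → B.finalState (X S) s = 0 := by
    intro S hS
    have hsum := B.reach.sum_norm_sq (X S)
    have h0 := hB _ _ (hf0 S hS)
    rw [QAlg.outProb] at h0
    have hdiff : ∑ s, (‖B.finalState (X S) s‖ ^ 2
        - if B.out s = some false then ‖B.finalState (X S) s‖ ^ 2 else 0) = 0 := by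
      rw [Finset.sum_sub_distrib, hsum, h0, sub_self]
    have hterm := (Finset.sum_eq_zero_iff_of_nonneg fun s _ => by
      split_ifs <;> simp).1 hdiff s (Finset.mem_univ s)
    rw [hout] at hterm
    simpa using hterm
  have hsum := sum_neg_one_pow_mul_eq_zero hT (B.reach.mem_degSpan X hX s)
  rw [Finset.sum_eq_single Finset.univ (fun S _ hS => by rw [hzero S hS, mul_zero])
    (fun h => absurd (Finset.mem_univ _) h)] at hsum
  rcases mul_eq_zero.1 hsum with h | h
  · exact pow_ne_zero _ (by norm_num) h
  · exact hs (by simp [h])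

end Polynomial

/-! ### Bounds on the exact quantum query complexity of the search function -/

section Bounds

variable {n L : ℕ} (e : SearchIdx L ↪ Fin n)

theorem two_pow_le_of_exact (B : QAlg (Fin n) fun _ => 2)
    (hB : ∀ x b, searchFn e x = some b → B.outProb x (some b) = 1) : 2 ^ L ≤ B.T := by
  classical
  let J : Col L × Col L := (⟨0, by positivity⟩, ⟨0, by positivity⟩)
  let y : Bool × Col L → Row L := fun _ _ => 0
  let z (S : Finset (Row L)) (s : SearchIdx L) : Fin 2 :=
    if ∃ r, r ∉ S ∧ s = .inl (false, r, J.1) then 0 else hardYes y J s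
  have h := card_le_of_exact (I := Row L) B hB (fun S => padInput e (z S)) ?_ ?_ ?_
  · simpa using h
  · intro i
    by_cases hi : ∃ s, e s = i
    · obtain ⟨s, rfl⟩ := hi
      simp only [padInput_apply]
      by_cases hs : ∃ r, s = .inl (false, r, J.1)
      · obtain ⟨r, rfl⟩ := hs
        refine Or.inr ⟨r, fun S => ?_⟩
        by_cases hr : r ∈ S <;> simp [z, hr, hardYes, pick]
      · refine Or.inl ⟨hardYes y J s, fun S => if_neg ?_⟩
        rintro ⟨r, -, hr⟩
        exact hs ⟨r, hr⟩
    · exact Or.inl ⟨0, fun S => Function.extend_apply' _ _ _ hi⟩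
  · have hz : z Finset.univ = hardYes y J := by
      funext s
      simp [z]
    rw [hz]
    exact searchFn_hardYes e y J
  · intro S hS
    simp only [searchFn, ofProp, Option.some.injEq, decide_eq_false_iff_not, padInput_apply]
    rintro ⟨J', h1, h2, -⟩
    have hJ : J' = J := by
      by_contra hne
      simp [z, hardYes, hne] at h2
    subst hJ
    obtain ⟨r, hr⟩ : ∃ r, r ∉ S := by
      by_contra! h
      exact hS (Finset.eq_univ_iff_forall.2 h)
    have h0 := h1 false r
    simp [z, pick, hr] at h0

theorem two_pow_le_QEq_searchFn : 2 ^ L ≤ QEq (searchFn e) := by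
  obtain ⟨B, -, hB⟩ := exists_exact_searchFn e
  refine le_csInf ⟨B.T, B, le_rfl, hB⟩ ?_
  rintro d ⟨B', hd, hB'⟩
  exact (two_pow_le_of_exact e B' hB').trans hd

theorem QEq_searchFn_le : QEq (searchFn e) ≤ 9 * (4 ^ L * (L + 1)) := by
  obtain ⟨B, hT, hB⟩ := exists_exact_searchFn e
  exact Nat.sInf_le ⟨B, hT, hB⟩

theorem totalFn_searchFn : TotalFn (searchFn e) := fun _ => Option.some_ne_none _

theorem QEq_rpow_le : (QEq (searchFn e) : ℝ) ^ ((3 : ℝ) / 2)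
    ≤ 243 * ((L : ℝ) + 1) ^ 2 * (Rq (searchFn e) : ℝ) := by
  have hQ : (QEq (searchFn e) : ℝ) ≤ 9 * 4 ^ L * ((L : ℝ) + 1) := by
    have := QEq_searchFn_le e
    have h : ((QEq (searchFn e) : ℕ) : ℝ) ≤ ((9 * (4 ^ L * (L + 1)) : ℕ) : ℝ) := Nat.cast_le.2 this
    push_cast at h
    linarith
  have hR : (8 : ℝ) ^ L ≤ 9 * Rq (searchFn e) := by exact_mod_cast le_Rq_searchFn e
  have hL : (0 : ℝ) ≤ L := Nat.cast_nonneg L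
  have h4 : ((9 : ℝ) * 4 ^ L) ^ ((3 : ℝ) / 2) = 27 * 8 ^ L := by
    have h : (9 : ℝ) * 4 ^ L = (3 * 2 ^ L) ^ 2 := by
      rw [mul_pow, ← pow_mul, mul_comm L 2, pow_mul]
      norm_num
    rw [h, ← Real.rpow_natCast (3 * 2 ^ L) 2, ← Real.rpow_mul (by positivity),
      show ((2 : ℕ) : ℝ) * (3 / 2) = ((3 : ℕ) : ℝ) by norm_num, Real.rpow_natCast, mul_pow,
      ← pow_mul, mul_comm L 3, pow_mul]
    norm_num
  calc (QEq (searchFn e) : ℝ) ^ ((3 : ℝ) / 2)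
      ≤ (9 * 4 ^ L * ((L : ℝ) + 1)) ^ ((3 : ℝ) / 2) := by gcongr
    _ = 27 * 8 ^ L * ((L : ℝ) + 1) ^ ((3 : ℝ) / 2) := by
      rw [Real.mul_rpow (by positivity) (by positivity), h4]
    _ ≤ 27 * 8 ^ L * ((L : ℝ) + 1) ^ (2 : ℝ) := by
      gcongr
      · linarith
      · norm_num
    _ = 27 * ((L : ℝ) + 1) ^ 2 * 8 ^ L := by
      rw [show (2 : ℝ) = ((2 : ℕ) : ℝ) by norm_num, Real.rpow_natCast]
      ring
    _ ≤ 27 * ((L : ℝ) + 1) ^ 2 * (9 * Rq (searchFn e)) := by gcongr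
    _ = _ := by ring

end Bounds

/-! ### The family -/

theorem QEq_const {n : ℕ} (hn : 0 < n) :
    QEq (fun _ : Input (Fin n) (fun _ => 2) => some false) = 0 := by
  have hone : ∑ s : QSpace n (Fin 1), ‖if s = (⟨⟨0, hn⟩, 0⟩, 0) then (1 : ℂ) else 0‖ ^ 2 = 1 := by
    rw [Finset.sum_eq_single (⟨⟨0, hn⟩, 0⟩, 0)]
    · simp
    · intro s _ hs
      simp [hs]
    · simp
  obtain ⟨B, hT, hB⟩ := (Reach.init _ hone).exists_exact
    (fun _ : Input (Fin n) (fun _ => 2) => some false) (fun _ => some false) fun _ _ _ => rfl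
  exact Nat.le_zero.1 (Nat.sInf_le ⟨B, hT.le, hB⟩)

theorem nonempty_searchIdx_embedding {n L : ℕ} (h : 8 * (L + 1) ≤ Nat.log 2 n) :
    Nonempty (SearchIdx L ↪ Fin n) := by
  rw [Function.Embedding.nonempty_iff_card_le]
  have hn : 0 < n := by
    rcases Nat.eq_zero_or_pos n with rfl | hn
    · simp at h
    · exact hn
  have h1 : 2 ^ (8 * (L + 1)) ≤ n :=
    (Nat.pow_le_pow_right (by norm_num) h).trans (Nat.pow_log_le_self 2 hn.ne')
  have h2 : L ≤ 2 ^ L := Nat.lt_two_pow_self.le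
  have h3 : 1 ≤ 2 ^ L := Nat.one_le_two_pow
  have h4 : (4 : ℕ) ^ L = (2 ^ L) ^ 2 := by rw [← pow_mul, mul_comm, pow_mul]; norm_num
  have h8 : (2 : ℕ) ^ (8 * (L + 1)) = 256 * (2 ^ L) ^ 8 := by
    rw [mul_add, pow_add, ← pow_mul, mul_comm L 8]
    ring
  simp only [Fintype.card_sum, Fintype.card_prod, Fintype.card_bool, Fintype.card_pi,
    Fintype.card_fin, Fintype.card_option, Finset.prod_const, Finset.card_univ]
  refine le_trans ?_ h1
  rw [h4, h8]
  generalize 2 ^ L = N at *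
  have ha : N * N ^ 2 ≤ N ^ 8 := by
    rw [show N * N ^ 2 = N ^ 3 by ring]
    exact Nat.pow_le_pow_right h3 (by norm_num)
  have hb : N ^ 2 * N ^ 2 ≤ N ^ 8 := by
    rw [← pow_add]
    exact Nat.pow_le_pow_right h3 (by norm_num)
  have hc : N ^ 2 * N ^ 2 * (N ^ 2 * L) ≤ N ^ 8 := by
    calc N ^ 2 * N ^ 2 * (N ^ 2 * L) ≤ N ^ 2 * N ^ 2 * (N ^ 2 * N) := by gcongr
      _ = N ^ 7 := by ring
      _ ≤ N ^ 8 := Nat.pow_le_pow_right h3 (by norm_num)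
  nlinarith

open Classical in
/-- The search function of the largest size fitting into `n` bits. -/
noncomputable def searchFamily (n : ℕ) : PartialFn (Fin n) fun _ => 2 :=
  if h : 8 * (Nat.log 2 n / 8 - 1 + 1) ≤ Nat.log 2 n then
    searchFn (nonempty_searchIdx_embedding h).some
  else fun _ => some false

end QC

/-- There is a family of total Boolean functions with
`R(f) = Ω̃(Q_E(f)^{3/2})`. -/
theorem randomized_vs_exact_quantum_power_three_halves :
    ∃ f : ∀ n : ℕ, QC.PartialFn (Fin n) (fun _ => 2),
      (∀ n, QC.TotalFn (f n)) ∧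
      Filter.Tendsto (fun n => QC.QEq (f n)) Filter.atTop Filter.atTop ∧
      ∃ (C : ℝ) (e : ℕ), 0 < C ∧ ∀ n : ℕ, 2 ≤ n →
        (QC.QEq (f n) : ℝ) ^ ((3 : ℝ) / 2) ≤ C * (Real.log n) ^ e * (QC.Rq (f n) : ℝ) := by
  refine ⟨QC.searchFamily, fun n => ?_, ?_, 243, 2, by norm_num, fun n hn => ?_⟩
  · unfold QC.searchFamily
    split_ifs with h
    · exact QC.totalFn_searchFn _
    · exact fun _ => Option.some_ne_none _
  · refine Filter.tendsto_atTop.2 fun b => ?_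
    filter_upwards [Filter.eventually_ge_atTop (2 ^ (8 * (b + 1)))] with n hn
    have hlog : 8 * (b + 1) ≤ Nat.log 2 n := Nat.le_log_of_pow_le (by norm_num) hn
    have h : 8 * (Nat.log 2 n / 8 - 1 + 1) ≤ Nat.log 2 n := by omega
    rw [QC.searchFamily, dif_pos h]
    exact (show b ≤ Nat.log 2 n / 8 - 1 by omega).trans
      (Nat.lt_two_pow_self.le.trans (QC.two_pow_le_QEq_searchFn _))
  · by_cases h : 8 * (Nat.log 2 n / 8 - 1 + 1) ≤ Nat.log 2 n
    · rw [QC.searchFamily, dif_pos h]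
      refine (QC.QEq_rpow_le _).trans ?_
      set L := Nat.log 2 n / 8 - 1
      have hpow : 2 ^ (8 * (L + 1)) ≤ n :=
        (Nat.pow_le_pow_right (by norm_num) h).trans (Nat.pow_log_le_self 2 (by omega))
      have hlog : (L : ℝ) + 1 ≤ Real.log n := by
        have h1 : Real.log ((2 : ℝ) ^ (8 * (L + 1))) ≤ Real.log n :=
          Real.log_le_log (by positivity) (by exact_mod_cast hpow)
        rw [Real.log_pow] at h1
        push_cast at h1
        have h2 := Real.log_two_gt_d9
        have h3 : (0 : ℝ) ≤ L := Nat.cast_nonneg L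
        nlinarith
      gcongr
    · rw [QC.searchFamily, dif_neg h, QC.QEq_const (by omega)]
      rw [Nat.cast_zero, Real.zero_rpow (by norm_num)]
      have : 0 ≤ Real.log n := Real.log_natCast_nonneg n
      positivity
end
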